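/- arXiv:1706.06578 — 3 statements merged into one kernel-verified Lean document; each statement's English description precedes it below -/
import Mathlib

section
/- Let q = p^h > 4 with p prime, h ≥ 1, and let V be a quasi-Hermitian variety of PG(3,q^2) whose characteristic vector v^V belongs to C_p. Then every line of PG(3,q^2) meets V in either 1, q+1, or q^2+1 points, and every point of V lies on at least one line meeting V in exactly q+1 points. -/
/-!
Common framework: `ProjPoint F n` is the set of points of the projective space
PG(n-1, |F|) (so PG(r, q²) corresponds to `n = r + 1` and `Fintype.card F = q ^ 2`).
Projective subspaces of projective dimension `k` are the submodules of `Fin n → F`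
of `finrank` equal to `k + 1`; lines have finrank 2, planes finrank 3 and
hyperplanes finrank `n - 1 = r`.
-/

open Module Matrix

/-- The points of the projective space PG(n-1, |F|): one-dimensional subspaces
of `F^n`. -/
def ProjPoint (F : Type) [Field F] (n : ℕ) : Type :=
  {W : Submodule F (Fin n → F) // finrank F W = 1}

/-- The set of projective points lying in a given subspace `W`. -/
def pointsIn (F : Type) [Field F] (n : ℕ) (W : Submodule F (Fin n → F)) :
    Set (ProjPoint F n) :=
  {P | P.1 ≤ W}

/-- The number of points of `V` lying in the subspace `W`. -/
noncomputable def secant (F : Type) [Field F] (n : ℕ) (V : Set (ProjPoint F n))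
    (W : Submodule F (Fin n → F)) : ℕ :=
  (V ∩ pointsIn F n W).ncard

/-- The characteristic vector of a set of projective points, with values in `F_p`. -/
noncomputable def charVec (F : Type) [Field F] (p n : ℕ) (S : Set (ProjPoint F n)) :
    ProjPoint F n → ZMod p :=
  Set.indicator S 1

/-- `C_p`: the `F_p`-code spanned by the characteristic vectors of hyperplanes. -/
def hypCode (F : Type) [Field F] (p n : ℕ) :
    Submodule (ZMod p) (ProjPoint F n → ZMod p) :=
  Submodule.span (ZMod p)
    {v | ∃ H : Submodule F (Fin n → F), finrank F H = n - 1 ∧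
      v = charVec F p n (pointsIn F n H)}

/-- A quasi-Hermitian variety of PG(r, q²): it has the size of a non-singular
Hermitian variety and the same two intersection numbers with hyperplanes.
(All identities are stated multiplied through by `q² - 1`.) -/
def IsQuasiHermitian (F : Type) [Field F] (q r : ℕ)
    (V : Set (ProjPoint F (r + 1))) : Prop :=
  (V.ncard : ℤ) * ((q : ℤ) ^ 2 - 1)
      = ((q : ℤ) ^ (r + 1) + (-1) ^ r) * ((q : ℤ) ^ r - (-1) ^ r) ∧
  ∀ H : Submodule F (Fin (r + 1) → F), finrank F H = r →
    ((secant F (r + 1) V H : ℤ) * ((q : ℤ) ^ 2 - 1)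
        = ((q : ℤ) ^ r + (-1) ^ (r - 1)) * ((q : ℤ) ^ (r - 1) - (-1) ^ (r - 1)) ∨
     (secant F (r + 1) V H : ℤ) * ((q : ℤ) ^ 2 - 1)
        = ((q : ℤ) ^ 2 - 1)
          + (q : ℤ) ^ 2 * (((q : ℤ) ^ (r - 1) + (-1) ^ r) * ((q : ℤ) ^ (r - 2) - (-1) ^ r)))

/-- The zero set, in PG(n-1,|F|), of the Hermitian form `x ↦ xᵀ A x^(q)`. -/
def hermSet (F : Type) [Field F] (q n : ℕ) (A : Matrix (Fin n) (Fin n) F) :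
    Set (ProjPoint F n) :=
  {P | ∀ x ∈ P.1, ∑ i, ∑ j, x i * A i j * (x j) ^ q = 0}

/-- A non-singular Hermitian variety of PG(n-1, q²). -/
def IsNonsingHermitian (F : Type) [Field F] (q n : ℕ)
    (V : Set (ProjPoint F n)) : Prop :=
  ∃ A : Matrix (Fin n) (Fin n) F, IsUnit A.det ∧
    Aᵀ = A.map (fun a => a ^ q) ∧ V = hermSet F q n A

/-- A singular Hermitian variety of PG(n-1, q²) whose singular space (the radical
of the Hermitian form) has projective dimension `d`. -/
def IsSingularHermitian (F : Type) [Field F] (q n d : ℕ)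
    (S : Set (ProjPoint F n)) : Prop :=
  ∃ A : Matrix (Fin n) (Fin n) F,
    Aᵀ = A.map (fun a => a ^ q) ∧
    finrank F (LinearMap.ker (Matrix.toLin' Aᵀ)) = d + 1 ∧
    S = hermSet F q n A

/-- A `d`-singular quasi-Hermitian variety of PG(r, q²). -/
def IsSingularQuasiHermitian (F : Type) [Field F] (q r d : ℕ)
    (S : Set (ProjPoint F (r + 1))) : Prop :=
  ∃ S₀ : Set (ProjPoint F (r + 1)), IsSingularHermitian F q (r + 1) d S₀ ∧
    S.ncard = S₀.ncard ∧
    ∀ H : Submodule F (Fin (r + 1) → F), finrank F H = r →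
      ∃ H₀ : Submodule F (Fin (r + 1) → F), finrank F H₀ = r ∧
        secant F (r + 1) S H = secant F (r + 1) S₀ H₀

/-- `U` is a classical unital (Hermitian curve) of the plane `π` of PG(n-1, q²):
in some coordinatization `e` of `π`, it is the zero set of a non-degenerate
Hermitian form on `F³`. -/
def IsClassicalUnital (F : Type) [Field F] (q n : ℕ)
    (π : Submodule F (Fin n → F)) (U : Set (ProjPoint F n)) : Prop :=
  ∃ e : (Fin 3 → F) →ₗ[F] (Fin n → F), LinearMap.ker e = ⊥ ∧ LinearMap.range e = π ∧
    ∃ A : Matrix (Fin 3) (Fin 3) F, IsUnit A.det ∧ Aᵀ = A.map (fun a => a ^ q) ∧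
      U = {P | ∃ y : Fin 3 → F, y ≠ 0 ∧ P.1 = Submodule.span F {e y} ∧
        ∑ i, ∑ j, y i * A i j * (y j) ^ q = 0}

/-!
Fix a plane `π`, a point `P ∈ π` outside `V` and a line `m ∋ P` of `π`. The other lines of `π`
through `P` are parametrised by `y ∈ F`; let `Z y ⊆ F` be the affine coordinates of the points of
`V` on the line with parameter `y`. For a hyperplane in place of `V`, the power sums
`∑ x ∈ Z y, x ^ i` are polynomials in `y` of degree at most `i`, hence by linearity also for the
codeword `V`. If one line `ℓ` of the pencil has `s` points of `V`, the `s × s` Hankel determinant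
of these polynomials is a nonzero polynomial in `y` of degree at most `s (s - 1)`, which vanishes
to order at least `s - #(Z y)` at `y`. Summing over `y` gives
`q² s + #(m ∩ V) ≤ s (s - 1) + #(π ∩ V)`.

Call a plane small or big according as it has `q³ + 1` or `q³ + q² + 1` points of `V`; a line with
`s` points of `V` is on exactly `s` big planes. Since `V` is a codeword, line sections have a
constant size modulo `p`, so every line meets `V`. The inequality in a small plane shows that a
line has at most `q + 1` or at least `q² - q` points of `V`. If a line not contained in `V` were
of the second kind, then in a big plane through it each of its points of `V` would be on another
such line, and `q + 5` of these would carry too many points. Hence all lines of a small plane have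
between `1` and `q + 1` points of `V`, and the standard equations force one of the two extremes.
-/

section PowerSums

open Polynomial

variable {K : Type*} [Field K]

theorem prod_dvd_det_of_forall_dvd {R ι : Type*} [CommRing R] [Fintype ι] [DecidableEq ι]
    {N : Matrix ι ι R} {d : ι → R} (hd : ∀ i j, d j ∣ N i j) : ∏ j, d j ∣ N.det := by
  choose A hA using hd
  have hN : N = Matrix.of fun i j => d j * Matrix.of A i j := Matrix.ext hA
  rw [hN, Matrix.det_mul_row]
  exact dvd_mul_right _ _

/- Gaussian elimination over `K` makes `M` diagonal at `y` without changing its determinant; the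
columns of the zero diagonal entries are then divisible by `X - y`. -/
theorem X_sub_C_pow_dvd_det {ι : Type*} [Fintype ι] [DecidableEq ι]
    (M : Matrix ι ι K[X]) (y : K) :
    (X - C y) ^ (Fintype.card ι - (M.map (eval y)).rank) ∣ M.det := by
  classical
  obtain ⟨L, L', D, hD⟩ :=
    Matrix.Pivot.exists_list_transvec_mul_mul_list_transvec_eq_diagonal (M.map (eval y))
  set A := (L.map Matrix.TransvectionStruct.toMatrix).prod
  set B := (L'.map Matrix.TransvectionStruct.toMatrix).prod
  have hA : A.det = 1 := Matrix.TransvectionStruct.det_toMatrix_prod L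
  have hB : B.det = 1 := Matrix.TransvectionStruct.det_toMatrix_prod L'
  have hrank : Fintype.card ι - (M.map (eval y)).rank = Fintype.card {i // D i = 0} := by
    rw [← Matrix.rank_mul_eq_right_of_isUnit_det A (M.map (eval y)) (by simp [hA]),
      ← Matrix.rank_mul_eq_left_of_isUnit_det B _ (by simp [hB]), hD, Matrix.rank_diagonal,
      ← Fintype.card_subtype_compl]
    simp
  set N := A.map C * M * B.map C
  have hN : N.map (eval y) = Matrix.diagonal D := by
    rw [← hD, ← coe_evalRingHom, Matrix.map_mul, Matrix.map_mul, Matrix.map_map, Matrix.map_map]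
    simp [Function.comp_def]
  have hdet : N.det = M.det := by
    have hC (U : Matrix ι ι K) : (U.map C).det = C U.det := (RingHom.map_det C U).symm
    simp [N, hC, hA, hB]
  have hdvd : ∀ i j, (if D j = 0 then X - C y else 1) ∣ N i j := by
    intro i j
    split_ifs with hj
    · rw [dvd_iff_isRoot, IsRoot.def]
      have hij : eval y (N i j) = Matrix.diagonal D i j := congrFun₂ hN i j
      rcases eq_or_ne i j with rfl | hne
      · simpa [hj] using hij
      · simpa [hne] using hij
    · exact one_dvd _
  have hprod := prod_dvd_det_of_forall_dvd hdvd
  rwa [Finset.prod_ite, Finset.prod_const_one, mul_one, Finset.prod_const, hdet,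
    ← Fintype.card_subtype, ← hrank] at hprod

/-- The `n × n` Hankel matrix of a sequence: its entry at `(i, j)` is the term of index `i + j`. -/
def hankel {R : Type*} (n : ℕ) (s : ℕ → R) : Matrix (Fin n) (Fin n) R :=
  Matrix.of fun i j => s (i + j)

theorem natDegree_det_hankel_le {R : Type*} [CommRing R] {n : ℕ} {s : ℕ → R[X]}
    (hs : ∀ i, (s i).natDegree ≤ i) : (hankel n s).det.natDegree ≤ n * (n - 1) := by
  rw [Matrix.det_apply]
  refine natDegree_sum_le_of_forall_le _ _ fun σ _ => ?_
  calc (Equiv.Perm.sign σ • ∏ i, hankel n s (σ i) i).natDegree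
      ≤ ∑ i, (hankel n s (σ i) i).natDegree :=
        (natDegree_smul_le _ _).trans (natDegree_prod_le _ _)
    _ ≤ ∑ i, ((σ i : ℕ) + i) := Finset.sum_le_sum fun i _ => hs _
    _ = (∑ i ∈ Finset.range n, i) * 2 := by
        rw [Finset.sum_add_distrib, Equiv.sum_comp σ fun i : Fin n => (i : ℕ),
          Fin.sum_univ_eq_sum_range fun i => i, mul_two]
    _ = n * (n - 1) := Finset.sum_range_id_mul_two n

theorem hankel_sum_pow_eq_transpose_mul (n : ℕ) (Z : Finset K) :
    hankel n (fun i => ∑ x ∈ Z, x ^ i) =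
      (Matrix.of fun (x : Z) (i : Fin n) => (x : K) ^ (i : ℕ))ᵀ *
        Matrix.of fun (x : Z) (i : Fin n) => (x : K) ^ (i : ℕ) := by
  ext i j
  simp only [hankel, Matrix.of_apply, Matrix.mul_apply, Matrix.transpose_apply, ← pow_add]
  exact (Finset.sum_coe_sort Z fun x => x ^ (i + j : ℕ)).symm

theorem rank_hankel_sum_pow_le (n : ℕ) (Z : Finset K) :
    (hankel n fun i => ∑ x ∈ Z, x ^ i).rank ≤ Z.card := by
  rw [hankel_sum_pow_eq_transpose_mul]
  refine (Matrix.rank_mul_le_right _ _).trans ((Matrix.rank_le_card_height _).trans ?_)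
  rw [Fintype.card_coe]

theorem det_hankel_sum_pow_ne_zero (Z : Finset K) :
    (hankel Z.card fun i => ∑ x ∈ Z, x ^ i).det ≠ 0 := by
  let v : Fin Z.card → K := fun i => Z.equivFin.symm i
  have hv : Function.Injective v := Subtype.val_injective.comp Z.equivFin.symm.injective
  have hfactor : hankel Z.card (fun i => ∑ x ∈ Z, x ^ i) =
      (Matrix.vandermonde v)ᵀ * Matrix.vandermonde v := by
    rw [hankel_sum_pow_eq_transpose_mul]
    exact (Matrix.submatrix_mul_equiv _ _ id Z.equivFin.symm id).symm
  rw [hfactor, Matrix.det_mul, Matrix.det_transpose]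
  have hdet := Matrix.det_vandermonde_ne_zero_iff.2 hv
  exact mul_ne_zero hdet hdet

/- The determinant of the Hankel matrix of the power sums has degree at most `n (n - 1)`, where
`n = #(Z y₀)`; it is nonzero at `y₀` and vanishes to order at least `n - #(Z y)` at every `y`. -/
theorem sum_card_sub_card_le [Fintype K] (Z : K → Finset K) (s : ℕ → K[X])
    (hdeg : ∀ i, (s i).natDegree ≤ i) (heval : ∀ i y, (s i).eval y = ∑ x ∈ Z y, x ^ i) (y₀ : K) :
    ∑ y, ((Z y₀).card - (Z y).card) ≤ (Z y₀).card * ((Z y₀).card - 1) := by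
  set n := (Z y₀).card with hn
  set H := hankel n s
  have hmap (y : K) : H.map (eval y) = hankel n fun i => ∑ x ∈ Z y, x ^ i :=
    Matrix.ext fun i j => heval _ y
  have hne : H.det ≠ 0 := by
    intro h0
    apply det_hankel_sum_pow_ne_zero (Z y₀)
    rw [← hn, ← hmap, ← coe_evalRingHom]
    exact (RingHom.map_det _ H).symm.trans (by rw [h0, map_zero])
  have hdvd (y : K) : (X - C y) ^ (n - (Z y).card) ∣ H.det := by
    refine (pow_dvd_pow _ ?_).trans (X_sub_C_pow_dvd_det H y)
    rw [Fintype.card_fin, hmap]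
    exact Nat.sub_le_sub_left (rank_hankel_sum_pow_le n (Z y)) n
  have hprod : ∏ y, (X - C y) ^ (n - (Z y).card) ∣ H.det :=
    Finset.prod_dvd_of_coprime
      (fun a _ b _ hab => (pairwise_coprime_X_sub_C Function.injective_id hab).pow)
      fun y _ => hdvd y
  calc ∑ y, (n - (Z y).card) = (∏ y, (X - C y) ^ (n - (Z y).card)).natDegree := by
        rw [natDegree_prod_of_monic _ _ fun y _ => (monic_X_sub_C y).pow _]
        simp
    _ ≤ H.det.natDegree := natDegree_le_of_dvd hprod hne
    _ ≤ n * (n - 1) := natDegree_det_hankel_le hdeg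

/- If `e ≠ 0` the sum has the single term `(-(a + y b) / e) ^ i`. If `e = 0` it is `∑ x, x ^ i`
when `a + y b = 0` and zero otherwise, and `∑ x, x ^ i` vanishes for `i < q - 1`. -/
theorem exists_natDegree_le_eval_eq_sum_pow [Fintype K] [DecidableEq K] (a b e : K) (i : ℕ) :
    ∃ s : K[X], s.natDegree ≤ i ∧
      ∀ y, s.eval y = ∑ x, x ^ i * if a + y * b + x * e = 0 then 1 else 0 := by
  have hpow (r t : K) (k : ℕ) : ((C r * X + C t) ^ k).natDegree ≤ k :=
    (natDegree_pow_le_of_le k natDegree_linear_le).trans (mul_one k).le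
  rcases eq_or_ne e 0 with rfl | he
  · simp only [mul_zero, add_zero, ← Finset.sum_mul]
    rcases lt_or_ge i (Fintype.card K - 1) with hi | hi
    · exact ⟨0, by simp, fun y => by simp [FiniteField.sum_pow_lt_card_sub_one K i hi]⟩
    · refine ⟨C (∑ x : K, x ^ i) * (1 - (C b * X + C a) ^ (Fintype.card K - 1)), ?_, fun y => ?_⟩
      · exact (natDegree_C_mul_le _ _).trans ((natDegree_sub_le _ _).trans
          (max_le (by simp) ((hpow b a _).trans hi)))
      · have hcard : Fintype.card K - 1 ≠ 0 := (Nat.sub_pos_of_lt Fintype.one_lt_card).ne'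
        have heval : eval y (C b * X + C a) = a + y * b := by
          simp only [eval_add, eval_mul, eval_C, eval_X]
          ring
        rw [eval_mul, eval_C, eval_sub, eval_one, eval_pow, heval]
        split_ifs with h
        · rw [h, zero_pow hcard, sub_zero]
        · rw [FiniteField.pow_card_sub_one_eq_one _ h, sub_self]
  · refine ⟨(C (-b / e) * X + C (-a / e)) ^ i, hpow _ _ i, fun y => ?_⟩
    have hroot (x : K) : a + y * b + x * e = 0 ↔ x = -b / e * y + -a / e := by
      field_simp
      grind
    simp [hroot]

end PowerSums

theorem sum_card_le_card_biUnion_add_choose {ι α : Type*} [DecidableEq α] (s : Finset ι)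
    (A : ι → Finset α) (hA : ∀ i ∈ s, ∀ j ∈ s, i ≠ j → (A i ∩ A j).card ≤ 1) :
    ∑ i ∈ s, (A i).card ≤ (s.biUnion A).card + s.card.choose 2 := by
  classical
  induction s using Finset.induction_on with
  | empty => simp
  | insert i s hi ih =>
    have hs := ih fun j hj k hk =>
      hA j (Finset.mem_insert_of_mem hj) k (Finset.mem_insert_of_mem hk)
    have hinter : (A i ∩ s.biUnion A).card ≤ s.card := by
      rw [Finset.inter_biUnion]
      refine Finset.card_biUnion_le.trans (Finset.card_eq_sum_ones s ▸ Finset.sum_le_sum ?_)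
      exact fun j hj => hA i (Finset.mem_insert_self i s) j (Finset.mem_insert_of_mem hj)
        fun hij => hi (hij ▸ hj)
    have hunion := Finset.card_union_add_card_inter (A i) (s.biUnion A)
    rw [Finset.sum_insert hi, Finset.biUnion_insert, Finset.card_insert_of_notMem hi,
      Nat.choose_succ_succ' s.card 1, Nat.choose_one_right]
    lia

section ProjectiveSpace

open Submodule

variable {F : Type} [Field F] {n : ℕ}

instance [Finite F] : Finite (ProjPoint F n) :=
  inferInstanceAs (Finite {W : Submodule F (Fin n → F) // finrank F W = 1})

namespace ProjPoint

/-- The point with homogeneous coordinate vector `v`. -/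
def mk (v : Fin n → F) (hv : v ≠ 0) : ProjPoint F n :=
  ⟨F ∙ v, finrank_span_singleton hv⟩

theorem exists_eq_mk (P : ProjPoint F n) : ∃ v hv, P = mk v hv := by
  obtain ⟨v, hv, -⟩ := finrank_eq_one_iff'.1 P.2
  have hv' : (v : Fin n → F) ≠ 0 := by simpa using hv
  refine ⟨v, hv', Subtype.ext (eq_of_le_of_finrank_eq ?_ ?_).symm⟩
  · exact (span_singleton_le_iff_mem _ _).2 v.2
  · exact (mk (v : Fin n → F) hv').2.trans P.2.symm

theorem mk_mem_pointsIn {v : Fin n → F} {hv : v ≠ 0} {W : Submodule F (Fin n → F)} :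
    mk v hv ∈ pointsIn F n W ↔ v ∈ W :=
  span_singleton_le_iff_mem v W

theorem eq_of_le {P R : ProjPoint F n} (h : P.1 ≤ R.1) : P = R :=
  Subtype.ext (eq_of_le_of_finrank_eq h (P.2.trans R.2.symm))

theorem finrank_sup {P : ProjPoint F n} {U : Submodule F (Fin n → F)} (hP : ¬P.1 ≤ U) :
    finrank F (U ⊔ P.1 : Submodule F (Fin n → F)) = finrank F U + 1 := by
  obtain ⟨v, hv, rfl⟩ := P.exists_eq_mk
  exact finrank_sup_span_singleton fun h => hP (mk_mem_pointsIn.2 h)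

end ProjPoint

/-- The points of `S` lying in the subspace `W`, as a `Finset`; there are `secant F n S W` many. -/
noncomputable def pointFinset [Finite F] (S : Set (ProjPoint F n)) (W : Submodule F (Fin n → F)) :
    Finset (ProjPoint F n) :=
  (S ∩ pointsIn F n W).toFinite.toFinset

theorem mem_pointFinset [Finite F] {S : Set (ProjPoint F n)} {W : Submodule F (Fin n → F)}
    {P : ProjPoint F n} : P ∈ pointFinset S W ↔ P ∈ S ∧ P.1 ≤ W := by
  simp [pointFinset, pointsIn]

theorem card_pointFinset [Finite F] (S : Set (ProjPoint F n)) (W : Submodule F (Fin n → F)) :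
    (pointFinset S W).card = secant F n S W :=
  (Set.ncard_eq_toFinset_card _ _).symm

theorem secant_le_secant_univ [Finite F] (S : Set (ProjPoint F n)) (W : Submodule F (Fin n → F)) :
    secant F n S W ≤ secant F n Set.univ W :=
  Set.ncard_le_ncard (Set.inter_subset_inter_left _ (Set.subset_univ S))

theorem secant_top (S : Set (ProjPoint F n)) : secant F n S ⊤ = S.ncard := by
  simp [secant, pointsIn]

theorem secant_pointsIn (H W : Submodule F (Fin n → F)) :
    secant F n (pointsIn F n H) W = secant F n Set.univ (H ⊓ W) := by
  refine congrArg Set.ncard (Set.ext fun P => ?_)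
  simp [pointsIn]

theorem secant_bot (S : Set (ProjPoint F n)) : secant F n S ⊥ = 0 := by
  have hempty : pointsIn F n ⊥ = ∅ :=
    Set.eq_empty_of_forall_notMem fun P (hP : P.1 ≤ ⊥) => by
      have := P.2
      rw [le_bot_iff.1 hP, finrank_bot] at this
      exact zero_ne_one this
  rw [secant, hempty, Set.inter_empty, Set.ncard_empty]

theorem secant_point (S : Set (ProjPoint F n)) [DecidablePred (· ∈ S)] (P : ProjPoint F n) :
    secant F n S P.1 = if P ∈ S then 1 else 0 := by
  have hsing : pointsIn F n P.1 = {P} :=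
    Set.eq_singleton_iff_unique_mem.2 ⟨le_refl P.1, fun _ => ProjPoint.eq_of_le⟩
  split_ifs with hP
  · rw [secant, hsing, Set.inter_eq_right.2 (Set.singleton_subset_iff.2 hP), Set.ncard_singleton]
  · rw [secant, hsing, Set.inter_singleton_eq_empty.2 hP, Set.ncard_empty]

theorem secant_univ [Fintype F] (W : Submodule F (Fin n → F)) :
    secant F n Set.univ W = ∑ i ∈ Finset.range (finrank F W), Fintype.card F ^ i := by
  let e : {X : Submodule F W // finrank F X = 1} ≃ (Set.univ ∩ pointsIn F n W : Set _) :=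
    { toFun := fun X => ⟨⟨X.1.map W.subtype, by rw [finrank_map_subtype_eq, X.2]⟩,
        trivial, map_subtype_le W X.1⟩
      invFun := fun P => ⟨P.1.1.comap W.subtype, by
        rw [(comapSubtypeEquivOfLe P.2.2).finrank_eq, P.1.2]⟩
      left_inv := fun X => Subtype.ext (comap_map_eq_of_injective W.injective_subtype X.1)
      right_inv := fun P => Subtype.ext (Subtype.ext (map_comap_eq_of_le (by
        rw [range_subtype]
        exact P.2.2))) }
  rw [← Nat.card_eq_fintype_card, ← Projectivization.card_of_finrank F W rfl, secant,
    Nat.card_congr ((Projectivization.equivSubmodule F W).trans e), Nat.card_coe_set_eq]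

theorem secant_univ_of_finrank_eq_two [Fintype F] {ℓ : Submodule F (Fin n → F)}
    (hℓ : finrank F ℓ = 2) : secant F n Set.univ ℓ = Fintype.card F + 1 := by
  rw [secant_univ, hℓ, Finset.sum_range_succ, Finset.sum_range_one, pow_zero, pow_one, add_comm]

theorem secant_le_of_finrank_eq_two [Fintype F] (S : Set (ProjPoint F n))
    {ℓ : Submodule F (Fin n → F)} (hℓ : finrank F ℓ = 2) :
    secant F n S ℓ ≤ Fintype.card F + 1 :=
  (secant_le_secant_univ S ℓ).trans (secant_univ_of_finrank_eq_two hℓ).le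

theorem line_eq_of_ne_of_le {P R : ProjPoint F n} (hPR : P ≠ R) {ℓ m : Submodule F (Fin n → F)}
    (hℓ : finrank F ℓ = 2) (hm : finrank F m = 2) (hPℓ : P.1 ≤ ℓ) (hRℓ : R.1 ≤ ℓ)
    (hPm : P.1 ≤ m) (hRm : R.1 ≤ m) : ℓ = m := by
  have hjoin : finrank F (P.1 ⊔ R.1 : Submodule F (Fin n → F)) = 2 := by
    rw [ProjPoint.finrank_sup fun h => hPR (ProjPoint.eq_of_le h).symm, P.2]
  exact (eq_of_le_of_finrank_eq (sup_le hPℓ hRℓ) (hjoin.trans hℓ.symm)).symm.trans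
    (eq_of_le_of_finrank_eq (sup_le hPm hRm) (hjoin.trans hm.symm))

theorem secant_inf_le_one [Finite F] (S : Set (ProjPoint F n)) {ℓ m : Submodule F (Fin n → F)}
    (hℓ : finrank F ℓ = 2) (hm : finrank F m = 2) (hne : ℓ ≠ m) :
    secant F n S (ℓ ⊓ m) ≤ 1 := by
  refine (Set.ncard_le_one (Set.toFinite _)).2 fun P hP R hR => by_contra fun hPR => hne ?_
  exact line_eq_of_ne_of_le hPR hℓ hm (le_inf_iff.1 hP.2).1 (le_inf_iff.1 hR.2).1
    (le_inf_iff.1 hP.2).2 (le_inf_iff.1 hR.2).2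

theorem exists_sup_span_singleton_eq {U X : Submodule F (Fin n → F)} (hUX : U ≤ X)
    (hX : finrank F X = finrank F U + 1) : ∃ v ∉ U, U ⊔ F ∙ v = X := by
  obtain ⟨v, hvX, hvU⟩ := SetLike.exists_of_lt (hUX.lt_of_ne fun h => by
    rw [h] at hX
    exact (Nat.lt_succ_self _).ne hX)
  refine ⟨v, hvU, eq_of_le_of_finrank_eq ?_ ((finrank_sup_span_singleton hvU).trans hX.symm)⟩
  exact sup_le hUX ((span_singleton_le_iff_mem v X).2 hvX)

/-- The pencil of subspaces of `W` through `U`, one dimension larger than `U`: the points of a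
line (`U = ⊥`), the lines of a plane through a point, the planes through a line, ... -/
noncomputable def pencil [Finite F] (U W : Submodule F (Fin n → F)) :
    Finset (Submodule F (Fin n → F)) :=
  {X | U ≤ X ∧ X ≤ W ∧ finrank F X = finrank F U + 1}.toFinite.toFinset

theorem mem_pencil [Finite F] {U W X : Submodule F (Fin n → F)} :
    X ∈ pencil U W ↔ U ≤ X ∧ X ≤ W ∧ finrank F X = finrank F U + 1 := by
  simp [pencil]

theorem sup_span_singleton_mem_pencil [Finite F] {U W : Submodule F (Fin n → F)} (hUW : U ≤ W)
    {v : Fin n → F} (hvW : v ∈ W) (hvU : v ∉ U) : U ⊔ F ∙ v ∈ pencil U W :=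
  mem_pencil.2 ⟨le_sup_left, sup_le hUW ((span_singleton_le_iff_mem v W).2 hvW),
    finrank_sup_span_singleton hvU⟩

theorem sup_mem_pencil [Finite F] {U W : Submodule F (Fin n → F)} (hUW : U ≤ W)
    {P : ProjPoint F n} (hPW : P.1 ≤ W) (hPU : ¬P.1 ≤ U) : U ⊔ P.1 ∈ pencil U W :=
  mem_pencil.2 ⟨le_sup_left, sup_le hUW hPW, ProjPoint.finrank_sup hPU⟩

theorem sup_eq_of_mem_pencil [Finite F] {U W X : Submodule F (Fin n → F)} (hX : X ∈ pencil U W)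
    {P : ProjPoint F n} (hPX : P.1 ≤ X) (hPU : ¬P.1 ≤ U) : U ⊔ P.1 = X := by
  obtain ⟨hUX, -, hrank⟩ := mem_pencil.1 hX
  exact eq_of_le_of_finrank_eq (sup_le hUX hPX) ((ProjPoint.finrank_sup hPU).trans hrank.symm)

theorem pencil_nonempty [Finite F] {U W : Submodule F (Fin n → F)} (hUW : U < W) :
    (pencil U W).Nonempty := by
  obtain ⟨v, hvW, hvU⟩ := SetLike.exists_of_lt hUW
  exact ⟨_, sup_span_singleton_mem_pencil hUW.le hvW hvU⟩

/- Every point of `W` outside `U` lies on exactly one member of the pencil. -/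
theorem sum_pencil_secant_add_secant [Finite F] (S : Set (ProjPoint F n))
    {U W : Submodule F (Fin n → F)} (hUW : U ≤ W) :
    ∑ X ∈ pencil U W, secant F n S X + secant F n S U =
      secant F n S W + (pencil U W).card * secant F n S U := by
  classical
  have hsub {X : Submodule F (Fin n → F)} (hUX : U ≤ X) : pointFinset S U ⊆ pointFinset S X :=
    fun P hP => mem_pointFinset.2 ⟨(mem_pointFinset.1 hP).1, (mem_pointFinset.1 hP).2.trans hUX⟩
  have hdiff {X : Submodule F (Fin n → F)} (hUX : U ≤ X) :
      (pointFinset S X \ pointFinset S U).card + secant F n S U = secant F n S X := by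
    rw [← card_pointFinset, ← card_pointFinset, Finset.card_sdiff_add_card_eq_card (hsub hUX)]
  have hfiber : (pointFinset S W \ pointFinset S U).card =
      ∑ X ∈ pencil U W, (pointFinset S X \ pointFinset S U).card := by
    rw [Finset.card_eq_sum_card_fiberwise (f := fun P => U ⊔ P.1) (t := pencil U W)]
    · refine Finset.sum_congr rfl fun X hX => congrArg Finset.card (Finset.ext fun P => ?_)
      simp only [Finset.mem_filter, Finset.mem_sdiff, mem_pointFinset]
      constructor
      · rintro ⟨⟨⟨hPS, -⟩, hPU⟩, rfl⟩
        exact ⟨⟨hPS, le_sup_right⟩, hPU⟩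
      · rintro ⟨⟨hPS, hPX⟩, hPU⟩
        exact ⟨⟨⟨hPS, hPX.trans (mem_pencil.1 hX).2.1⟩, hPU⟩,
          sup_eq_of_mem_pencil hX hPX fun h => hPU ⟨hPS, h⟩⟩
    · intro P hP
      simp only [Finset.coe_sdiff, Set.mem_sdiff, Finset.mem_coe, mem_pointFinset] at hP
      exact sup_mem_pencil hUW hP.1.2 fun h => hP.2 ⟨hP.1.1, h⟩
  calc ∑ X ∈ pencil U W, secant F n S X + secant F n S U
      = ∑ X ∈ pencil U W, ((pointFinset S X \ pointFinset S U).card + secant F n S U)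
          + secant F n S U := by
        rw [Finset.sum_congr rfl fun X hX => (hdiff (mem_pencil.1 hX).1).symm]
    _ = secant F n S W + (pencil U W).card * secant F n S U := by
        rw [Finset.sum_add_distrib, ← hfiber, Finset.sum_const, smul_eq_mul, add_right_comm,
          hdiff hUW]

theorem card_pencil [Fintype F] {U W : Submodule F (Fin n → F)} (hUW : U ≤ W)
    (hrank : finrank F W = finrank F U + 2) : (pencil U W).card = Fintype.card F + 1 := by
  have hcount := sum_pencil_secant_add_secant Set.univ hUW
  have hmember : ∀ X ∈ pencil U W, secant F n Set.univ X =
      secant F n Set.univ U + Fintype.card F ^ finrank F U := fun X hX => by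
    rw [secant_univ, secant_univ, (mem_pencil.1 hX).2.2, Finset.sum_range_succ]
  rw [Finset.sum_congr rfl hmember, Finset.sum_const, smul_eq_mul, secant_univ W, hrank,
    Finset.sum_range_succ, Finset.sum_range_succ, ← secant_univ U] at hcount
  have hpos : 0 < Fintype.card F ^ finrank F U := pow_pos Fintype.card_pos _
  refine Nat.eq_of_mul_eq_mul_right hpos ?_
  rw [pow_succ] at hcount
  linarith

theorem sum_pencil_secant [Fintype F] (S : Set (ProjPoint F n)) {U W : Submodule F (Fin n → F)}
    (hUW : U ≤ W) (hrank : finrank F W = finrank F U + 2) :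
    ∑ X ∈ pencil U W, secant F n S X = secant F n S W + Fintype.card F * secant F n S U := by
  have hcount := sum_pencil_secant_add_secant S hUW
  rw [card_pencil hUW hrank] at hcount
  linarith

theorem mem_sup_span_singleton_self (U : Submodule F (Fin n → F)) (v : Fin n → F) :
    v ∈ U ⊔ F ∙ v :=
  mem_sup_right (mem_span_singleton_self v)

theorem add_smul_notMem_sup_span_singleton {U : Submodule F (Fin n → F)} {a b : Fin n → F}
    (ha : a ∉ U ⊔ F ∙ b) (y : F) : a + y • b ∉ U ⊔ F ∙ b := fun h =>
  ha ((Submodule.add_mem_iff_left _ (smul_mem _ y (mem_sup_span_singleton_self U b))).1 h)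

theorem sup_span_singleton_add_smul_injective {U : Submodule F (Fin n → F)} {a b : Fin n → F}
    (hb : b ∉ U) (ha : a ∉ U ⊔ F ∙ b) :
    Function.Injective fun y : F => U ⊔ F ∙ (a + y • b) := by
  intro y z (hyz : U ⊔ F ∙ (a + y • b) = U ⊔ F ∙ (a + z • b))
  by_contra hne
  have hay := add_smul_notMem_sup_span_singleton ha y
  have hmem : (y - z) • b ∈ U ⊔ F ∙ (a + y • b) := by
    have hsub := sub_mem (mem_sup_span_singleton_self U (a + y • b))
      (hyz ▸ mem_sup_span_singleton_self U (a + z • b))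
    rwa [add_sub_add_left_eq_sub, ← sub_smul] at hsub
  have heq : U ⊔ F ∙ b = U ⊔ F ∙ (a + y • b) := by
    refine eq_of_le_of_finrank_eq (sup_le le_sup_left ?_) ?_
    · exact (span_singleton_le_iff_mem _ _).2 ((smul_mem_iff _ (sub_ne_zero.2 hne)).1 hmem)
    · rw [finrank_sup_span_singleton hb, finrank_sup_span_singleton fun h => hay (mem_sup_left h)]
  exact hay (heq ▸ mem_sup_span_singleton_self U (a + y • b))

theorem sum_pencil_erase [Fintype F] [DecidableEq (Submodule F (Fin n → F))] {G : Type*}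
    [AddCommMonoid G] {U W : Submodule F (Fin n → F)} (hUW : U ≤ W)
    (hrank : finrank F W = finrank F U + 2) {a b : Fin n → F} (haW : a ∈ W) (hbW : b ∈ W)
    (hb : b ∉ U) (ha : a ∉ U ⊔ F ∙ b) (f : Submodule F (Fin n → F) → G) :
    ∑ X ∈ (pencil U W).erase (U ⊔ F ∙ b), f X = ∑ y : F, f (U ⊔ F ∙ (a + y • b)) := by
  have hinj := sup_span_singleton_add_smul_injective hb ha
  have himage : Finset.univ.image (fun y : F => U ⊔ F ∙ (a + y • b)) =
      (pencil U W).erase (U ⊔ F ∙ b) := by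
    refine Finset.eq_of_subset_of_card_le (Finset.image_subset_iff.2 fun y _ => ?_) ?_
    · have hay := add_smul_notMem_sup_span_singleton ha y
      refine Finset.mem_erase.2 ⟨fun h => hay (h ▸ mem_sup_span_singleton_self U _), ?_⟩
      exact sup_span_singleton_mem_pencil hUW (add_mem haW (smul_mem _ y hbW))
        fun h => hay (mem_sup_left h)
    · rw [Finset.card_image_of_injective _ hinj,
        Finset.card_erase_of_mem (sup_span_singleton_mem_pencil hUW hbW hb),
        card_pencil hUW hrank, Nat.add_sub_cancel, Finset.card_univ]
  rw [← himage, Finset.sum_image hinj.injOn]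

theorem card_filter_mk_mem_eq_secant [Fintype F] (S : Set (ProjPoint F n))
    [DecidablePred (· ∈ S)] {u w : Fin n → F} (hu : u ≠ 0) (hw : w ∉ F ∙ u)
    (hS : ProjPoint.mk u hu ∉ S) (hv : ∀ x : F, w + x • u ≠ 0) :
    (Finset.univ.filter fun x : F => ProjPoint.mk (w + x • u) (hv x) ∈ S).card =
      secant F n S (F ∙ u ⊔ F ∙ w) := by
  classical
  have hrank : finrank F (F ∙ u ⊔ F ∙ w : Submodule F (Fin n → F)) =
      finrank F (⊥ : Submodule F (Fin n → F)) + 2 := by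
    rw [finrank_sup_span_singleton hw, finrank_span_singleton hu, finrank_bot]
  have hpoint : secant F n S (⊥ ⊔ F ∙ u) = 0 := by
    rw [bot_sup_eq]
    exact (secant_point S (ProjPoint.mk u hu)).trans (if_neg hS)
  have hsum := sum_pencil_secant S bot_le hrank
  rw [secant_bot, mul_zero, add_zero, ← Finset.sum_erase _ hpoint,
    sum_pencil_erase bot_le hrank (mem_sup_span_singleton_self _ w)
      (mem_sup_left (mem_span_singleton_self u)) (by rwa [mem_bot]) (by rwa [bot_sup_eq])] at hsum
  rw [← hsum, Finset.card_filter]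
  refine Finset.sum_congr rfl fun x _ => ?_
  rw [bot_sup_eq]
  exact (secant_point S (ProjPoint.mk (w + x • u) (hv x))).symm

/-- The lines of the subspace `W`. -/
noncomputable def lines [Finite F] (W : Submodule F (Fin n → F)) :
    Finset (Submodule F (Fin n → F)) :=
  {ℓ | ℓ ≤ W ∧ finrank F ℓ = 2}.toFinite.toFinset

theorem mem_lines [Finite F] {W ℓ : Submodule F (Fin n → F)} :
    ℓ ∈ lines W ↔ ℓ ≤ W ∧ finrank F ℓ = 2 := by
  simp [lines]

theorem mem_pencil_point [Finite F] {P : ProjPoint F n} {W ℓ : Submodule F (Fin n → F)} :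
    ℓ ∈ pencil P.1 W ↔ P.1 ≤ ℓ ∧ ℓ ∈ lines W := by
  rw [mem_pencil, P.2, mem_lines]

theorem sum_lines_mul_secant [Finite F] (S : Set (ProjPoint F n)) (W : Submodule F (Fin n → F))
    (f : Submodule F (Fin n → F) → ℕ) :
    ∑ ℓ ∈ lines W, f ℓ * secant F n S ℓ = ∑ P ∈ pointFinset S W, ∑ ℓ ∈ pencil P.1 W, f ℓ := by
  calc ∑ ℓ ∈ lines W, f ℓ * secant F n S ℓ = ∑ ℓ ∈ lines W, ∑ _P ∈ pointFinset S ℓ, f ℓ := by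
        refine Finset.sum_congr rfl fun ℓ _ => ?_
        rw [Finset.sum_const, card_pointFinset, smul_eq_mul, mul_comm]
    _ = _ := by
        refine Finset.sum_comm' fun ℓ P => ?_
        simp only [mem_pointFinset, mem_pencil_point, mem_lines]
        exact ⟨fun ⟨⟨hℓW, hℓ⟩, hPS, hPℓ⟩ => ⟨⟨hPℓ, hℓW, hℓ⟩, hPS, hPℓ.trans hℓW⟩,
          fun ⟨⟨hPℓ, hℓW, hℓ⟩, hPS, _⟩ => ⟨⟨hℓW, hℓ⟩, hPS, hPℓ⟩⟩

section Plane

variable [Fintype F] {π : Submodule F (Fin n → F)}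

theorem sum_lines_secant (S : Set (ProjPoint F n)) (hπ : finrank F π = 3) :
    ∑ ℓ ∈ lines π, secant F n S ℓ = (Fintype.card F + 1) * secant F n S π := by
  have hpencil : ∀ P ∈ pointFinset S π, ∑ _ℓ ∈ pencil P.1 π, 1 = Fintype.card F + 1 :=
    fun P hP => by
      rw [Finset.sum_const, smul_eq_mul, mul_one,
        card_pencil (mem_pointFinset.1 hP).2 (by rw [hπ, P.2])]
  have hcount := sum_lines_mul_secant S π fun _ => 1
  simp only [one_mul] at hcount
  rw [hcount, Finset.sum_congr rfl hpencil, Finset.sum_const, card_pointFinset, smul_eq_mul,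
    mul_comm]

theorem card_lines (hπ : finrank F π = 3) :
    (lines π).card = Fintype.card F ^ 2 + Fintype.card F + 1 := by
  have hcount := sum_lines_secant Set.univ hπ
  rw [Finset.sum_congr rfl fun ℓ hℓ => secant_univ_of_finrank_eq_two (mem_lines.1 hℓ).2,
    Finset.sum_const, smul_eq_mul, mul_comm, secant_univ, hπ] at hcount
  rw [Nat.eq_of_mul_eq_mul_left (Nat.succ_pos _) hcount]
  simp only [Finset.sum_range_succ, Finset.sum_range_zero]
  ring

theorem sum_lines_secant_sq (S : Set (ProjPoint F n)) (hπ : finrank F π = 3) :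
    ∑ ℓ ∈ lines π, secant F n S ℓ ^ 2 =
      secant F n S π * (secant F n S π + Fintype.card F) := by
  classical
  have hpencil : ∀ P ∈ pointFinset S π,
      ∑ ℓ ∈ pencil P.1 π, secant F n S ℓ = secant F n S π + Fintype.card F := fun P hP => by
    obtain ⟨hPS, hPπ⟩ := mem_pointFinset.1 hP
    rw [sum_pencil_secant S hPπ (by rw [hπ, P.2]), secant_point, if_pos hPS, mul_one]
  simp only [pow_two]
  rw [sum_lines_mul_secant, Finset.sum_congr rfl hpencil, Finset.sum_const, card_pointFinset,
    smul_eq_mul]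

end Plane

theorem sum_secant_le_secant_add_choose [Finite F] (S : Set (ProjPoint F n))
    {W : Submodule F (Fin n → F)} {L : Finset (Submodule F (Fin n → F))} (hL : L ⊆ lines W) :
    ∑ ℓ ∈ L, secant F n S ℓ ≤ secant F n S W + L.card.choose 2 := by
  classical
  have hinter : ∀ ℓ ∈ L, ∀ m ∈ L, ℓ ≠ m → (pointFinset S ℓ ∩ pointFinset S m).card ≤ 1 := by
    intro ℓ hℓ m hm hne
    refine le_of_eq_of_le ?_
      (secant_inf_le_one S (mem_lines.1 (hL hℓ)).2 (mem_lines.1 (hL hm)).2 hne)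
    rw [← card_pointFinset]
    refine congrArg Finset.card (Finset.ext fun P => ?_)
    simp only [Finset.mem_inter, mem_pointFinset, le_inf_iff]
    tauto
  have hunion : L.biUnion (pointFinset S) ⊆ pointFinset S W :=
    Finset.biUnion_subset.2 fun ℓ hℓ P hP => mem_pointFinset.2
      ⟨(mem_pointFinset.1 hP).1, (mem_pointFinset.1 hP).2.trans (mem_lines.1 (hL hℓ)).1⟩
  have hbound := sum_card_le_card_biUnion_add_choose L (pointFinset S) hinter
  simp only [card_pointFinset] at hbound
  exact hbound.trans (Nat.add_le_add_right
    ((Finset.card_le_card hunion).trans_eq (card_pointFinset S W)) _)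

/- Distinct points of `ℓ` have distinct transversals `m`, and these pairwise share at most one
point. -/
theorem mul_le_secant_add_choose_of_transversals [Finite F] {S : Set (ProjPoint F n)}
    {ℓ W : Submodule F (Fin n → F)} (hℓ : finrank F ℓ = 2) {a k : ℕ}
    (htrans : ∀ R ∈ pointFinset S ℓ, ∃ m ∈ pencil R.1 W, m ≠ ℓ ∧ a ≤ secant F n S m)
    (hk : k ≤ secant F n S ℓ) : k * a ≤ secant F n S W + k.choose 2 := by
  classical
  choose! g hgW hgℓ hga using htrans
  have hrank {R : ProjPoint F n} (hR : R ∈ pointFinset S ℓ) : finrank F (g R) = 2 :=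
    (mem_lines.1 (mem_pencil_point.1 (hgW R hR)).2).2
  have hinj : Set.InjOn g (pointFinset S ℓ) := by
    intro P hP R hR hPR
    by_contra hne
    refine hgℓ P hP (line_eq_of_ne_of_le hne (hrank hP) hℓ (mem_pencil.1 (hgW P hP)).1 ?_
      (mem_pointFinset.1 hP).2 (mem_pointFinset.1 hR).2)
    exact hPR ▸ (mem_pencil.1 (hgW R hR)).1
  obtain ⟨T, hT, rfl⟩ := Finset.exists_subset_card_eq (hk.trans_eq (card_pointFinset S ℓ).symm)
  have hinjT := hinj.mono (Finset.coe_subset.2 hT)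
  have hlines : T.image g ⊆ lines W :=
    Finset.image_subset_iff.2 fun R hR => (mem_pencil_point.1 (hgW R (hT hR))).2
  have hbound := sum_secant_le_secant_add_choose S hlines
  rw [Finset.sum_image hinjT, Finset.card_image_of_injOn hinjT] at hbound
  exact (Finset.card_nsmul_le_sum T _ a fun R hR => hga R (hT hR)).trans hbound

end ProjectiveSpace

section HyperplaneCode

open Submodule

variable {F : Type} [Field F] {n p : ℕ}

theorem exists_eq_ker_of_finrank_eq {H : Submodule F (Fin (n + 1) → F)} (hH : finrank F H = n) :
    ∃ φ : (Fin (n + 1) → F) →ₗ[F] F, H = LinearMap.ker φ := by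
  have hlt : H < ⊤ := lt_top_of_finrank_lt_finrank (by rw [hH, finrank_fin_fun]; lia)
  obtain ⟨φ, hφ, hle⟩ := exists_le_ker_of_lt_top H hlt
  have hker : finrank F (LinearMap.ker φ) < n + 1 := by
    have hker_ne_top : LinearMap.ker φ ≠ ⊤ := mt LinearMap.ker_eq_top.1 hφ
    exact (finrank_lt hker_ne_top).trans_eq (finrank_fin_fun F)
  exact ⟨φ, eq_of_le_of_finrank_le hle (by lia)⟩

theorem cast_secant [Finite F] (S : Set (ProjPoint F n)) (W : Submodule F (Fin n → F)) :
    (secant F n S W : ZMod p) = ∑ P ∈ pointFinset Set.univ W, charVec F p n S P := by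
  classical
  have hfilter : pointFinset S W = (pointFinset Set.univ W).filter (· ∈ S) := by
    ext P
    simp only [mem_pointFinset, Finset.mem_filter, Set.mem_univ, true_and]
    exact and_comm
  simp [← card_pointFinset, hfilter, charVec, Set.indicator_apply]

theorem cast_secant_univ_eq_one [Finite F] [CharP F p] {W : Submodule F (Fin n → F)}
    (hW : 0 < finrank F W) : (secant F n Set.univ W : ZMod p) = 1 := by
  have := Fintype.ofFinite F
  have hcard : (Fintype.card F : ZMod p) = 0 :=
    (ZMod.natCast_eq_zero_iff _ _).2
      ((CharP.cast_eq_zero_iff F p _).1 (FiniteField.cast_card_eq_zero F))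
  obtain ⟨k, hk⟩ := Nat.exists_eq_add_of_lt hW
  rw [secant_univ, hk, zero_add, Finset.sum_range_succ']
  simp [hcard]

/- A hyperplane meets `W` in a nonempty projective subspace, whose size is `1` modulo `p`. -/
theorem sum_eq_sum_of_mem_hypCode [Finite F] [CharP F p] {c : ProjPoint F n → ZMod p}
    (hc : c ∈ hypCode F p n) {W W' : Submodule F (Fin n → F)} (hW : 2 ≤ finrank F W)
    (hW' : 2 ≤ finrank F W') :
    ∑ P ∈ pointFinset Set.univ W, c P = ∑ P ∈ pointFinset Set.univ W', c P := by
  induction hc using span_induction with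
  | mem c hc =>
    obtain ⟨H, hH, rfl⟩ := hc
    have hone {X : Submodule F (Fin n → F)} (hX : 2 ≤ finrank F X) :
        ∑ P ∈ pointFinset Set.univ X, charVec F p n (pointsIn F n H) P = 1 := by
      rw [← cast_secant, secant_pointsIn, cast_secant_univ_eq_one]
      have hdim := finrank_sup_add_finrank_inf_eq H X
      have hsup := (H ⊔ X).finrank_le
      rw [finrank_fin_fun] at hsup
      lia
    rw [hone hW, hone hW']
  | zero => simp
  | add c d _ _ hc hd => simp only [Pi.add_apply, Finset.sum_add_distrib, hc, hd]
  | smul r c _ hc => simp only [Pi.smul_apply, ← Finset.smul_sum, hc]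

theorem cast_secant_eq_cast_secant [Finite F] [CharP F p] {S : Set (ProjPoint F n)}
    (hS : charVec F p n S ∈ hypCode F p n) {W W' : Submodule F (Fin n → F)}
    (hW : 2 ≤ finrank F W) (hW' : 2 ≤ finrank F W') :
    (secant F n S W : F) = secant F n S W' := by
  have hcast : (secant F n S W : ZMod p) = secant F n S W' := by
    rw [cast_secant, cast_secant, sum_eq_sum_of_mem_hypCode hS hW hW']
  simpa only [map_natCast] using congrArg (ZMod.castHom (dvd_refl p) F) hcast

open Polynomial in
theorem exists_natDegree_le_eval_eq_sum_pow_mul [Fintype F] [CharP F p]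
    {c : ProjPoint F (n + 1) → ZMod p} (hc : c ∈ hypCode F p (n + 1)) {a b u : Fin (n + 1) → F}
    (hv : ∀ y x : F, a + y • b + x • u ≠ 0) (i : ℕ) :
    ∃ s : F[X], s.natDegree ≤ i ∧ ∀ y, s.eval y =
      ∑ x, x ^ i * ZMod.castHom dvd_rfl F (c (ProjPoint.mk (a + y • b + x • u) (hv y x))) := by
  classical
  induction hc using span_induction with
  | mem c hc =>
    obtain ⟨H, hH, rfl⟩ := hc
    obtain ⟨φ, rfl⟩ := exists_eq_ker_of_finrank_eq hH
    obtain ⟨s, hdeg, heval⟩ := exists_natDegree_le_eval_eq_sum_pow (φ a) (φ b) (φ u) i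
    refine ⟨s, hdeg, fun y => (heval y).trans (Finset.sum_congr rfl fun x _ => ?_)⟩
    have hmem : ProjPoint.mk (a + y • b + x • u) (hv y x) ∈ pointsIn F (n + 1) (LinearMap.ker φ) ↔
        φ a + y * φ b + x * φ u = 0 := by
      simp [ProjPoint.mk_mem_pointsIn]
    rw [charVec, Set.indicator_apply, apply_ite (ZMod.castHom _ F), Pi.one_apply, map_one,
      map_zero]
    simp only [hmem]
  | zero => exact ⟨0, by simp, by simp⟩
  | add c d _ _ hc hd =>
    obtain ⟨s, hsdeg, hseval⟩ := hc
    obtain ⟨t, htdeg, hteval⟩ := hd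
    refine ⟨s + t, natDegree_add_le_of_degree_le hsdeg htdeg, fun y => ?_⟩
    simp only [eval_add, hseval, hteval, Pi.add_apply, map_add, mul_add, Finset.sum_add_distrib]
  | smul r c _ hc =>
    obtain ⟨s, hsdeg, hseval⟩ := hc
    refine ⟨C (ZMod.castHom dvd_rfl F r) * s, (natDegree_C_mul_le _ s).trans hsdeg, fun y => ?_⟩
    simp only [eval_mul, eval_C, hseval, Pi.smul_apply, smul_eq_mul, map_mul, Finset.mul_sum,
      mul_left_comm]

/- With `P = ⟨u⟩`, the lines `⟨u, a + y b⟩` carry the sets `Z y` of those `x` with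
`⟨a + y b + x u⟩ ∈ S`, whose power sums are polynomials in `y` because `S` is a codeword. -/
theorem sum_secant_sub_secant_le [Fintype F] [CharP F p] {S : Set (ProjPoint F (n + 1))}
    (hS : charVec F p (n + 1) S ∈ hypCode F p (n + 1)) {P : ProjPoint F (n + 1)} (hP : P ∉ S)
    {a b : Fin (n + 1) → F} (ha : a ∉ P.1 ⊔ F ∙ b) :
    ∑ y : F, (secant F (n + 1) S (P.1 ⊔ F ∙ a) - secant F (n + 1) S (P.1 ⊔ F ∙ (a + y • b))) ≤
      secant F (n + 1) S (P.1 ⊔ F ∙ a) * (secant F (n + 1) S (P.1 ⊔ F ∙ a) - 1) := by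
  classical
  obtain ⟨u, hu, rfl⟩ := P.exists_eq_mk
  have hline (y : F) : a + y • b ∉ F ∙ u := fun h =>
    add_smul_notMem_sup_span_singleton ha y (mem_sup_left h)
  have hv (y x : F) : a + y • b + x • u ≠ 0 := fun h => by
    rw [add_eq_zero_iff_eq_neg] at h
    exact hline y (h ▸ neg_mem (smul_mem _ x (mem_span_singleton_self u)))
  let Z (y : F) : Finset F :=
    Finset.univ.filter fun x => ProjPoint.mk (a + y • b + x • u) (hv y x) ∈ S
  have hZ (y : F) :
      (Z y).card = secant F (n + 1) S ((ProjPoint.mk u hu).1 ⊔ F ∙ (a + y • b)) :=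
    card_filter_mk_mem_eq_secant S hu (hline y) hP (hv y)
  have hZ0 : (Z 0).card = secant F (n + 1) S ((ProjPoint.mk u hu).1 ⊔ F ∙ a) := by
    rw [hZ, zero_smul, add_zero]
  choose s hdeg heval using exists_natDegree_le_eval_eq_sum_pow_mul hS hv
  have hpow (i : ℕ) (y : F) : (s i).eval y = ∑ x ∈ Z y, x ^ i := by
    rw [heval, Finset.sum_filter]
    refine Finset.sum_congr rfl fun x _ => ?_
    rw [charVec, Set.indicator_apply]
    split_ifs <;> simp
  simpa only [hZ0, hZ] using sum_card_sub_card_le Z s hdeg hpow 0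

theorem card_mul_secant_add_secant_le [Fintype F] [CharP F p] {S : Set (ProjPoint F (n + 1))}
    (hS : charVec F p (n + 1) S ∈ hypCode F p (n + 1)) {π ℓ m : Submodule F (Fin (n + 1) → F)}
    (hπ : finrank F π = 3) {P : ProjPoint F (n + 1)} (hP : P ∉ S) (hℓ : ℓ ∈ pencil P.1 π)
    (hm : m ∈ pencil P.1 π) (hne : ℓ ≠ m) :
    Fintype.card F * secant F (n + 1) S ℓ + secant F (n + 1) S m ≤
      secant F (n + 1) S ℓ * (secant F (n + 1) S ℓ - 1) + secant F (n + 1) S π := by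
  classical
  have hrank : finrank F π = finrank F P.1 + 2 := by rw [hπ, P.2]
  have hPπ : P.1 ≤ π := (mem_pencil.1 hℓ).1.trans (mem_pencil.1 hℓ).2.1
  have hsum := sum_pencil_secant S hPπ hrank
  rw [secant_point, if_neg hP, mul_zero, add_zero, ← Finset.add_sum_erase _ _ hm] at hsum
  obtain ⟨hPℓ, hℓπ, hℓrank⟩ := mem_pencil.1 hℓ
  obtain ⟨hPm, hmπ, hmrank⟩ := mem_pencil.1 hm
  obtain ⟨a, -, rfl⟩ := exists_sup_span_singleton_eq hPℓ hℓrank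
  obtain ⟨b, hbP, rfl⟩ := exists_sup_span_singleton_eq hPm hmrank
  have ha : a ∉ P.1 ⊔ F ∙ b := fun h => hne (eq_of_le_of_finrank_eq
    (sup_le le_sup_left ((span_singleton_le_iff_mem _ _).2 h)) (hℓrank.trans hmrank.symm))
  rw [sum_pencil_erase hPπ hrank (hℓπ (mem_sup_span_singleton_self P.1 a))
    (hmπ (mem_sup_span_singleton_self P.1 b)) hbP ha] at hsum
  have hpower := sum_secant_sub_secant_le hS hP ha
  have hcard : Fintype.card F * secant F (n + 1) S (P.1 ⊔ F ∙ a) ≤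
      ∑ y : F, (secant F (n + 1) S (P.1 ⊔ F ∙ a) - secant F (n + 1) S (P.1 ⊔ F ∙ (a + y • b)))
        + ∑ y : F, secant F (n + 1) S (P.1 ⊔ F ∙ (a + y • b)) := by
    rw [← Finset.sum_add_distrib, ← smul_eq_mul, ← Finset.card_univ]
    exact Finset.card_nsmul_le_sum _ _ _ fun y _ => le_tsub_add
  lia

end HyperplaneCode

section QuasiHermitian

open Submodule

variable {F : Type} [Field F]

theorem finrank_of_mem_pencil_line [Finite F] {n : ℕ} {ℓ W π : Submodule F (Fin n → F)}
    (hℓ : finrank F ℓ = 2) (hπ : π ∈ pencil ℓ W) : finrank F π = 3 := by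
  rw [(mem_pencil.1 hπ).2.2, hℓ]

theorem finrank_top_eq_finrank_line_add_two {ℓ : Submodule F (Fin (3 + 1) → F)}
    (hℓ : finrank F ℓ = 2) :
    finrank F (⊤ : Submodule F (Fin (3 + 1) → F)) = finrank F ℓ + 2 := by
  rw [finrank_top, finrank_fin_fun, hℓ]

variable [Fintype F] {q : ℕ}

theorem one_lt_of_card_eq_sq (hF : Fintype.card F = q ^ 2) : 1 < q :=
  (Nat.one_lt_pow_iff two_ne_zero).1 (hF ▸ Fintype.one_lt_card)

section Plane

variable {n : ℕ} {S : Set (ProjPoint F n)} {π : Submodule F (Fin n → F)}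

/- The `q²` lines of `π` through `R` other than `ℓ` carry, counted with multiplicity,
`q³ + 2q² + 1 - #(ℓ ∩ S) > q² (q + 1)` points of `S`. -/
theorem exists_mem_pencil_lt_secant (hF : Fintype.card F = q ^ 2) {ℓ : Submodule F (Fin n → F)}
    (hπ : finrank F π = 3) (hbig : secant F n S π = q ^ 3 + q ^ 2 + 1)
    {R : ProjPoint F n} (hR : R ∈ S) (hℓ : ℓ ∈ pencil R.1 π)
    (hle : secant F n S ℓ ≤ q ^ 2) :
    ∃ m ∈ pencil R.1 π, m ≠ ℓ ∧ q + 1 < secant F n S m := by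
  classical
  by_contra! hshort
  have hrank : finrank F π = finrank F R.1 + 2 := by rw [hπ, R.2]
  have hRπ : R.1 ≤ π := (mem_pencil.1 hℓ).1.trans (mem_pencil.1 hℓ).2.1
  have hsum := sum_pencil_secant S hRπ hrank
  rw [secant_point, if_pos hR, hbig, hF, ← Finset.add_sum_erase _ _ hℓ] at hsum
  have herase : ∑ m ∈ (pencil R.1 π).erase ℓ, secant F n S m ≤ q ^ 2 * (q + 1) := by
    have hcard : ((pencil R.1 π).erase ℓ).card = q ^ 2 := by
      rw [Finset.card_erase_of_mem hℓ, card_pencil hRπ hrank, hF, Nat.add_sub_cancel]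
    rw [← hcard, ← smul_eq_mul]
    exact Finset.sum_le_card_nsmul _ _ _ fun m hm =>
      hshort m (Finset.mem_of_mem_erase hm) (Finset.ne_of_mem_erase hm)
  linarith

/- The standard equations give `∑ (s - 1) (q + 1 - s) = 0` over the lines of `π`, and no summand
is negative. -/
theorem secant_line_eq_of_forall_le (hF : Fintype.card F = q ^ 2) (hπ : finrank F π = 3)
    (hsmall : secant F n S π = q ^ 3 + 1)
    (hbounds : ∀ ℓ ∈ lines π, 1 ≤ secant F n S ℓ ∧ secant F n S ℓ ≤ q + 1) :
    ∀ ℓ ∈ lines π, secant F n S ℓ = 1 ∨ secant F n S ℓ = q + 1 := by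
  have hsum : ∑ ℓ ∈ lines π, ((secant F n S ℓ : ℤ) - 1) * (q + 1 - secant F n S ℓ) = 0 := by
    have hone : ((lines π).card : ℤ) = _ := congrArg Nat.cast (card_lines hπ)
    have hlin : ((∑ ℓ ∈ lines π, secant F n S ℓ : ℕ) : ℤ) = _ :=
      congrArg Nat.cast (sum_lines_secant S hπ)
    have hsq : ((∑ ℓ ∈ lines π, secant F n S ℓ ^ 2 : ℕ) : ℤ) = _ :=
      congrArg Nat.cast (sum_lines_secant_sq S hπ)
    rw [hF] at hone hlin hsq
    rw [hsmall] at hlin hsq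
    push_cast at hone hlin hsq
    calc ∑ ℓ ∈ lines π, ((secant F n S ℓ : ℤ) - 1) * (q + 1 - secant F n S ℓ)
        = (q + 2) * ∑ ℓ ∈ lines π, (secant F n S ℓ : ℤ) - ∑ ℓ ∈ lines π, (secant F n S ℓ : ℤ) ^ 2
            - (lines π).card * (q + 1) := by
          rw [← nsmul_eq_mul, ← Finset.sum_const, Finset.mul_sum, ← Finset.sum_sub_distrib,
            ← Finset.sum_sub_distrib]
          exact Finset.sum_congr rfl fun ℓ _ => by ring
      _ = 0 := by
          rw [hone, hlin, hsq]
          ring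
  intro ℓ hℓ
  have hterm := (Finset.sum_eq_zero_iff_of_nonneg fun m hm => ?_).1 hsum ℓ hℓ
  · rcases mul_eq_zero.1 hterm with h | h
    · left
      lia
    · right
      lia
  · obtain ⟨hone, hle⟩ := hbounds m hm
    exact mul_nonneg (by lia) (by lia)

end Plane

variable {V : Set (ProjPoint F (3 + 1))}

namespace IsQuasiHermitian

theorem secant_top (hF : Fintype.card F = q ^ 2) (hV : IsQuasiHermitian F q 3 V) :
    secant F (3 + 1) V ⊤ = (q ^ 2 + 1) * (q ^ 3 + 1) := by
  have hq : (1 : ℤ) < q := mod_cast one_lt_of_card_eq_sq hF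
  have hne : (q : ℤ) ^ 2 - 1 ≠ 0 := by nlinarith
  have hcard := hV.1
  rw [_root_.secant_top]
  zify
  refine mul_right_cancel₀ hne ?_
  linear_combination hcard

theorem secant_plane (hF : Fintype.card F = q ^ 2) (hV : IsQuasiHermitian F q 3 V)
    {π : Submodule F (Fin (3 + 1) → F)} (hπ : finrank F π = 3) :
    secant F (3 + 1) V π = q ^ 3 + 1 ∨ secant F (3 + 1) V π = q ^ 3 + q ^ 2 + 1 := by
  have hq : (1 : ℤ) < q := mod_cast one_lt_of_card_eq_sq hF
  have hne : (q : ℤ) ^ 2 - 1 ≠ 0 := by nlinarith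
  zify
  refine (hV.2 π hπ).imp (fun h => mul_right_cancel₀ hne ?_) fun h => mul_right_cancel₀ hne ?_
  · linear_combination h
  · linear_combination h

theorem card_filter_pencil_eq_secant (hF : Fintype.card F = q ^ 2)
    (hV : IsQuasiHermitian F q 3 V) {ℓ : Submodule F (Fin (3 + 1) → F)} (hℓ : finrank F ℓ = 2) :
    ((pencil ℓ ⊤).filter fun π => secant F (3 + 1) V π = q ^ 3 + q ^ 2 + 1).card =
      secant F (3 + 1) V ℓ := by
  have hq := one_lt_of_card_eq_sq hF
  have hrank := finrank_top_eq_finrank_line_add_two hℓ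
  have hplane : ∀ π ∈ pencil ℓ ⊤, secant F (3 + 1) V π =
      q ^ 3 + 1 + q ^ 2 * if secant F (3 + 1) V π = q ^ 3 + q ^ 2 + 1 then 1 else 0 := by
    intro π hπ
    split_ifs with hbig
    · rw [hbig]
      ring
    · simpa [hbig] using hV.secant_plane hF (finrank_of_mem_pencil_line hℓ hπ)
  have hsum := sum_pencil_secant V le_top hrank
  rw [Finset.sum_congr rfl hplane, Finset.sum_add_distrib, Finset.sum_const, smul_eq_mul,
    ← Finset.mul_sum, ← Finset.card_filter, card_pencil le_top hrank, hV.secant_top hF,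
    hF] at hsum
  exact Nat.eq_of_mul_eq_mul_left (pow_pos (one_pos.trans hq) 2) (Nat.add_left_cancel hsum)

theorem exists_plane_secant_eq_small (hF : Fintype.card F = q ^ 2)
    (hV : IsQuasiHermitian F q 3 V) {ℓ : Submodule F (Fin (3 + 1) → F)} (hℓ : finrank F ℓ = 2)
    (hfull : secant F (3 + 1) V ℓ ≠ q ^ 2 + 1) :
    ∃ π, ℓ ≤ π ∧ finrank F π = 3 ∧ secant F (3 + 1) V π = q ^ 3 + 1 := by
  by_contra! hsmall
  refine hfull ?_
  rw [← hV.card_filter_pencil_eq_secant hF hℓ, Finset.filter_true_of_mem fun π hπ => ?_,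
    card_pencil le_top (finrank_top_eq_finrank_line_add_two hℓ), hF]
  have hrank := finrank_of_mem_pencil_line hℓ hπ
  exact (hV.secant_plane hF hrank).resolve_left (hsmall π (mem_pencil.1 hπ).1 hrank)

theorem exists_plane_secant_eq_big (hF : Fintype.card F = q ^ 2)
    (hV : IsQuasiHermitian F q 3 V) {ℓ : Submodule F (Fin (3 + 1) → F)} (hℓ : finrank F ℓ = 2)
    (hpos : 0 < secant F (3 + 1) V ℓ) :
    ∃ π, ℓ ≤ π ∧ finrank F π = 3 ∧ secant F (3 + 1) V π = q ^ 3 + q ^ 2 + 1 := by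
  rw [← hV.card_filter_pencil_eq_secant hF hℓ, Finset.card_pos] at hpos
  obtain ⟨π, hπ⟩ := hpos
  obtain ⟨hmem, hbig⟩ := Finset.mem_filter.1 hπ
  exact ⟨π, (mem_pencil.1 hmem).1, finrank_of_mem_pencil_line hℓ hmem, hbig⟩

theorem secant_plane_of_le_of_full (hF : Fintype.card F = q ^ 2)
    (hV : IsQuasiHermitian F q 3 V) {ℓ π : Submodule F (Fin (3 + 1) → F)} (hℓ : finrank F ℓ = 2)
    (hfull : secant F (3 + 1) V ℓ = q ^ 2 + 1) (hℓπ : ℓ ≤ π) (hπ : finrank F π = 3) :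
    secant F (3 + 1) V π = q ^ 3 + q ^ 2 + 1 := by
  have hcard := hV.card_filter_pencil_eq_secant hF hℓ
  have hpencil : (pencil ℓ ⊤).card = q ^ 2 + 1 := by
    rw [card_pencil le_top (finrank_top_eq_finrank_line_add_two hℓ), hF]
  rw [hfull, ← hpencil, Finset.card_filter_eq_iff] at hcard
  exact hcard π (mem_pencil.2 ⟨hℓπ, le_top, by rw [hπ, hℓ]⟩)

theorem exists_line_secant_ne_full (hF : Fintype.card F = q ^ 2)
    (hV : IsQuasiHermitian F q 3 V) {P : ProjPoint F (3 + 1)} (hP : P ∈ V) :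
    ∃ ℓ : Submodule F (Fin (3 + 1) → F), finrank F ℓ = 2 ∧ P.1 ≤ ℓ ∧
      secant F (3 + 1) V ℓ ≠ q ^ 2 + 1 := by
  classical
  have hq := one_lt_of_card_eq_sq hF
  have hlt {X : Submodule F (Fin (3 + 1) → F)} (hX : finrank F X < 4) : X < ⊤ :=
    lt_top_of_finrank_lt_finrank (hX.trans_eq (finrank_fin_fun F).symm)
  obtain ⟨ℓ, hℓ⟩ := pencil_nonempty (hlt (P.2.trans_lt (by simp)))
  obtain ⟨hPℓ, -, hℓrank⟩ := mem_pencil.1 hℓ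
  rw [P.2] at hℓrank
  obtain ⟨π, hπ⟩ := pencil_nonempty (hlt (hℓrank.trans_lt (by simp)))
  have hPπ : P.1 ≤ π := hPℓ.trans (mem_pencil.1 hπ).1
  have hπrank := finrank_of_mem_pencil_line hℓrank hπ
  have hrank : finrank F π = finrank F P.1 + 2 := by rw [hπrank, P.2]
  by_contra! hfull
  have hsum := sum_pencil_secant V hPπ hrank
  have hline : ∀ m ∈ pencil P.1 π, secant F (3 + 1) V m = q ^ 2 + 1 := fun m hm =>
    hfull m (mem_lines.1 (mem_pencil_point.1 hm).2).2 (mem_pencil.1 hm).1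
  rw [Finset.sum_congr rfl hline, Finset.sum_const, card_pencil hPπ hrank, secant_point,
    if_pos hP, hF, smul_eq_mul] at hsum
  have hplane : secant F (3 + 1) V π ≤ q ^ 3 + q ^ 2 + 1 := by
    rcases hV.secant_plane hF hπrank with h | h <;> rw [h]
    lia
  nlinarith [mul_lt_mul_of_pos_right hq (pow_pos (one_pos.trans hq) 3)]

section Codeword

variable {p : ℕ} [CharP F p]

theorem secant_line_pos (hF : Fintype.card F = q ^ 2) (hV : IsQuasiHermitian F q 3 V)
    (hcode : charVec F p (3 + 1) V ∈ hypCode F p (3 + 1)) {ℓ : Submodule F (Fin (3 + 1) → F)}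
    (hℓ : finrank F ℓ = 2) : 0 < secant F (3 + 1) V ℓ := by
  have hq : (q : F) = 0 := by
    have hcard := FiniteField.cast_card_eq_zero F
    rw [hF, Nat.cast_pow] at hcard
    exact eq_zero_of_pow_eq_zero hcard
  have hcast := cast_secant_eq_cast_secant hcode hℓ.ge
    (W' := ⊤) (by rw [finrank_top, finrank_fin_fun]; lia)
  rw [hV.secant_top hF] at hcast
  refine Nat.pos_of_ne_zero fun hzero => ?_
  simp [hzero, hq] at hcast

/- Apply the pencil bound in a small plane through `ℓ`, at a point of `ℓ` outside `V`. -/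
theorem secant_line_le_or_ge (hF : Fintype.card F = q ^ 2) (hq : 4 < q)
    (hV : IsQuasiHermitian F q 3 V)
    (hcode : charVec F p (3 + 1) V ∈ hypCode F p (3 + 1)) {ℓ : Submodule F (Fin (3 + 1) → F)}
    (hℓ : finrank F ℓ = 2) :
    secant F (3 + 1) V ℓ ≤ q + 1 ∨ q ^ 2 ≤ secant F (3 + 1) V ℓ + q := by
  rcases eq_or_ne (secant F (3 + 1) V ℓ) (q ^ 2 + 1) with hfull | hfull
  · right
    lia
  obtain ⟨π, hℓπ, hπ, hsmall⟩ := hV.exists_plane_secant_eq_small hF hℓ hfull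
  obtain ⟨P, hPℓ, hPV⟩ : ∃ P : ProjPoint F (3 + 1), P.1 ≤ ℓ ∧ P ∉ V := by
    by_contra! hsub
    refine hfull ?_
    rw [← hF, ← secant_univ_of_finrank_eq_two hℓ]
    exact congrArg Set.ncard (Set.ext fun P => and_congr_left fun hP =>
      iff_of_true (hsub P hP) trivial)
  have hpencil : ℓ ∈ pencil P.1 π := mem_pencil_point.2 ⟨hPℓ, mem_lines.2 ⟨hℓπ, hℓ⟩⟩
  obtain ⟨m, hm, hne⟩ := Finset.exists_mem_ne (s := pencil P.1 π) (by
    rw [card_pencil (hPℓ.trans hℓπ) (by rw [hπ, P.2])]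
    exact Nat.lt_add_of_pos_left Fintype.card_pos) ℓ
  have hmpos := hV.secant_line_pos hF hcode (mem_lines.1 (mem_pencil_point.1 hm).2).2
  have hbound := card_mul_secant_add_secant_le hcode hπ hPV hpencil hm hne.symm
  rw [hF, hsmall] at hbound
  by_contra! hmid
  obtain ⟨k, hk⟩ : ∃ k, secant F (3 + 1) V ℓ = k + 1 := ⟨_, (Nat.sub_add_cancel (by lia)).symm⟩
  rw [hk, Nat.add_sub_cancel] at hbound
  rw [hk] at hmid
  zify at hbound hmpos hmid hq
  nlinarith [mul_nonneg (show (0 : ℤ) ≤ k - (q + 1) by lia)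
    (show (0 : ℤ) ≤ q ^ 2 - q - 2 - k by lia)]

theorem secant_line_le (hF : Fintype.card F = q ^ 2) (hq : 4 < q) (hV : IsQuasiHermitian F q 3 V)
    (hcode : charVec F p (3 + 1) V ∈ hypCode F p (3 + 1)) {ℓ : Submodule F (Fin (3 + 1) → F)}
    (hℓ : finrank F ℓ = 2) (hfull : secant F (3 + 1) V ℓ ≠ q ^ 2 + 1) :
    secant F (3 + 1) V ℓ ≤ q + 1 := by
  refine (hV.secant_line_le_or_ge hF hq hcode hℓ).resolve_right fun hlong => ?_
  obtain ⟨π, hℓπ, hπ, hbig⟩ :=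
    hV.exists_plane_secant_eq_big hF hℓ (hV.secant_line_pos hF hcode hℓ)
  have hle : secant F (3 + 1) V ℓ ≤ q ^ 2 :=
    Nat.lt_succ_iff.1 ((hF ▸ secant_le_of_finrank_eq_two V hℓ).lt_of_ne hfull)
  have htrans : ∀ R ∈ pointFinset V ℓ,
      ∃ m ∈ pencil R.1 π, m ≠ ℓ ∧ q ^ 2 - q ≤ secant F (3 + 1) V m := by
    intro R hR
    obtain ⟨hRV, hRℓ⟩ := mem_pointFinset.1 hR
    obtain ⟨m, hm, hne, hlt⟩ := exists_mem_pencil_lt_secant hF hπ hbig hRV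
      (mem_pencil_point.2 ⟨hRℓ, mem_lines.2 ⟨hℓπ, hℓ⟩⟩) hle
    refine ⟨m, hm, hne, Nat.sub_le_iff_le_add.2 ?_⟩
    exact (hV.secant_line_le_or_ge hF hq hcode
      (mem_lines.1 (mem_pencil_point.1 hm).2).2).resolve_left hlt.not_ge
  have hbound := mul_le_secant_add_choose_of_transversals hℓ htrans (k := q + 5) (by nlinarith)
  rw [hbig] at hbound
  have hchoose : (q + 5) * (q + 4) = (q + 5).choose 2 * 2 := by
    simpa only [Nat.choose_one_right] using Nat.add_one_mul_choose_eq (q + 4) 1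
  zify [show q ≤ q ^ 2 by nlinarith] at hbound hchoose hq
  nlinarith

theorem secant_line_eq_of_le_small_plane (hF : Fintype.card F = q ^ 2) (hq : 4 < q)
    (hV : IsQuasiHermitian F q 3 V) (hcode : charVec F p (3 + 1) V ∈ hypCode F p (3 + 1))
    {π : Submodule F (Fin (3 + 1) → F)} (hπ : finrank F π = 3)
    (hsmall : secant F (3 + 1) V π = q ^ 3 + 1) :
    ∀ ℓ ∈ lines π, secant F (3 + 1) V ℓ = 1 ∨ secant F (3 + 1) V ℓ = q + 1 := by
  refine secant_line_eq_of_forall_le hF hπ hsmall fun ℓ hmem => ?_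
  obtain ⟨hℓπ, hℓ⟩ := mem_lines.1 hmem
  refine ⟨hV.secant_line_pos hF hcode hℓ, hV.secant_line_le hF hq hcode hℓ fun hfull => ?_⟩
  have hbig := hV.secant_plane_of_le_of_full hF hℓ hfull hℓπ hπ
  have hpos : 0 < q ^ 2 := by positivity
  lia

theorem secant_line_eq (hF : Fintype.card F = q ^ 2) (hq : 4 < q) (hV : IsQuasiHermitian F q 3 V)
    (hcode : charVec F p (3 + 1) V ∈ hypCode F p (3 + 1)) {ℓ : Submodule F (Fin (3 + 1) → F)}
    (hℓ : finrank F ℓ = 2) :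
    secant F (3 + 1) V ℓ = 1 ∨ secant F (3 + 1) V ℓ = q + 1 ∨
      secant F (3 + 1) V ℓ = q ^ 2 + 1 := by
  by_cases hfull : secant F (3 + 1) V ℓ = q ^ 2 + 1
  · exact .inr (.inr hfull)
  obtain ⟨π, hℓπ, hπ, hsmall⟩ := hV.exists_plane_secant_eq_small hF hℓ hfull
  exact (hV.secant_line_eq_of_le_small_plane hF hq hcode hπ hsmall ℓ
    (mem_lines.2 ⟨hℓπ, hℓ⟩)).imp_right .inl

theorem exists_line_secant_eq_succ (hF : Fintype.card F = q ^ 2) (hq : 4 < q)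
    (hV : IsQuasiHermitian F q 3 V) (hcode : charVec F p (3 + 1) V ∈ hypCode F p (3 + 1))
    {P : ProjPoint F (3 + 1)} (hP : P ∈ V) :
    ∃ ℓ : Submodule F (Fin (3 + 1) → F), finrank F ℓ = 2 ∧ P.1 ≤ ℓ ∧
      secant F (3 + 1) V ℓ = q + 1 := by
  classical
  obtain ⟨m, hm, hPm, hfull⟩ := hV.exists_line_secant_ne_full hF hP
  obtain ⟨π, hmπ, hπ, hsmall⟩ := hV.exists_plane_secant_eq_small hF hm hfull
  have hrank : finrank F π = finrank F P.1 + 2 := by rw [hπ, P.2]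
  by_contra! hnone
  have htangent : ∀ ℓ ∈ pencil P.1 π, secant F (3 + 1) V ℓ = 1 := fun ℓ hℓ => by
    obtain ⟨hPℓ, hmem⟩ := mem_pencil_point.1 hℓ
    exact (hV.secant_line_eq_of_le_small_plane hF hq hcode hπ hsmall ℓ hmem).resolve_right
      (hnone ℓ (mem_lines.1 hmem).2 hPℓ)
  have hsum := sum_pencil_secant V (hPm.trans hmπ) hrank
  rw [Finset.sum_congr rfl htangent, Finset.sum_const, card_pencil (hPm.trans hmπ) hrank,
    secant_point, if_pos hP, hsmall, hF, smul_eq_mul] at hsum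
  have hpos : 0 < q ^ 3 := by positivity
  lia

end Codeword

end IsQuasiHermitian

end QuasiHermitian

/-- in PG(3, q²), every line meets `V` in `1`, `q + 1` or `q² + 1`
points, and every point of `V` lies on a line meeting `V` in exactly `q + 1` points. -/
theorem stmt12 (p h q : ℕ) (hp : p.Prime) (hh : 1 ≤ h) (hq : q = p ^ h) (hq4 : 4 < q)
    (F : Type) [Field F] [Fintype F] (hF : Fintype.card F = q ^ 2)
    (V : Set (ProjPoint F (3 + 1))) (hV : IsQuasiHermitian F q 3 V)
    (hcode : charVec F p (3 + 1) V ∈ hypCode F p (3 + 1)) :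
    (∀ ℓ : Submodule F (Fin (3 + 1) → F), finrank F ℓ = 2 →
      secant F (3 + 1) V ℓ = 1 ∨ secant F (3 + 1) V ℓ = q + 1 ∨
        secant F (3 + 1) V ℓ = q ^ 2 + 1) ∧
    (∀ P ∈ V, ∃ ℓ : Submodule F (Fin (3 + 1) → F), finrank F ℓ = 2 ∧
      P.1 ≤ ℓ ∧ secant F (3 + 1) V ℓ = q + 1) := by
  have : CharP F p := by
    have := Fact.mk hp
    exact charP_of_card_eq_prime_pow (hF.trans (by rw [hq, ← pow_mul]))
  exact ⟨fun _ hℓ => hV.secant_line_eq hF hq4 hcode hℓ,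
    fun _ hP => hV.exists_line_secant_eq_succ hF hq4 hcode hP⟩
end

section
/- Let r ≥ 4 and let p > 4 be prime, and let V be a quasi-Hermitian variety of PG(r,p^2) whose characteristic vector v^V belongs to C_p. If π is a plane of PG(r,p^2) not contained in V, then either |π ∩ V| = p^2 + 1 or |π ∩ V| ≥ p^3 + 1. -/
/-!
Common framework: `ProjPoint F n` is the set of points of the projective space
PG(n-1, |F|) (so PG(r, q²) corresponds to `n = r + 1` and `Fintype.card F = q ^ 2`).
Projective subspaces of projective dimension `k` are the submodules of `Fin n → F`
of `finrank` equal to `k + 1`; lines have finrank 2, planes finrank 3 and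
hyperplanes finrank `n - 1 = r`.
-/

open Module Matrix

/-!
Call a set of points of a projective space a one-mod set if it and all its hyperplane sections
have `1` mod `q` points. All one-mod sets have the same scalar product with a hyperplane, hence
with every word of the code. The whole space is one of them, so a codeword `V` of size `1` mod `q`
meets every one-mod set in `1` mod `q` points, in particular every one-mod set of a plane `π`. The
latter include the lines of `π`, the set `B = V ∩ π` itself, and all images of `B` under
collineations.

Writing `s` for the number of points of `B` on a line, the sum of `(s - 1) * (s - q - 1)` over all
lines is nonnegative and equals `(|B| - q² - q - 1) * (|B| - q³ - 1)`. Together with `|B| > q²`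
this leaves only `q² + 1`, at least `q³ + 1`, or `q² + q + 1` with all `s` in `{1, q + 1}`.

The last case, a Baer subplane, is excluded by the `q² - 1` homologies `g` whose axis is a secant
of `B` and whose centre is a point of `B` off it. Each `|B ∩ g⁻¹B|` is `1` mod `q` and at least
`q + 2`, hence at least `2q + 1`, and for `g = 1` it is larger. But a point of `B` not fixed by the
homologies is sent into `B` by at most `q - 1` of them, so the average of `|B ∩ g⁻¹B|` is at most
`2q + 1`.
-/

theorem exists_eq_mul_add_one_of_modEq_one {q n : ℕ} (hq : 1 < q) (hn : n ≡ 1 [MOD q]) :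
    ∃ k, n = k * q + 1 := by
  refine ⟨n / q, ?_⟩
  conv_lhs => rw [← Nat.div_add_mod' n q, hn, Nat.mod_eq_of_lt hq]

theorem sub_one_mul_sub_nonneg_of_modEq_one {q n : ℕ} (hq : 1 < q) (hn : n ≡ 1 [MOD q]) :
    0 ≤ ((n : ℤ) - 1) * (n - (q + 1)) := by
  obtain ⟨k, rfl⟩ := exists_eq_mul_add_one_of_modEq_one hq hn
  have hfactor : (((k * q + 1 : ℕ) : ℤ) - 1) * ((k * q + 1 : ℕ) - (q + 1)) =
      q ^ 2 * (k * (k - 1)) := by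
    push_cast
    ring
  rw [hfactor]
  rcases k.eq_zero_or_pos with rfl | hk
  · simp
  · have : (0 : ℤ) ≤ k - 1 := by lia
    positivity

section LineSections

open Configuration Configuration.ProjectivePlane Finset

variable {P L : Type*} [Membership P L]

open Classical in
/-- The points of `B` lying on the line `l`. -/
noncomputable def lineSection (B : Finset P) (l : L) : Finset P := {x ∈ B | x ∈ l}

@[simp]
theorem mem_lineSection {B : Finset P} {l : L} {x : P} :
    x ∈ lineSection B l ↔ x ∈ B ∧ x ∈ l := by
  simp [lineSection]

variable (L) in
/-- A set of points of a projective plane with line set `L` that has the size and the line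
intersection numbers of a subplane of order `q`. For a plane of order `q ^ 2` these are the Baer
subplanes. -/
structure IsBaerSet (q : ℕ) (B : Finset P) : Prop where
  card_eq : #B = q ^ 2 + q + 1
  card_lineSection (l : L) : #(lineSection B l) = 1 ∨ #(lineSection B l) = q + 1

theorem IsBaerSet.card_lineSection_of_mem {q : ℕ} {B : Finset P} (hB : IsBaerSet L q B)
    {x y : P} {l : L} (hxy : x ≠ y) (hx : x ∈ lineSection B l) (hy : y ∈ lineSection B l) :
    #(lineSection B l) = q + 1 :=
  (hB.card_lineSection l).resolve_left (one_lt_card.2 ⟨x, hx, y, hy, hxy⟩).ne'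

section HasLines

variable [Fintype L] [HasLines P L]

open Classical in
theorem card_lines_through_pair {x y : P} (hxy : x ≠ y) : #{l : L | x ∈ l ∧ y ∈ l} = 1 := by
  obtain ⟨l, hl, hunique⟩ := HasLines.existsUnique_line P L x y hxy
  exact card_eq_one.2 ⟨l, by ext m; simpa using ⟨hunique m, fun h => h ▸ hl⟩⟩

open Classical in
theorem sum_card_offDiag_lineSection (B : Finset P) :
    ∑ l : L, #(lineSection B l).offDiag = #B.offDiag := by
  have hfilter (l : L) :
      (lineSection B l).offDiag = {z ∈ B.offDiag | z.1 ∈ l ∧ z.2 ∈ l} := by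
    ext z
    simp only [mem_offDiag, mem_lineSection, mem_filter]
    tauto
  simp only [hfilter]
  refine (sum_card_bipartiteAbove_eq_sum_card_bipartiteBelow
    fun (l : L) (z : P × P) => z.1 ∈ l ∧ z.2 ∈ l).trans ?_
  rw [card_eq_sum_ones]
  exact sum_congr rfl fun z hz => card_lines_through_pair (mem_offDiag.1 hz).2.2

open Classical in
theorem sum_card_lineSection_through {B : Finset P} {x : P} (hx : x ∉ B) :
    ∑ l : L with x ∈ l, #(lineSection B l) = #B := by
  refine (sum_card_bipartiteAbove_eq_sum_card_bipartiteBelow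
    fun (l : L) (y : P) => y ∈ l).trans ?_
  rw [card_eq_sum_ones]
  refine sum_congr rfl fun y hy => ?_
  rw [bipartiteBelow, filter_filter]
  exact card_lines_through_pair (ne_of_mem_of_not_mem hy hx).symm

end HasLines

section FintypeLines

variable [Finite P] [Fintype L] [ProjectivePlane P L]

open Classical in
theorem card_lines_through (x : P) : #{l : L | x ∈ l} = order P L + 1 := by
  rw [← lineCount_eq L x, lineCount, Nat.card_eq_fintype_card, Fintype.card_subtype]

theorem sum_card_lineSection (B : Finset P) :
    ∑ l : L, #(lineSection B l) = #B * (order P L + 1) := by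
  classical
  exact (sum_card_bipartiteAbove_eq_sum_card_bipartiteBelow fun (l : L) (x : P) => x ∈ l).trans
    (sum_const_nat fun x _ => card_lines_through x)

theorem sum_card_lineSection_mul_self (B : Finset P) :
    ∑ l : L, #(lineSection B l) * #(lineSection B l) = #B * (#B + order P L) := by
  classical
  have hdiag (A : Finset P) : #A * #A = #A.offDiag + #A := by
    rw [offDiag_card, Nat.sub_add_cancel (Nat.le_mul_self _)]
  simp only [hdiag, sum_add_distrib, sum_card_offDiag_lineSection, sum_card_lineSection, mul_add,
    mul_one]
  ring

theorem sum_card_lineSection_sub_mul_sub {q : ℕ} (hq : order P L = q ^ 2) (B : Finset P) :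
    ∑ l : L, ((#(lineSection B l) : ℤ) - 1) * (#(lineSection B l) - (q + 1)) =
      (#B - (q ^ 2 + q + 1)) * (#B - (q ^ 3 + 1)) := by
  have hsum : ∑ l : L, (#(lineSection B l) : ℤ) = #B * (q ^ 2 + 1) := by
    exact_mod_cast hq ▸ sum_card_lineSection (L := L) B
  have hsum_sq : ∑ l : L, (#(lineSection B l) : ℤ) * #(lineSection B l) = #B * (#B + q ^ 2) := by
    exact_mod_cast hq ▸ sum_card_lineSection_mul_self (L := L) B
  have hlines : (Fintype.card L : ℤ) = (q ^ 2) ^ 2 + q ^ 2 + 1 := by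
    exact_mod_cast hq ▸ card_lines P L
  have hexpand (s : ℤ) : (s - 1) * (s - (q + 1)) = s * s - (q + 2) * s + (q + 1) := by ring
  simp only [hexpand, sum_add_distrib, sum_sub_distrib, ← mul_sum, hsum, hsum_sq, sum_const,
    card_univ, nsmul_eq_mul, hlines]
  ring

end FintypeLines

section FiniteLines

variable [Finite P] [Finite L] [ProjectivePlane P L] {q : ℕ} {B : Finset P}

theorem order_lt_card_of_forall_lineSection_nonempty
    (hB : ∀ l : L, (lineSection B l).Nonempty) : order P L < #B := by
  classical
  cases nonempty_fintype P
  cases nonempty_fintype L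
  by_cases huniv : B = univ
  · rw [huniv, card_univ, card_points P L]
    lia
  · obtain ⟨x, hx⟩ : ∃ x, x ∉ B := by simpa [eq_univ_iff_forall] using huniv
    calc order P L < #{l : L | x ∈ l} := by rw [card_lines_through]; lia
      _ ≤ ∑ l : L with x ∈ l, #(lineSection B l) := by
        rw [card_eq_sum_ones]
        exact sum_le_sum fun l _ => (hB l).card_pos
      _ = #B := sum_card_lineSection_through hx

theorem one_lt_of_order_eq_sq (hq : order P L = q ^ 2) : 1 < q := by
  have := one_lt_order P L
  rw [hq] at this
  exact (Nat.one_lt_pow_iff two_ne_zero).1 this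

theorem card_le_or_le_card_of_lineSection_modEq_one (hq : order P L = q ^ 2)
    (hB : ∀ l : L, #(lineSection B l) ≡ 1 [MOD q]) :
    #B ≤ q ^ 2 + q + 1 ∨ q ^ 3 + 1 ≤ #B := by
  cases nonempty_fintype L
  have hnonneg := sum_card_lineSection_sub_mul_sub hq B ▸ sum_nonneg fun l _ =>
    sub_one_mul_sub_nonneg_of_modEq_one (one_lt_of_order_eq_sq hq) (hB l)
  by_contra! h
  have hgt : (q ^ 2 + q + 1 : ℤ) < #B := by exact_mod_cast h.1
  have hlt : (#B : ℤ) < q ^ 3 + 1 := by exact_mod_cast h.2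
  exact hnonneg.not_gt (mul_neg_of_pos_of_neg (sub_pos.2 hgt) (sub_neg.2 hlt))

theorem isBaerSet_of_card_eq (hq : order P L = q ^ 2)
    (hB : ∀ l : L, #(lineSection B l) ≡ 1 [MOD q]) (hcard : #B = q ^ 2 + q + 1) :
    IsBaerSet L q B := by
  cases nonempty_fintype L
  refine ⟨hcard, fun l => ?_⟩
  have hsum := sum_card_lineSection_sub_mul_sub hq B
  rw [hcard] at hsum
  push_cast at hsum
  rw [sub_self, zero_mul] at hsum
  have hzero := (sum_eq_zero_iff_of_nonneg fun l _ =>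
    sub_one_mul_sub_nonneg_of_modEq_one (one_lt_of_order_eq_sq hq) (hB l)).1 hsum l (mem_univ l)
  rcases mul_eq_zero.1 hzero with h | h
  · exact .inl (by lia)
  · exact .inr (by lia)

theorem card_eq_or_le_or_isBaerSet (hq : order P L = q ^ 2)
    (hB : ∀ l : L, #(lineSection B l) ≡ 1 [MOD q]) (hcard : #B ≡ 1 [MOD q]) :
    #B = q ^ 2 + 1 ∨ q ^ 3 + 1 ≤ #B ∨ IsBaerSet L q B := by
  have hq1 : 1 < q := one_lt_of_order_eq_sq hq
  rcases card_le_or_le_card_of_lineSection_modEq_one hq hB with hle | hge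
  · have hlower : q ^ 2 < #B := hq ▸ order_lt_card_of_forall_lineSection_nonempty fun l =>
      let ⟨k, hk⟩ := exists_eq_mul_add_one_of_modEq_one hq1 (hB l)
      card_pos.1 (by lia)
    obtain ⟨k, hk⟩ := exists_eq_mul_add_one_of_modEq_one hq1 hcard
    have hk_ge : q ≤ k := by nlinarith
    have hk_le : k ≤ q + 1 := by nlinarith
    obtain rfl | rfl : k = q ∨ k = q + 1 := by lia
    · exact .inl (by rw [hk, sq])
    · exact .inr (.inr (isBaerSet_of_card_eq hq hB (by rw [hk]; ring)))
  · exact .inr (.inl hge)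

-- Two secants through a point off `B` would force more than `#B` points of `B` on the lines through
-- that point.
theorem IsBaerSet.mem_of_mem_secants (hB : IsBaerSet L q B) (hq : order P L = q ^ 2) {l m : L}
    (hlm : l ≠ m) (hl : #(lineSection B l) = q + 1) (hm : #(lineSection B m) = q + 1)
    {x : P} (hxl : x ∈ l) (hxm : x ∈ m) : x ∈ B := by
  classical
  cases nonempty_fintype L
  by_contra hx
  have hq1 : 1 < q := one_lt_of_order_eq_sq hq
  have hsum : ∑ k : L with x ∈ k, (1 + ((if k = l then q else 0) + if k = m then q else 0)) ≤
      ∑ k : L with x ∈ k, #(lineSection B k) := by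
    refine sum_le_sum fun k _ => ?_
    rcases hB.card_lineSection k with hk | hk <;> grind
  rw [sum_card_lineSection_through hx, hB.card_eq, sum_add_distrib, sum_add_distrib,
    ← card_eq_sum_ones, card_lines_through, hq] at hsum
  simp only [sum_ite_eq', mem_filter, mem_univ, true_and, hxl, hxm, if_true] at hsum
  lia

end FiniteLines

section Homologies

variable {T : Type*} {g : T → P → P} {C : P} {l : L} {q : ℕ} {B : Finset P}

/-- A family of injective self-maps of a projective plane that behaves like a family of distinct
homologies with centre `C` and axis `l`: every map fixes the axis pointwise, fixes the centre and
every line through it, and distinct maps move a point off the axis and centre to distinct points. -/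
structure IsHomologyFamily (g : T → P → P) (C : P) (l : L) : Prop where
  injective (t : T) : Function.Injective (g t)
  map_axis (t : T) {x : P} (hx : x ∈ l) : g t x = x
  map_center (t : T) : g t C = C
  map_mem (t : T) {m : L} (hC : C ∈ m) {x : P} (hx : x ∈ m) : g t x ∈ m
  semiregular {x : P} (hx : x ∉ l) (hC : x ≠ C) : Function.Injective (g · x)

theorem IsHomologyFamily.map_notMem_axis (hg : IsHomologyFamily g C l) (t : T) {x : P}
    (hx : x ∉ l) : g t x ∉ l := fun h =>
  hx (hg.injective t (hg.map_axis t h) ▸ h)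

theorem IsHomologyFamily.map_ne_center (hg : IsHomologyFamily g C l) (t : T) {x : P}
    (hx : x ≠ C) : g t x ≠ C := fun h =>
  hx (hg.injective t (h.trans (hg.map_center t).symm))

open Classical in
theorem IsHomologyFamily.add_two_le_card_filter_map_mem (hg : IsHomologyFamily g C l)
    (hl : #(lineSection B l) = q + 1) (hCB : C ∈ B) (hCl : C ∉ l) (t : T) :
    q + 2 ≤ #{x ∈ B | g t x ∈ B} := by
  have hfixed : insert C (lineSection B l) ⊆ {x ∈ B | g t x ∈ B} := by
    refine insert_subset (by simp [hg.map_center, hCB]) fun x hx => ?_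
    obtain ⟨hxB, hxl⟩ := mem_lineSection.1 hx
    simp [hg.map_axis t hxl, hxB]
  have hcard : #(insert C (lineSection B l)) = q + 2 := by
    rw [card_insert_of_notMem (by simp [hCl]), hl]
  exact hcard ▸ card_le_card hfixed

section Semiregular

variable [Fintype T] [Finite P] [Finite L] [ProjectivePlane P L]

open Classical in
theorem IsHomologyFamily.card_filter_map_mem_le (hg : IsHomologyFamily g C l)
    (hB : IsBaerSet L q B) (hq : order P L = q ^ 2) (hl : #(lineSection B l) = q + 1)
    (hCB : C ∈ B) (hCl : C ∉ l) {x : P} (hxB : x ∈ B) (hxl : x ∉ l) (hxC : x ≠ C) :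
    #{t | g t x ∈ B} ≤ q - 1 := by
  obtain ⟨m, ⟨hxm, hCm⟩, -⟩ := HasLines.existsUnique_line P L x C hxC
  have hlm : l ≠ m := fun h => hCl (h ▸ hCm)
  have hm : #(lineSection B m) = q + 1 := hB.card_lineSection_of_mem hxC
    (mem_lineSection.2 ⟨hxB, hxm⟩) (mem_lineSection.2 ⟨hCB, hCm⟩)
  obtain ⟨D, ⟨hDl, hDm⟩, -⟩ := HasPoints.existsUnique_point P L l m hlm
  have hDB : D ∈ B := hB.mem_of_mem_secants hq hlm hl hm hDl hDm
  have hDC : D ≠ C := fun h => hCl (h ▸ hDl)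
  calc #{t | g t x ∈ B} ≤ #(((lineSection B m).erase C).erase D) := by
        refine card_le_card_of_injOn (g · x) (fun t ht => ?_) (hg.semiregular hxl hxC).injOn
        have hgD : g t x ≠ D := fun h => hg.map_notMem_axis t hxl (h ▸ hDl)
        simpa [hgD, hg.map_ne_center t hxC, hg.map_mem t hCm hxm] using ht
    _ = q - 1 := by
        rw [card_erase_of_mem (by simp [hDC, hDB, hDm]), card_erase_of_mem (by simp [hCB, hCm]), hm]
        rfl

open Classical in
theorem IsHomologyFamily.sum_card_filter_map_mem_le (hg : IsHomologyFamily g C l)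
    (hB : IsBaerSet L q B) (hq : order P L = q ^ 2) (hl : #(lineSection B l) = q + 1)
    (hCB : C ∈ B) (hCl : C ∉ l) :
    ∑ t, #{x ∈ B | g t x ∈ B} ≤ (q + 2) * Fintype.card T + (q ^ 2 - 1) * (q - 1) := by
  have hfixed : insert C (lineSection B l) ⊆ B :=
    insert_subset hCB fun x hx => (mem_lineSection.1 hx).1
  have hcard_fixed : #(insert C (lineSection B l)) = q + 2 := by
    rw [card_insert_of_notMem (by simp [hCl]), hl]
  calc ∑ t, #{x ∈ B | g t x ∈ B} = ∑ x ∈ B, #{t | g t x ∈ B} :=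
        sum_card_bipartiteAbove_eq_sum_card_bipartiteBelow fun t x => g t x ∈ B
    _ = ∑ x ∈ insert C (lineSection B l), #{t | g t x ∈ B} +
          ∑ x ∈ B \ insert C (lineSection B l), #{t | g t x ∈ B} := by
        rw [add_comm, sum_sdiff hfixed]
    _ ≤ (q + 2) * Fintype.card T + (q ^ 2 - 1) * (q - 1) := by
        refine Nat.add_le_add ?_ ?_
        · rw [← hcard_fixed, ← smul_eq_mul]
          exact sum_le_card_nsmul _ _ _ fun x _ => card_le_univ _
        · have hcard_moved : #(B \ insert C (lineSection B l)) = q ^ 2 - 1 := by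
            rw [card_sdiff_of_subset hfixed, hB.card_eq, hcard_fixed]
            lia
          rw [← hcard_moved, ← smul_eq_mul]
          refine sum_le_card_nsmul _ _ _ fun x hx => ?_
          simp only [mem_sdiff, mem_insert, mem_lineSection, not_or, not_and] at hx
          exact hg.card_filter_map_mem_le hB hq hl hCB hCl hx.1 (hx.2.2 hx.1) hx.2.1

open Classical in
theorem IsHomologyFamily.exists_not_card_filter_map_mem_modEq_one (hg : IsHomologyFamily g C l)
    (hB : IsBaerSet L q B) (hq : order P L = q ^ 2) (hl : #(lineSection B l) = q + 1)
    (hCB : C ∈ B) (hCl : C ∉ l) (hT : Fintype.card T = q ^ 2 - 1) {t₀ : T} (ht₀ : g t₀ = id) :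
    ∃ t, ¬ #{x ∈ B | g t x ∈ B} ≡ 1 [MOD q] := by
  by_contra! hmod
  have hq1 : 1 < q := one_lt_of_order_eq_sq hq
  have hlower (t : T) : 2 * q + 1 ≤ #{x ∈ B | g t x ∈ B} := by
    have htwo := hg.add_two_le_card_filter_map_mem hl hCB hCl t
    obtain ⟨k, hk⟩ := exists_eq_mul_add_one_of_modEq_one hq1 (hmod t)
    have hk2 : 2 ≤ k := by nlinarith
    nlinarith
  have hid : 2 * q + 1 < #{x ∈ B | g t₀ x ∈ B} := by
    simp only [ht₀, id_eq, filter_mem_eq_inter, inter_self, hB.card_eq]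
    nlinarith
  have hsum : Fintype.card T * (2 * q + 1) < ∑ t, #{x ∈ B | g t x ∈ B} := by
    rw [← smul_eq_mul, ← card_univ, ← sum_const]
    exact sum_lt_sum (fun t _ => hlower t) ⟨t₀, mem_univ _, hid⟩
  have hupper := hg.sum_card_filter_map_mem_le hB hq hl hCB hCl
  obtain ⟨k, rfl⟩ : ∃ k, q = k + 1 := ⟨q - 1, by lia⟩
  rw [hT] at hsum hupper
  rw [Nat.add_sub_cancel] at hupper
  nlinarith

end Semiregular

theorem IsBaerSet.exists_secant_and_mem_notMem [HasLines P L] (hB : IsBaerSet L q B)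
    (hq : q ≠ 0) : ∃ l : L, #(lineSection B l) = q + 1 ∧ ∃ C ∈ B, C ∉ l := by
  obtain ⟨x, hx, y, hy, hxy⟩ := one_lt_card.1 (show 1 < #B by rw [hB.card_eq]; lia)
  obtain ⟨l, ⟨hxl, hyl⟩, -⟩ := HasLines.existsUnique_line P L x y hxy
  have hl : #(lineSection B l) = q + 1 := hB.card_lineSection_of_mem hxy
    (mem_lineSection.2 ⟨hx, hxl⟩) (mem_lineSection.2 ⟨hy, hyl⟩)
  have hlt : #(lineSection B l) < #B := by
    rw [hl, hB.card_eq]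
    have := Nat.pos_of_ne_zero hq
    nlinarith
  obtain ⟨C, hCB, hC⟩ := exists_mem_notMem_of_card_lt_card hlt
  exact ⟨l, hl, C, hCB, fun h => hC (mem_lineSection.2 ⟨hCB, h⟩)⟩

end Homologies

end LineSections

section OneModSets

open scoped LinearAlgebra.Projectivization

variable {F E E' : Type*} [Field F] [AddCommGroup E] [Module F E] [AddCommGroup E'] [Module F E']
  {q : ℕ}

/-- The points of the projective space `ℙ F E` lying in the subspace `W`. -/
def subspacePoints (W : Submodule F E) : Set (ℙ F E) := {x | x.submodule ≤ W}

theorem mem_subspacePoints {W : Submodule F E} {x : ℙ F E} :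
    x ∈ subspacePoints W ↔ x.submodule ≤ W :=
  Iff.rfl

theorem mk_mem_subspacePoints {W : Submodule F E} {v : E} {hv : v ≠ 0} :
    Projectivization.mk F v hv ∈ subspacePoints W ↔ v ∈ W := by
  rw [mem_subspacePoints, Projectivization.submodule_mk, Submodule.span_singleton_le_iff_mem]

theorem subspacePoints_top : subspacePoints (⊤ : Submodule F E) = Set.univ :=
  Set.eq_univ_of_forall fun _ => le_top (α := Submodule F E)

theorem subspacePoints_inter (W W' : Submodule F E) :
    subspacePoints W ∩ subspacePoints W' = subspacePoints (W ⊓ W') :=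
  Set.ext fun _ => (le_inf_iff (α := Submodule F E)).symm

theorem preimage_projectivization_map_subspacePoints (f : E →ₗ[F] E') (hf : Function.Injective f)
    (W : Submodule F E') :
    Projectivization.map f hf ⁻¹' subspacePoints W = subspacePoints (W.comap f) := by
  ext x
  induction x using Projectivization.ind with
  | h v hv => simp [Projectivization.map_mk, mk_mem_subspacePoints]

theorem range_projectivization_map (f : E →ₗ[F] E') (hf : Function.Injective f) :
    Set.range (Projectivization.map f hf) = subspacePoints (LinearMap.range f) := by
  ext x
  induction x using Projectivization.ind with
  | h w hw =>
    rw [mk_mem_subspacePoints]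
    constructor
    · rintro ⟨x, hx⟩
      rw [← mk_mem_subspacePoints (hv := hw), ← hx, ← Set.mem_preimage,
        preimage_projectivization_map_subspacePoints, LinearMap.range_le_iff_comap.1 le_rfl]
      exact le_top (α := Submodule F E)
    · rintro ⟨v, rfl⟩
      exact ⟨Projectivization.mk F v fun h => hw (by rw [h, map_zero]),
        Projectivization.map_mk f hf v _⟩

theorem ncard_preimage_projectivization_map (f : E →ₗ[F] E') (hf : Function.Injective f)
    (B : Set (ℙ F E')) :
    (Projectivization.map f hf ⁻¹' B).ncard =
      (B ∩ subspacePoints (LinearMap.range f)).ncard := by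
  rw [← range_projectivization_map f hf, ← Set.preimage_inter_range]
  exact Set.ncard_preimage_of_injective_subset_range (Projectivization.map_injective f hf)
    Set.inter_subset_right

theorem ncard_subspacePoints_modEq_one [Finite F] [FiniteDimensional F E] (hq : q ∣ Nat.card F)
    {W : Submodule F E} (hW : 0 < finrank F W) : (subspacePoints W).ncard ≡ 1 [MOD q] := by
  have hcard : (subspacePoints W).ncard = ∑ i ∈ Finset.range (finrank F W), Nat.card F ^ i := by
    have h := ncard_preimage_projectivization_map W.subtype W.injective_subtype Set.univ
    rwa [Set.univ_inter, Submodule.range_subtype, Set.preimage_univ, Set.ncard_univ,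
      Projectivization.card_of_finrank F W rfl, eq_comm] at h
  obtain ⟨k, hk⟩ := Nat.exists_eq_add_one_of_ne_zero hW.ne'
  rw [hcard, hk, Finset.sum_range_succ', pow_zero]
  refine Nat.ModEq.add_right 1 ((Nat.modEq_zero_iff_dvd).2 ?_)
  exact Finset.dvd_sum fun i _ => hq.trans (dvd_pow_self _ i.succ_ne_zero)

theorem finrank_le_finrank_ker_add_one [FiniteDimensional F E] (φ : Dual F E) :
    finrank F E ≤ finrank F (LinearMap.ker φ) + 1 := by
  rw [← LinearMap.finrank_range_add_finrank_ker φ, add_comm]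
  simpa using (LinearMap.range φ).finrank_le

/-- `S` has `1` mod `q` points and meets every hyperplane in `1` mod `q` points; the former is the
case `φ = 0`. -/
def IsOneModSet (q : ℕ) (S : Set (ℙ F E)) : Prop :=
  ∀ φ : Dual F E, (S ∩ subspacePoints (LinearMap.ker φ)).ncard ≡ 1 [MOD q]

/-- `B` meets every set satisfying `IsOneModSet q` in `1` mod `q` points. Unlike `IsOneModSet` this
passes to the sections of `B` by subspaces. -/
def MeetsOneModSets (q : ℕ) (B : Set (ℙ F E)) : Prop :=
  ∀ S : Set (ℙ F E), IsOneModSet q S → (S ∩ B).ncard ≡ 1 [MOD q]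

theorem IsOneModSet.ncard_modEq_one {S : Set (ℙ F E)} (hS : IsOneModSet q S) :
    S.ncard ≡ 1 [MOD q] := by
  simpa [subspacePoints_top] using hS 0

theorem isOneModSet_subspacePoints [Finite F] [FiniteDimensional F E] (hq : q ∣ Nat.card F)
    {W : Submodule F E} (hW : 2 ≤ finrank F W) : IsOneModSet q (subspacePoints W) := by
  intro φ
  rw [subspacePoints_inter]
  apply ncard_subspacePoints_modEq_one hq
  have := finrank_le_finrank_ker_add_one φ
  have := Submodule.finrank_sup_add_finrank_inf_eq W (LinearMap.ker φ)
  have := (W ⊔ LinearMap.ker φ).finrank_le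
  lia

theorem IsOneModSet.image_map {S : Set (ℙ F E)} (hS : IsOneModSet q S) (f : E →ₗ[F] E')
    (hf : Function.Injective f) : IsOneModSet q (Projectivization.map f hf '' S) := by
  intro φ
  rw [← Set.image_inter_preimage, preimage_projectivization_map_subspacePoints,
    ← LinearMap.ker_comp, Set.ncard_image_of_injective _ (Projectivization.map_injective f hf)]
  exact hS (φ ∘ₗ f)

theorem MeetsOneModSets.preimage_map {B : Set (ℙ F E')} (hB : MeetsOneModSets q B)
    (f : E →ₗ[F] E') (hf : Function.Injective f) :
    MeetsOneModSets q (Projectivization.map f hf ⁻¹' B) := by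
  intro S hS
  rw [← Set.ncard_image_of_injective _ (Projectivization.map_injective f hf),
    Set.image_inter_preimage]
  exact hB _ (hS.image_map f hf)

theorem MeetsOneModSets.isOneModSet [Finite F] [FiniteDimensional F E] (hq : q ∣ Nat.card F)
    (hE : 3 ≤ finrank F E) {B : Set (ℙ F E)} (hB : MeetsOneModSets q B) : IsOneModSet q B := by
  intro φ
  rw [Set.inter_comm]
  refine hB _ (isOneModSet_subspacePoints hq ?_)
  have := finrank_le_finrank_ker_add_one φ
  lia

end OneModSets

section LinearHomologies

open scoped LinearAlgebra.Projectivization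

variable {F E : Type*} [Field F] [AddCommGroup E] [Module F E] {φ : Dual F E} {C : ℙ F E}

/-- The homology with axis `ker φ`, centre `C` and ratio `t`, normalised by `φ C.rep = 1`: it is the
identity on `ker φ` and multiplication by `t` on `C`. -/
noncomputable def linearHomology (h : φ C.rep = 1) (t : Fˣ) : E ≃ₗ[F] E :=
  LinearEquiv.dilatransvection (f := φ) (v := ((t : F) - 1) • C.rep) (by simp [h])

/-- The action of `linearHomology` on the points of `ℙ F E`. -/
noncomputable def homology (h : φ C.rep = 1) (t : Fˣ) : ℙ F E → ℙ F E :=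
  Projectivization.map (linearHomology h t).toLinearMap (linearHomology h t).injective

theorem linearHomology_apply (h : φ C.rep = 1) (t : Fˣ) (v : E) :
    linearHomology h t v = v + (φ v * (t - 1)) • C.rep := by
  simp [linearHomology, LinearEquiv.dilatransvection.apply, mul_smul]

theorem apply_linearHomology (h : φ C.rep = 1) (t : Fˣ) (v : E) :
    φ (linearHomology h t v) = t * φ v := by
  rw [linearHomology_apply, map_add, map_smul, h, smul_eq_mul]
  ring

theorem homology_mk (h : φ C.rep = 1) (t : Fˣ) {v : E} (hv : v ≠ 0) :
    homology h t (Projectivization.mk F v hv) =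
      Projectivization.mk F (linearHomology h t v) ((linearHomology h t).map_ne_zero_iff.2 hv) :=
  rfl

theorem homology_injective (h : φ C.rep = 1) (t : Fˣ) : Function.Injective (homology h t) :=
  Projectivization.map_injective _ _

theorem homology_one (h : φ C.rep = 1) : homology h 1 = id := by
  ext x
  induction x using Projectivization.ind with
  | h v hv => simp [homology_mk, linearHomology_apply]

theorem homology_eq_self (h : φ C.rep = 1) (t : Fˣ) {x : ℙ F E}
    (hx : x ∈ subspacePoints (LinearMap.ker φ)) : homology h t x = x := by
  induction x using Projectivization.ind with
  | h v hv =>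
    rw [mk_mem_subspacePoints, LinearMap.mem_ker] at hx
    simp [homology_mk, linearHomology_apply, hx]

theorem homology_center (h : φ C.rep = 1) (t : Fˣ) : homology h t C = C := by
  suffices homology h t (Projectivization.mk F C.rep C.rep_nonzero) =
      Projectivization.mk F C.rep C.rep_nonzero by rwa [C.mk_rep] at this
  rw [homology_mk, Projectivization.mk_eq_mk_iff']
  refine ⟨t, ?_⟩
  rw [linearHomology_apply, h, one_mul, sub_smul, one_smul, add_sub_cancel]

theorem homology_mem_subspacePoints (h : φ C.rep = 1) (t : Fˣ) {W : Submodule F E}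
    (hC : C ∈ subspacePoints W) {x : ℙ F E} (hx : x ∈ subspacePoints W) :
    homology h t x ∈ subspacePoints W := by
  rw [← C.mk_rep, mk_mem_subspacePoints] at hC
  induction x using Projectivization.ind with
  | h v hv =>
    rw [mk_mem_subspacePoints] at hx
    rw [homology_mk, mk_mem_subspacePoints, linearHomology_apply]
    exact W.add_mem hx (W.smul_mem _ hC)

theorem homology_semiregular (h : φ C.rep = 1) {x : ℙ F E}
    (hx : x ∉ subspacePoints (LinearMap.ker φ)) (hxC : x ≠ C) :
    Function.Injective (homology h · x) := by
  induction x using Projectivization.ind with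
  | h v hv =>
    rw [mk_mem_subspacePoints, LinearMap.mem_ker] at hx
    intro s t hst
    obtain ⟨a, ha⟩ : ∃ a : F, a • linearHomology h t v = linearHomology h s v :=
      (Projectivization.mk_eq_mk_iff' ..).1 hst
    have has : a * t = s := by
      have hφ := congrArg φ ha
      rw [map_smul, apply_linearHomology, apply_linearHomology, smul_eq_mul, ← mul_assoc] at hφ
      exact mul_right_cancel₀ hx hφ
    have hsmul : (a - 1) • (v - φ v • C.rep) = 0 := by
      rw [linearHomology_apply, linearHomology_apply, ← has, ← sub_eq_zero] at ha
      rw [← ha]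
      module
    have hv_ne : v - φ v • C.rep ≠ 0 := by
      refine fun hzero => hxC ?_
      rw [← C.mk_rep, Projectivization.mk_eq_mk_iff']
      exact ⟨φ v, (sub_eq_zero.1 hzero).symm⟩
    have ha1 : a = 1 := sub_eq_zero.1 ((smul_eq_zero.1 hsmul).resolve_right hv_ne)
    exact Units.ext (by rw [← has, ha1, one_mul])

end LinearHomologies

section Plane

open Configuration Configuration.ProjectivePlane
open scoped LinearAlgebra.Projectivization

variable {F : Type*} [Field F] {q : ℕ}

theorem mem_iff_mem_subspacePoints_ker {x l : ℙ F (Fin 3 → F)} :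
    x ∈ l ↔ x ∈ subspacePoints (LinearMap.ker (dotProductEquiv F (Fin 3) l.rep)) := by
  conv_lhs => rw [← x.mk_rep, ← l.mk_rep]
  rw [ofField.mem_iff, Projectivization.orthogonal_mk, dotProduct_comm, ← x.mk_rep,
    mk_mem_subspacePoints, LinearMap.mem_ker, dotProductEquiv_apply_apply, x.mk_rep]

theorem coe_lineSection (B : Finset (ℙ F (Fin 3 → F))) (l : ℙ F (Fin 3 → F)) :
    (lineSection B l : Set (ℙ F (Fin 3 → F))) =
      ↑B ∩ subspacePoints (LinearMap.ker (dotProductEquiv F (Fin 3) l.rep)) := by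
  ext x
  simp [mem_iff_mem_subspacePoints_ker]

theorem exists_dual_eq_one_of_notMem {C l : ℙ F (Fin 3 → F)} (hC : C ∉ l) :
    ∃ φ : Dual F (Fin 3 → F), φ C.rep = 1 ∧ ∀ x, x ∈ l ↔ x ∈ subspacePoints (LinearMap.ker φ) := by
  set ψ := dotProductEquiv F (Fin 3) l.rep
  have hψ : ψ C.rep ≠ 0 := by
    rwa [mem_iff_mem_subspacePoints_ker, ← C.mk_rep, mk_mem_subspacePoints] at hC
  refine ⟨(ψ C.rep)⁻¹ • ψ, inv_mul_cancel₀ hψ, fun x => ?_⟩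
  rw [mem_iff_mem_subspacePoints_ker, LinearMap.ker_smul _ _ (inv_ne_zero hψ)]

theorem isHomologyFamily_homology {φ : Dual F (Fin 3 → F)} {C l : ℙ F (Fin 3 → F)}
    (hφ : φ C.rep = 1) (hl : ∀ x, x ∈ l ↔ x ∈ subspacePoints (LinearMap.ker φ)) :
    IsHomologyFamily (homology hφ) C l where
  injective := homology_injective hφ
  map_axis t _ hx := homology_eq_self hφ t ((hl _).1 hx)
  map_center := homology_center hφ
  map_mem t _ hC _ hx := by
    rw [mem_iff_mem_subspacePoints_ker] at hC hx ⊢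
    exact homology_mem_subspacePoints hφ t hC hx
  semiregular hx hC := homology_semiregular hφ (mt (hl _).2 hx) hC

variable [Finite F]

theorem order_eq_card [DecidableEq F] : order (ℙ F (Fin 3 → F)) (ℙ F (Fin 3 → F)) = Nat.card F := by
  cases nonempty_fintype (ℙ F (Fin 3 → F))
  have hpoints := card_points (ℙ F (Fin 3 → F)) (ℙ F (Fin 3 → F))
  rw [← Nat.card_eq_fintype_card, Projectivization.card_of_finrank F _ (finrank_fin_fun F)]
    at hpoints
  simp only [Finset.sum_range_succ, Finset.sum_range_zero] at hpoints
  nlinarith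

theorem MeetsOneModSets.not_isBaerSet {B : Finset (ℙ F (Fin 3 → F))} (hF : Nat.card F = q ^ 2)
    (hB : MeetsOneModSets q (B : Set (ℙ F (Fin 3 → F)))) : ¬ IsBaerSet (ℙ F (Fin 3 → F)) q B := by
  classical
  cases nonempty_fintype F
  intro hBaer
  have hq : order (ℙ F (Fin 3 → F)) (ℙ F (Fin 3 → F)) = q ^ 2 := order_eq_card.trans hF
  have hone : IsOneModSet q (B : Set (ℙ F (Fin 3 → F))) :=
    hB.isOneModSet (hF ▸ dvd_pow_self q two_ne_zero) (finrank_fin_fun F).ge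
  obtain ⟨l, hl, C, hCB, hCl⟩ :=
    hBaer.exists_secant_and_mem_notMem (one_lt_of_order_eq_sq hq).ne_bot
  obtain ⟨φ, hφ, hker⟩ := exists_dual_eq_one_of_notMem hCl
  have hunits : Fintype.card Fˣ = q ^ 2 - 1 := by
    rw [Fintype.card_units, ← Nat.card_eq_fintype_card, hF]
  obtain ⟨t, ht⟩ :=
    (isHomologyFamily_homology hφ hker).exists_not_card_filter_map_mem_modEq_one hBaer hq hl hCB hCl
      hunits (homology_one hφ)
  refine ht ?_
  have hmeet := hB.preimage_map (linearHomology hφ t).toLinearMap (linearHomology hφ t).injective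
    _ hone
  rwa [← Set.ncard_coe_finset, Finset.coe_filter]

theorem MeetsOneModSets.ncard_eq_or_le {B : Set (ℙ F (Fin 3 → F))} (hF : Nat.card F = q ^ 2)
    (hB : MeetsOneModSets q B) : B.ncard = q ^ 2 + 1 ∨ q ^ 3 + 1 ≤ B.ncard := by
  classical
  lift B to Finset (ℙ F (Fin 3 → F)) using B.toFinite
  have hone : IsOneModSet q (B : Set (ℙ F (Fin 3 → F))) :=
    hB.isOneModSet (hF ▸ dvd_pow_self q two_ne_zero) (finrank_fin_fun F).ge
  have hline (l : ℙ F (Fin 3 → F)) : (lineSection B l).card ≡ 1 [MOD q] := by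
    rw [← Set.ncard_coe_finset, coe_lineSection]
    exact hone _
  rw [Set.ncard_coe_finset]
  rcases card_eq_or_le_or_isBaerSet (order_eq_card.trans hF) hline
    (Set.ncard_coe_finset B ▸ hone.ncard_modEq_one) with h | h | h
  · exact .inl h
  · exact .inr h
  · exact absurd h (hB.not_isBaerSet hF)

end Plane

section HyperplaneCode

open scoped LinearAlgebra.Projectivization

variable {F : Type} [Field F] {q n : ℕ}

variable (F n) in
/-- Identifies Mathlib's projective space of `F ^ n` with `ProjPoint F n`, by sending a point to its
one-dimensional subspace. -/
noncomputable def projPointEquiv : ℙ F (Fin n → F) ≃ ProjPoint F n :=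
  Projectivization.equivSubmodule F (Fin n → F)

theorem projPointEquiv_preimage_pointsIn (W : Submodule F (Fin n → F)) :
    projPointEquiv F n ⁻¹' pointsIn F n W = subspacePoints W :=
  rfl

theorem ncard_projPointEquiv_preimage (V : Set (ProjPoint F n)) :
    (projPointEquiv F n ⁻¹' V).ncard = V.ncard :=
  Set.ncard_preimage_of_injective_subset_range (projPointEquiv F n).injective (by simp)

theorem secant_range (V : Set (ProjPoint F n)) {E : Type*} [AddCommGroup E] [Module F E]
    (f : E →ₗ[F] Fin n → F) (hf : Function.Injective f) :
    secant F n V (LinearMap.range f) =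
      (Projectivization.map f hf ⁻¹' (projPointEquiv F n ⁻¹' V)).ncard := by
  rw [ncard_preimage_projectivization_map, ← projPointEquiv_preimage_pointsIn, ← Set.preimage_inter,
    ncard_projPointEquiv_preimage, secant]

theorem exists_dual_ker_eq_of_finrank_eq {K E : Type*} [Field K] [AddCommGroup E] [Module K E]
    [FiniteDimensional K E] {H : Submodule K E} (hH : finrank K H = finrank K E - 1) :
    ∃ φ : Dual K E, LinearMap.ker φ = H := by
  rcases eq_or_ne H ⊤ with rfl | htop
  · exact ⟨0, LinearMap.ker_zero⟩
  · obtain ⟨φ, hφ, hle⟩ := H.exists_le_ker_of_lt_top htop.lt_top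
    have := Module.Dual.finrank_ker_add_one_of_ne_zero hφ
    exact ⟨φ, (Submodule.eq_of_le_of_finrank_le hle (by lia)).symm⟩

section DotProduct

variable [Fintype (ProjPoint F n)]

theorem charVec_dotProduct_charVec (S T : Set (ProjPoint F n)) :
    charVec F q n S ⬝ᵥ charVec F q n T = (S ∩ T).ncard := by
  classical
  have hmul (x : ProjPoint F n) :
      charVec F q n S x * charVec F q n T x = if x ∈ S ∩ T then 1 else 0 := by
    rw [charVec, charVec, ← Set.inter_indicator_mul, Set.indicator_apply]
    simp
  rw [dotProduct, Finset.sum_congr rfl fun x _ => hmul x, Finset.sum_boole,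
    ← Set.ncard_coe_finset, Finset.coe_filter_univ, Set.ofPred_mem_eq]

theorem charVec_dotProduct_eq_of_mem_hypCode {v : ProjPoint F n → ZMod q}
    (hv : v ∈ hypCode F q n) {S S' : Set (ProjPoint F n)}
    (hS : IsOneModSet q (projPointEquiv F n ⁻¹' S))
    (hS' : IsOneModSet q (projPointEquiv F n ⁻¹' S')) :
    charVec F q n S ⬝ᵥ v = charVec F q n S' ⬝ᵥ v := by
  induction hv using Submodule.span_induction with
  | mem v hv =>
    obtain ⟨H, hH, rfl⟩ := hv
    obtain ⟨φ, rfl⟩ := exists_dual_ker_eq_of_finrank_eq (H := H) (by rwa [finrank_fin_fun])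
    have hmod := (hS φ).trans (hS' φ).symm
    rw [← projPointEquiv_preimage_pointsIn, ← Set.preimage_inter, ← Set.preimage_inter,
      ncard_projPointEquiv_preimage, ncard_projPointEquiv_preimage,
      ← ZMod.natCast_eq_natCast_iff] at hmod
    rwa [charVec_dotProduct_charVec, charVec_dotProduct_charVec]
  | zero => simp
  | add v w _ _ hv hw => rw [dotProduct_add, dotProduct_add, hv, hw]
  | smul a v _ hv => rw [dotProduct_smul, dotProduct_smul, hv]

end DotProduct

theorem meetsOneModSets_of_charVec_mem_hypCode [Finite F] (hq : q ∣ Nat.card F) (hn : 2 ≤ n)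
    {V : Set (ProjPoint F n)} (hV : V.ncard ≡ 1 [MOD q])
    (hcode : charVec F q n V ∈ hypCode F q n) :
    MeetsOneModSets q (projPointEquiv F n ⁻¹' V) := by
  have : Finite (ProjPoint F n) := .of_equiv _ (projPointEquiv F n)
  cases nonempty_fintype (ProjPoint F n)
  intro S hS
  have huniv : IsOneModSet q (projPointEquiv F n ⁻¹' Set.univ) := by
    rw [Set.preimage_univ, ← subspacePoints_top]
    exact isOneModSet_subspacePoints hq (by rwa [finrank_top, finrank_fin_fun])
  have hdot := charVec_dotProduct_eq_of_mem_hypCode hcode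
    (S := (projPointEquiv F n).symm ⁻¹' S) (by rwa [Equiv.preimage_symm_preimage]) huniv
  rw [charVec_dotProduct_charVec, charVec_dotProduct_charVec, Set.univ_inter,
    ZMod.natCast_eq_natCast_iff, ← ncard_projPointEquiv_preimage, Set.preimage_inter,
    Equiv.preimage_symm_preimage] at hdot
  exact hdot.trans hV

end HyperplaneCode

theorem IsQuasiHermitian.ncard_modEq_one {F : Type} [Field F] {q r : ℕ} (hr : r ≠ 0)
    {V : Set (ProjPoint F (r + 1))} (hV : IsQuasiHermitian F q r V) : V.ncard ≡ 1 [MOD q] := by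
  have hcard := congrArg (Int.cast : ℤ → ZMod q) hV.1
  have hsign : ((-1 : ZMod q) ^ r) * (-1) ^ r = 1 := by rw [← mul_pow]; simp
  push_cast at hcard
  rw [ZMod.natCast_self, zero_pow two_ne_zero, zero_pow r.succ_ne_zero, zero_pow hr] at hcard
  rw [← ZMod.natCast_eq_natCast_iff, Nat.cast_one]
  linear_combination hsign - hcard

theorem stmt13_general {F : Type} [Field F] [Finite F] {q n : ℕ} (hF : Nat.card F = q ^ 2)
    {V : Set (ProjPoint F n)} (hV : V.ncard ≡ 1 [MOD q])
    (hcode : charVec F q n V ∈ hypCode F q n) {π : Submodule F (Fin n → F)}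
    (hπ : finrank F π = 3) :
    secant F n V π = q ^ 2 + 1 ∨ q ^ 3 + 1 ≤ secant F n V π := by
  have hn : 3 ≤ n := by
    have := π.finrank_le
    rwa [hπ, finrank_fin_fun] at this
  have hmeet := meetsOneModSets_of_charVec_mem_hypCode (hF ▸ dvd_pow_self q two_ne_zero)
    (Nat.le_of_succ_le hn) hV hcode
  let e : (Fin 3 → F) ≃ₗ[F] π := LinearEquiv.ofFinrankEq _ _ (by rw [finrank_fin_fun, hπ])
  have hinj : Function.Injective (π.subtype ∘ₗ e.toLinearMap) :=
    π.injective_subtype.comp e.injective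
  have hrange : LinearMap.range (π.subtype ∘ₗ e.toLinearMap) = π := by simp [LinearMap.range_comp]
  rw [← hrange, secant_range V _ hinj]
  exact (hmeet.preimage_map _ hinj).ncard_eq_or_le hF

/-- in PG(r, p²) with `r ≥ 4` and `p > 4` prime, a plane not contained
in `V` meets `V` in `p² + 1` points or in at least `p³ + 1` points. -/
theorem stmt13 (p r : ℕ) (hp : p.Prime) (hp4 : 4 < p) (hr : 4 ≤ r)
    (F : Type) [Field F] [Fintype F] (hF : Fintype.card F = p ^ 2)
    (V : Set (ProjPoint F (r + 1))) (hV : IsQuasiHermitian F p r V)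
    (hcode : charVec F p (r + 1) V ∈ hypCode F p (r + 1))
    (π : Submodule F (Fin (r + 1) → F)) (hπ : finrank F π = 3)
    (hnot : ¬ pointsIn F (r + 1) π ⊆ V) :
    secant F (r + 1) V π = p ^ 2 + 1 ∨ p ^ 3 + 1 ≤ secant F (r + 1) V π :=
  stmt13_general (Nat.card_eq_fintype_card.trans hF) (hV.ncard_modEq_one (by lia)) hcode hπ
end

section
/- Let r ≥ 4 and let p > 3 be prime, and let V be a quasi-Hermitian variety of PG(r,p^4) whose characteristic vector v^V belongs to C_p. If ℓ is a line of PG(r,p^4) with |ℓ ∩ V| ≥ p^4 - p^2 + 1, then |ℓ ∩ V| ≥ p^4 - p + 1. -/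
/-!
Common framework: `ProjPoint F n` is the set of points of the projective space
PG(n-1, |F|) (so PG(r, q²) corresponds to `n = r + 1` and `Fintype.card F = q ^ 2`).
Projective subspaces of projective dimension `k` are the submodules of `Fin n → F`
of `finrank` equal to `k + 1`; lines have finrank 2, planes finrank 3 and
hyperplanes finrank `n - 1 = r`.
-/

open Module Matrix

/-!
Let `Q = p ^ 4` and write the line as `⟨v, w⟩` with `v`, `w` on `V`. Membership of the
characteristic vector in the code means that, modulo `p`, `V` is counted by a multiset of linear
forms. For `u` off the line, the forms not vanishing at `w` have roots `z₁ c + z₂` on the affine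
line `u + c v + F w`, and modulo `p` and up to a constant the multiplicities of these roots are the
indicator of the trace `S c` of `V`. The slopes `z₁` are related in the same way to the trace of `V`
on `⟨v, w⟩`, the line at infinity of this pencil. Every line meets `V` in `1` modulo `p` points, so
that the `|S c|` are multiples of `p` and the complement of `V` in `⟨v, w⟩` has `p τ` points.

Replace a multiset by the product of the factors `1 - y X`. Modulo `X ^ (Q - 1)` the whole field
contributes `1`, so equality of multiplicities up to a constant modulo `p` becomes equality of
polynomials up to a `p`-th power. Looking at a window of `p τ` coefficients above degree `p ν`, a
small `S c` forces the corank at `c` of a matrix of these coefficients to be at least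
`ν + 1 - |S c| / p`, whereas at infinity the matrix has full rank as soon as `ν + τ < p τ`.
A maximal minor is therefore a nonzero polynomial in `c` of controlled degree whose roots absorb all
the coranks, which gives `2 Q (ν + 1) ≤ 2 ∑ |S c| / p + p (ν + τ) (ν + τ + 1)`.

Averaging over `u` yields a plane with `∑ |S c| ≤ p ^ 6 + 1`. If the conclusion failed, then
`2 ≤ τ ≤ p`, and `ν = p` contradicts the inequality.
-/

/-! ### Reciprocal polynomials of multisets -/

section ReciprocalPoly

open Polynomial

/-- The polynomial `∏ (1 - y X)` over the elements `y` of a multiset, i.e. the reversal of the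
polynomial with roots `N`. It turns congruences modulo `p` between multiplicities into congruences
between polynomials up to `p`-th powers. -/
noncomputable def reciprocalPoly {R : Type*} [CommRing R] (N : Multiset R) : R[X] :=
  (N.map fun y => 1 - C y * X).prod

variable {R : Type*} [CommRing R]

@[simp]
lemma reciprocalPoly_zero : reciprocalPoly (0 : Multiset R) = 1 := by
  simp [reciprocalPoly]

@[simp]
lemma reciprocalPoly_cons (y : R) (N : Multiset R) :
    reciprocalPoly (y ::ₘ N) = (1 - C y * X) * reciprocalPoly N := by
  simp [reciprocalPoly]

lemma reciprocalPoly_add (N N' : Multiset R) :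
    reciprocalPoly (N + N') = reciprocalPoly N * reciprocalPoly N' := by
  simp [reciprocalPoly]

lemma reciprocalPoly_nsmul (k : ℕ) (N : Multiset R) :
    reciprocalPoly (k • N) = reciprocalPoly N ^ k := by
  simp [reciprocalPoly, Multiset.map_nsmul, Multiset.prod_nsmul]

lemma reciprocalPoly_map {S : Type*} [CommRing S] (f : R →+* S) (N : Multiset R) :
    reciprocalPoly (N.map f) = (reciprocalPoly N).map f := by
  induction N using Multiset.induction_on with
  | empty => simp
  | cons y N ih => simp [ih]

lemma coeff_zero_reciprocalPoly (N : Multiset R) : (reciprocalPoly N).coeff 0 = 1 := by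
  induction N using Multiset.induction_on with
  | empty => simp
  | cons y N ih => simp [mul_coeff_zero, ih]

lemma natDegree_reciprocalPoly_le (N : Multiset R) :
    (reciprocalPoly N).natDegree ≤ Multiset.card N := by
  induction N using Multiset.induction_on with
  | empty => simp
  | cons y N ih =>
    have hy : (1 - C y * X : R[X]).natDegree ≤ 1 := by compute_degree
    rw [reciprocalPoly_cons, Multiset.card_cons, add_comm]
    exact natDegree_mul_le_of_le hy ih

lemma coeff_succ_reciprocalPoly_cons (y : R) (N : Multiset R) (w : ℕ) :
    (reciprocalPoly (y ::ₘ N)).coeff (w + 1) =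
      (reciprocalPoly N).coeff (w + 1) - y * (reciprocalPoly N).coeff w := by
  rw [reciprocalPoly_cons, sub_mul, one_mul, mul_assoc, coeff_sub, coeff_C_mul, coeff_X_mul]

lemma natDegree_coeff_reciprocalPoly_le {N : Multiset R[X]} (hN : ∀ f ∈ N, f.natDegree ≤ 1)
    (w : ℕ) : ((reciprocalPoly N).coeff w).natDegree ≤ w := by
  induction N using Multiset.induction_on generalizing w with
  | empty => simp [coeff_one, apply_ite natDegree]
  | cons f N ih =>
    rw [Multiset.forall_mem_cons] at hN
    cases w with
    | zero => simp [coeff_zero_reciprocalPoly]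
    | succ w =>
      rw [coeff_succ_reciprocalPoly_cons]
      refine (natDegree_sub_le_of_le (ih hN.2 _) (natDegree_mul_le_of_le hN.1 (ih hN.2 _))).trans ?_
      rw [add_comm 1 w, max_self]

lemma coeff_coeff_reciprocalPoly {N : Multiset R[X]} (hN : ∀ f ∈ N, f.natDegree ≤ 1) (w : ℕ) :
    ((reciprocalPoly N).coeff w).coeff w = (reciprocalPoly (N.map (coeff · 1))).coeff w := by
  induction N using Multiset.induction_on generalizing w with
  | empty => cases w <;> simp [coeff_one]
  | cons f N ih =>
    rw [Multiset.forall_mem_cons] at hN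
    cases w with
    | zero => simp [coeff_zero_reciprocalPoly]
    | succ w =>
      rw [Multiset.map_cons, coeff_succ_reciprocalPoly_cons, coeff_succ_reciprocalPoly_cons,
        coeff_sub, ih hN.2, add_comm w 1,
        coeff_mul_add_eq_of_natDegree_le hN.1 (natDegree_coeff_reciprocalPoly_le hN.2 w), ih hN.2]

end ReciprocalPoly

section FiniteField

open Polynomial

variable {F : Type*} [Field F]

lemma isCoprime_X_pow_of_coeff_zero_eq_one {P : F[X]} (hP : P.coeff 0 = 1) (m : ℕ) :
    IsCoprime (X ^ m) P := by
  obtain ⟨U, hU⟩ : (X : F[X]) ∣ P - 1 := X_dvd_iff.2 (by simp [hP])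
  exact IsCoprime.pow_left ⟨-U, 1, by linear_combination hU⟩

lemma eq_zero_of_X_pow_dvd_mul {P f : F[X]} {m : ℕ} (hP : P.coeff 0 = 1)
    (hdvd : X ^ m ∣ P * f) (hf : f.natDegree < m) : f = 0 := by
  by_contra hne
  have hXf : X ^ m ∣ f := (isCoprime_X_pow_of_coeff_zero_eq_one hP m).dvd_of_dvd_mul_left hdvd
  have := natDegree_le_of_dvd hXf hne
  rw [natDegree_X_pow] at this
  omega

lemma eval_inv_reciprocalPoly {N : Multiset F} {y : F} (hy : y ∈ N) (hy0 : y ≠ 0) :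
    (reciprocalPoly N).eval y⁻¹ = 0 := by
  obtain ⟨N', rfl⟩ := Multiset.exists_cons_of_mem hy
  simp [hy0]

variable [Fintype F]

lemma reciprocalPoly_univ :
    reciprocalPoly (Finset.univ : Finset F).val = 1 - X ^ (Fintype.card F - 1) := by
  classical
  have hcard : 1 < Fintype.card F := Fintype.one_lt_card
  have hdeg : (reciprocalPoly (Finset.univ : Finset F).val).natDegree ≤ Fintype.card F - 1 := by
    rw [← Multiset.cons_erase (Finset.mem_univ_val (0 : F)), reciprocalPoly_cons, map_zero,
      zero_mul, sub_zero, one_mul]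
    refine (natDegree_reciprocalPoly_le _).trans ?_
    simp [Multiset.card_erase_of_mem]
  rw [← sub_eq_zero]
  refine eq_zero_of_natDegree_lt_card_of_eval_eq_zero' _ Finset.univ (fun z _ => ?_) ?_
  · rcases eq_or_ne z 0 with rfl | hz
    · simp only [eval_sub, ← coeff_zero_eq_eval_zero, coeff_zero_reciprocalPoly, eval_one, eval_pow,
        eval_X, sub_sub_cancel, pow_eq_zero_iff', ne_eq, true_and]
      omega
    · have hroot := eval_inv_reciprocalPoly (Finset.mem_univ_val z⁻¹) (inv_ne_zero hz)
      rw [inv_inv] at hroot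
      simp [hroot, FiniteField.pow_card_sub_one_eq_one z hz]
  · have hdeg' : (1 - X ^ (Fintype.card F - 1) : F[X]).natDegree ≤ Fintype.card F - 1 := by
      compute_degree
    have := natDegree_sub_le_of_le hdeg hdeg'
    rw [Finset.card_univ]
    omega

lemma exists_X_pow_dvd_reciprocalPoly_mul_pow_sub [DecidableEq F] (p : ℕ) [NeZero p]
    (N S : Multiset F) (κ : ZMod p) (h : ∀ y, (N.count y : ZMod p) + κ = S.count y) :
    ∃ U : F[X], U.coeff 0 = 1 ∧
      X ^ (Fintype.card F - 1) ∣ reciprocalPoly N * U ^ p - reciprocalPoly S := by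
  set k : ℕ := (-κ).val + p * Multiset.card N with hk
  have hcount : ∀ y, ∃ a, S.count y + k = N.count y + p * a := by
    intro y
    have hmod : N.count y ≡ S.count y + k [MOD p] := by
      rw [← ZMod.natCast_eq_natCast_iff]
      simp [hk, ← h y]
    have hle : N.count y ≤ S.count y + k :=
      calc N.count y ≤ Multiset.card N := Multiset.count_le_card y N
        _ ≤ p * Multiset.card N := Nat.le_mul_of_pos_left _ (NeZero.pos p)
        _ ≤ S.count y + k := by omega
    obtain ⟨a, ha⟩ := (Nat.modEq_iff_dvd' hle).1 hmod
    exact ⟨a, by omega⟩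
  choose a ha using hcount
  set T : Multiset F := ∑ y, Multiset.replicate (a y) y with hT
  have hNT : N + p • T = S + k • (Finset.univ : Finset F).val := by
    ext y
    simp [hT, Multiset.count_sum', Multiset.count_replicate, ha]
  have hprod : reciprocalPoly N * reciprocalPoly T ^ p =
      reciprocalPoly S * (1 - X ^ (Fintype.card F - 1)) ^ k := by
    simpa only [reciprocalPoly_add, reciprocalPoly_nsmul, reciprocalPoly_univ] using
      congrArg reciprocalPoly hNT
  refine ⟨reciprocalPoly T, coeff_zero_reciprocalPoly T, ?_⟩
  have hone : (X : F[X]) ^ (Fintype.card F - 1) ∣ (1 - X ^ (Fintype.card F - 1)) ^ k - 1 := by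
    have := sub_dvd_pow_sub_pow (1 - X ^ (Fintype.card F - 1) : F[X]) 1 k
    rwa [one_pow, sub_sub_cancel_left, neg_dvd] at this
  rw [hprod]
  simpa [mul_sub] using hone.mul_left (reciprocalPoly S)

end FiniteField

/-! ### Windows of coefficients -/

section CoeffWindow

open Polynomial

variable {R : Type*} [CommRing R]

/-- The coefficients of degrees `n + 1, …, n + t` of `P`, `P X ^ p`, …, `P X ^ (p (K - 1))`, one
column per power. Its kernel is the space of polynomials `f` of degree below `K` such that
`P(X) f(X ^ p)` has no term in these degrees. -/
noncomputable def coeffWindow (p n t K : ℕ) (P : R[X]) : Matrix (Fin t) (Fin K) R :=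
  Matrix.of fun a k => (P * X ^ (p * (k : ℕ))).coeff (n + 1 + a)

lemma coeffWindow_map {S : Type*} [CommRing S] (g : R →+* S) (p n t K : ℕ) (P : R[X]) :
    (coeffWindow p n t K P).map g = coeffWindow p n t K (P.map g) := by
  ext a k
  simp [coeffWindow, ← coeff_map]

lemma coeff_mul_expand {p K w : ℕ} (hw : w < p * K) (P f : R[X]) :
    (P * expand R p f).coeff w =
      ∑ k ∈ Finset.range K, (P * X ^ (p * k)).coeff w * f.coeff k := by
  have hmonomial : ∀ k, (P * expand R p (monomial k (f.coeff k))).coeff w =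
      (P * X ^ (p * k)).coeff w * f.coeff k := by
    intro k
    rw [expand_monomial, ← C_mul_X_pow_eq_monomial, mul_left_comm, coeff_C_mul, mul_comm k p,
      mul_comm (f.coeff k)]
  conv_lhs => rw [f.as_sum_range' (f.natDegree + 1 + K) (by omega), map_sum, Finset.mul_sum,
    finsetSum_coeff, Finset.sum_congr rfl fun k _ => hmonomial k]
  refine (Finset.sum_subset (Finset.range_mono (by omega)) fun k _ hk => ?_).symm
  have hKk : p * K ≤ p * k := Nat.mul_le_mul_left p (by simpa using hk)
  rw [coeff_mul_X_pow', if_neg (by omega), zero_mul]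

lemma exists_natDegree_le_X_pow_dvd_sub {P : R[X]} {n m : ℕ}
    (hP : ∀ w, n < w → w < m → P.coeff w = 0) : ∃ B : R[X], B.natDegree ≤ n ∧ X ^ m ∣ P - B := by
  refine ⟨∑ j ∈ Finset.range (n + 1), monomial j (P.coeff j), ?_, ?_⟩
  · refine natDegree_sum_le_of_forall_le _ _ fun j hj => (natDegree_monomial_le _).trans ?_
    exact Nat.lt_succ_iff.1 (Finset.mem_range.1 hj)
  · rw [X_pow_dvd_iff]
    intro j hj
    rw [coeff_sub, finsetSum_coeff]
    by_cases hjn : j ≤ n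
    · simp [coeff_monomial, hjn]
    · simp [coeff_monomial, hjn, hP j (by omega) hj]

lemma expand_contract_of_coeff_eq_zero {p : ℕ} (hp : 0 < p) {P : R[X]}
    (hP : ∀ j, ¬ p ∣ j → P.coeff j = 0) : expand R p (contract p P) = P := by
  ext j
  rw [coeff_expand hp]
  split_ifs with hj
  · rw [coeff_contract hp.ne', Nat.div_mul_cancel hj]
  · exact (hP j hj).symm

lemma coeffWindow_mulVec {p n t K : ℕ} (h : n + t < p * K) (P f : R[X]) (a : Fin t) :
    (coeffWindow p n t K P *ᵥ toFn K f) a = (P * expand R p f).coeff (n + 1 + a) := by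
  rw [coeff_mul_expand (by omega : n + 1 + a < p * K), Finset.sum_range]
  simp [coeffWindow, mulVec, dotProduct, toFn]

end CoeffWindow

section Kernel

open Polynomial

variable {F : Type*} [Field F] {p : ℕ} [Fact p.Prime] [CharP F p]

lemma pow_char_mul_expand (U f : F[X]) :
    U ^ p * expand F p f = expand F p (U.map (frobenius F p) * f) := by
  rw [map_mul, ← map_expand, map_frobenius_expand]

lemma eq_zero_of_coeff_eq_zero_of_eval_eq_zero {P : F[X]} (hP : ∀ j, ¬ p ∣ j → P.coeff j = 0)
    {Z : Finset F} (hZ : ∀ z ∈ Z, P.eval z = 0) (hdeg : P.natDegree < p * Z.card) : P = 0 := by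
  classical
  have hexpand := expand_contract_of_coeff_eq_zero (Fact.out : p.Prime).pos hP
  have hcontract : contract p P = 0 := by
    refine eq_zero_of_natDegree_lt_card_of_eval_eq_zero' _ (Z.image (frobenius F p)) ?_ ?_
    · simp only [Finset.mem_image]
      rintro _ ⟨z, hz, rfl⟩
      rw [frobenius_def, ← expand_eval, hexpand, hZ z hz]
    · rw [Finset.card_image_of_injective _ (frobenius_inj F p)]
      rw [← hexpand, natDegree_expand, mul_comm] at hdeg
      exact Nat.lt_of_mul_lt_mul_left hdeg
  rw [← hexpand, hcontract, map_zero]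

lemma eq_zero_of_X_pow_dvd_expand_sub_mul_reciprocalPoly {A : Finset F} (h0 : (0 : F) ∉ A)
    {B g : F[X]} {n : ℕ} (hB : B.natDegree ≤ n) (hlt : n + A.card < p * A.card)
    (hdvd : X ^ (n + A.card + 1) ∣ expand F p g - B * reciprocalPoly A.val) :
    B = 0 := by
  classical
  have hdeg : (B * reciprocalPoly A.val).natDegree ≤ n + A.card :=
    natDegree_mul_le_of_le hB (natDegree_reciprocalPoly_le A.val)
  have hzero : B * reciprocalPoly A.val = 0 := by
    refine eq_zero_of_coeff_eq_zero_of_eval_eq_zero (p := p) (Z := A.image (·⁻¹))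
      (fun j hj => ?_) ?_ ?_
    · by_cases hjn : j < n + A.card + 1
      · have := X_pow_dvd_iff.1 hdvd j hjn
        rwa [coeff_sub, coeff_expand (Fact.out : p.Prime).pos, if_neg hj, zero_sub,
          neg_eq_zero] at this
      · exact coeff_eq_zero_of_natDegree_lt (by omega)
    · simp only [Finset.mem_image]
      rintro _ ⟨m, hm, rfl⟩
      rw [eval_mul, eval_inv_reciprocalPoly hm (ne_of_mem_of_not_mem hm h0), mul_zero]
    · rw [Finset.card_image_of_injective _ inv_injective]
      omega
  refine (mul_eq_zero.1 hzero).resolve_right fun hA => ?_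
  simpa [hA] using coeff_zero_reciprocalPoly A.val

variable [Fintype F]

lemma coeff_reciprocalPoly_mul_expand_eq_zero {N S : Multiset F} {U f : F[X]} {n w : ℕ}
    (hU : X ^ (Fintype.card F - 1) ∣ reciprocalPoly N * U ^ p - reciprocalPoly S)
    (hS : Multiset.card S + p * f.natDegree ≤ n) (hnw : n < w) (hw : w < Fintype.card F - 1) :
    (reciprocalPoly N * expand F p (U.map (frobenius F p) * f)).coeff w = 0 := by
  have hdeg : (reciprocalPoly S * expand F p f).natDegree ≤ n := by
    refine (natDegree_mul_le_of_le (natDegree_reciprocalPoly_le S) le_rfl).trans ?_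
    rwa [natDegree_expand, mul_comm _ p]
  have hcong : X ^ (Fintype.card F - 1) ∣ reciprocalPoly N *
      expand F p (U.map (frobenius F p) * f) - reciprocalPoly S * expand F p f := by
    rw [← pow_char_mul_expand, ← mul_assoc, ← sub_mul]
    exact hU.mul_right _
  have hcoeff := X_pow_dvd_iff.1 hcong w hw
  rwa [coeff_sub, coeff_eq_zero_of_natDegree_lt (hdeg.trans_lt hnw), sub_zero] at hcoeff

variable [DecidableEq F]

lemma rank_coeffWindow_add_le {N S : Multiset F} {κ : ZMod p}
    (h : ∀ y, (N.count y : ZMod p) + κ = S.count y) {n t K d : ℕ}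
    (hQ : n + t < Fintype.card F - 1) (hK : n + t < p * K) (hd : d ≤ K)
    (hS : ∀ i < d, Multiset.card S + p * i ≤ n) :
    (coeffWindow p n t K (reciprocalPoly N)).rank + d ≤ K := by
  rcases Nat.eq_zero_or_pos d with rfl | hdpos
  · exact rank_le_width _
  obtain ⟨U, hU0, hU⟩ := exists_X_pow_dvd_reciprocalPoly_mul_pow_sub p N S κ h
  set U' := U.map (frobenius F p)
  have hdeg : ∀ v, (ofFn d v : F[X]).natDegree < d := ofFn_natDegree_lt hdpos
  let φ : (Fin d → F) →ₗ[F] (Fin K → F) := toFn K ∘ₗ LinearMap.mulLeft F U' ∘ₗ ofFn d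
  have hφinj : Function.Injective φ := by
    rw [← LinearMap.ker_eq_bot, LinearMap.ker_eq_bot']
    intro v hv
    have hdvd : X ^ K ∣ U' * ofFn d v := X_pow_dvd_iff.2 fun k hk => congrFun hv ⟨k, hk⟩
    have hzero := eq_zero_of_X_pow_dvd_mul (by simp [U', hU0]) hdvd ((hdeg v).trans_le hd)
    exact injective_ofFn d (hzero.trans (map_zero _).symm)
  have hφker : LinearMap.range φ ≤
      LinearMap.ker (coeffWindow p n t K (reciprocalPoly N)).mulVecLin := by
    rintro _ ⟨v, rfl⟩
    ext a
    exact (coeffWindow_mulVec hK _ _ a).trans <|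
      coeff_reciprocalPoly_mul_expand_eq_zero hU (hS _ (hdeg v)) (by omega) (by omega)
  have hker := Submodule.finrank_mono hφker
  have hrank := LinearMap.finrank_range_add_finrank_ker
    (coeffWindow p n t K (reciprocalPoly N)).mulVecLin
  rw [LinearMap.finrank_range_of_inj hφinj, finrank_fin_fun] at hker
  rw [finrank_fin_fun] at hrank
  rw [Matrix.rank]
  omega

lemma eq_zero_of_coeff_reciprocalPoly_mul_expand_eq_zero {N : Multiset F} {A : Finset F}
    {κ : ZMod p} (h : ∀ y, ((N + A.val).count y : ZMod p) = κ) (h0 : (0 : F) ∉ A) {f : F[X]}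
    {n : ℕ} (hQ : n + A.card < Fintype.card F - 1) (hf : p * f.natDegree ≤ n + A.card)
    (hlt : n + A.card < p * A.card)
    (hwindow : ∀ w, n < w → w < n + A.card + 1 →
      (reciprocalPoly N * expand F p f).coeff w = 0) : f = 0 := by
  obtain ⟨W, -, hW⟩ := exists_X_pow_dvd_reciprocalPoly_mul_pow_sub p 0 (N + A.val) κ
    fun y => by simp only [Multiset.count_zero, Nat.cast_zero, zero_add, h y]
  rw [reciprocalPoly_zero, one_mul, reciprocalPoly_add] at hW
  obtain ⟨B, hBdeg, hB⟩ := exists_natDegree_le_X_pow_dvd_sub hwindow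
  have hB0 : B = 0 := by
    refine eq_zero_of_X_pow_dvd_expand_sub_mul_reciprocalPoly h0
      (g := W.map (frobenius F p) * f) hBdeg hlt ?_
    rw [← pow_char_mul_expand]
    have hle : n + A.card + 1 ≤ Fintype.card F - 1 := by omega
    have hW' := ((pow_dvd_pow X hle).trans hW).mul_right (expand F p f)
    convert hW'.add (hB.mul_right (reciprocalPoly A.val)) using 1
    ring
  rw [hB0, sub_zero] at hB
  refine (expand_eq_zero (Fact.out : p.Prime).pos).1 ?_
  refine eq_zero_of_X_pow_dvd_mul (coeff_zero_reciprocalPoly N) hB ?_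
  rw [natDegree_expand, mul_comm]
  exact Nat.lt_succ_of_le hf

lemma injective_coeffWindow_mulVecLin {N : Multiset F} {A : Finset F} {κ : ZMod p}
    (h : ∀ y, ((N + A.val).count y : ZMod p) = κ) (h0 : (0 : F) ∉ A) {n K : ℕ}
    (hQ : n + A.card < Fintype.card F - 1) (hK : n + A.card + p = p * K)
    (hlt : n + A.card < p * A.card) :
    Function.Injective (coeffWindow p n A.card K (reciprocalPoly N)).mulVecLin := by
  have hp : 0 < p := (Fact.out : p.Prime).pos
  have hKpos : 0 < K := Nat.pos_of_mul_pos_left (by omega : 0 < p * K)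
  rw [← LinearMap.ker_eq_bot, LinearMap.ker_eq_bot']
  intro v hv
  have hvf : toFn K (ofFn K v) = v := toFn_comp_ofFn_eq_id K v
  have hdeg : p * ((ofFn K v).natDegree + 1) ≤ p * K :=
    Nat.mul_le_mul_left p (ofFn_natDegree_lt hKpos v)
  have hzero : ofFn K v = 0 := by
    refine eq_zero_of_coeff_reciprocalPoly_mul_expand_eq_zero h h0 hQ (by linarith) hlt ?_
    intro w hnw hw
    have := congrFun hv ⟨w - (n + 1), by omega⟩
    rw [mulVecLin_apply, ← hvf, coeffWindow_mulVec (by omega)] at this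
    simpa [Nat.add_sub_cancel' hnw] using this
  rw [← hvf, hzero, map_zero]

end Kernel

/-! ### Degrees and root multiplicities of minors -/

section Determinant

open Polynomial

variable {ι : Type*} [Fintype ι] [DecidableEq ι]

lemma prod_dvd_det_of_dvd_col {R : Type*} [CommRing R] {M : Matrix ι ι R} {e : ι → R}
    (h : ∀ i j, e j ∣ M i j) : ∏ j, e j ∣ M.det := by
  choose Q hQ using h
  have hM : M = Matrix.of Q * Matrix.diagonal e := by
    ext i j
    rw [Matrix.mul_diagonal, hQ, mul_comm, Matrix.of_apply]
  rw [hM, det_mul, det_diagonal]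
  exact dvd_mul_left _ _

lemma X_sub_C_pow_dvd_det_s15 {F : Type*} [Field F] (B : Matrix ι ι F[X]) (c : F) :
    (X - C c) ^ (Fintype.card ι - (B.map (evalRingHom c)).rank) ∣ B.det := by
  obtain ⟨V, U, e, hV, hU, hVU⟩ := exists_rank_normal_form (B.map (evalRingHom c))
  have hmap : (V.map C * B * U.map C).map (evalRingHom c) = V * B.map (evalRingHom c) * U := by
    ext i j
    simp [Matrix.mul_apply, eval_finsetSum]
  have hcol : ∀ i j, Sum.elim (fun _ => 1) (fun _ => X - C c) (e j) ∣
      (V.map C * B * U.map C) i j := by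
    intro i j
    have hentry := congrFun₂ (hmap.trans hVU) i j
    rcases hj : e j with k | k
    · exact one_dvd _
    · rw [Sum.elim_inr, dvd_iff_isRoot]
      refine hentry.trans ?_
      rw [submatrix_apply, hj]
      rcases e i with l | l <;> rfl
  have hprod : ∏ j, Sum.elim (fun _ => 1) (fun _ => X - C c) (e j) =
      (X - C c) ^ (Fintype.card ι - (B.map (evalRingHom c)).rank) := by
    rw [Equiv.prod_comp e (Sum.elim (fun _ => 1) (fun _ => X - C c)), Fintype.prod_sum_type]
    simp only [Sum.elim_inl, Sum.elim_inr, Finset.prod_const_one, one_mul, Finset.prod_const,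
      Finset.card_univ, Fintype.card_fin]
  have hdvd := prod_dvd_det_of_dvd_col hcol
  have hunit : ∀ {T : Matrix ι ι F}, IsUnit T → IsUnit (T.map C).det := fun {T} hT => by
    simpa [RingHom.map_det] using ((isUnit_iff_isUnit_det T).1 hT).map C
  rw [hprod, det_mul, det_mul] at hdvd
  exact (hunit hV).dvd_mul_left.1 ((hunit hU).dvd_mul_right.1 hdvd)

lemma exists_det_submatrix_ne_zero {F m : Type*} [Field F] [Finite m] (E : Matrix m ι F)
    (hE : Function.Injective E.mulVecLin) : ∃ f : ι → m, (E.submatrix f id).det ≠ 0 := by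
  have := Fintype.ofFinite m
  obtain ⟨κ, a, ha, hspan, hli⟩ := exists_linearIndependent' F E.row
  have := Finite.of_injective a ha
  have := Fintype.ofFinite κ
  have hcard : Fintype.card ι = Fintype.card κ := by
    rw [← finrank_span_eq_card hli, hspan, ← rank_eq_finrank_span_row, Matrix.rank,
      LinearMap.finrank_range_of_inj hE, finrank_fintype_fun_eq_card]
  let e : ι ≃ κ := Fintype.equivOfCardEq hcard
  have hrows : LinearIndependent F (E.submatrix (a ∘ e) id).row := hli.comp e e.injective
  rw [linearIndependent_rows_iff_isUnit, isUnit_iff_isUnit_det] at hrows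
  exact ⟨a ∘ e, hrows.ne_zero⟩

variable {R : Type*} [CommRing R]

lemma coeff_prod_sum_of_natDegree_le {κ : Type*} (s : Finset κ) {f : κ → R[X]} {d : κ → ℕ}
    (h : ∀ i, (f i).natDegree ≤ d i) :
    (∏ i ∈ s, f i).coeff (∑ i ∈ s, d i) = ∏ i ∈ s, (f i).coeff (d i) := by
  classical
  induction s using Finset.induction_on with
  | empty => simp
  | insert i s hi ih =>
    rw [Finset.prod_insert hi, Finset.sum_insert hi, Finset.prod_insert hi, ← ih]
    exact coeff_mul_add_eq_of_natDegree_le (h i)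
      ((natDegree_prod_le _ _).trans (Finset.sum_le_sum fun j _ => h j))

variable {M : Matrix ι ι R[X]} {d : ι → ℕ}

lemma natDegree_det_le_sum (h : ∀ i j, (M i j).natDegree ≤ d i) :
    M.det.natDegree ≤ ∑ i, d i := by
  rw [det_apply]
  refine natDegree_sum_le_of_forall_le _ _ fun σ _ => (natDegree_smul_le _ _).trans ?_
  rw [← Equiv.sum_comp σ]
  exact (natDegree_prod_le _ _).trans (Finset.sum_le_sum fun i _ => h (σ i) i)

lemma coeff_det_sum (h : ∀ i j, (M i j).natDegree ≤ d i) :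
    M.det.coeff (∑ i, d i) = (Matrix.of fun i j => (M i j).coeff (d i)).det := by
  simp_rw [det_apply, finsetSum_coeff, coeff_smul]
  refine Finset.sum_congr rfl fun σ _ => ?_
  rw [← Equiv.sum_comp σ, coeff_prod_sum_of_natDegree_le _ fun i => h (σ i) i]
  rfl

end Determinant

section CorankSum

open Polynomial

variable {R : Type*} [CommRing R] {P : R[X][X]} {L : R[X]}

lemma natDegree_coeff_mul_X_pow_mul_X_pow_le (hP : ∀ w, (P.coeff w).natDegree ≤ w) (m w : ℕ) :
    ((P * X ^ m).coeff w * X ^ m).natDegree ≤ w := by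
  rw [coeff_mul_X_pow']
  split_ifs with hmw
  · have := natDegree_mul_le_of_le (hP (w - m)) (natDegree_X_pow_le (R := R) m)
    omega
  · simp

lemma coeff_coeff_mul_X_pow_mul_X_pow (hL : ∀ w, (P.coeff w).coeff w = L.coeff w) (m w : ℕ) :
    ((P * X ^ m).coeff w * X ^ m).coeff w = (L * X ^ m).coeff w := by
  simp only [coeff_mul_X_pow']
  split_ifs with hmw
  · exact hL _
  · simp

variable {p n t K : ℕ}

lemma det_submatrix_coeffWindow_mul_X_pow (P : R[X][X]) (f : Fin K → Fin t) :
    ((coeffWindow p n t K P).submatrix f id).det * X ^ ∑ k : Fin K, p * (k : ℕ) =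
      (Matrix.of fun a k : Fin K =>
        (P * X ^ (p * (k : ℕ))).coeff (n + 1 + f a) * X ^ (p * (k : ℕ))).det := by
  rw [← Finset.prod_pow_eq_pow_sum, ← det_diagonal, ← det_mul]
  congr 1
  ext1 a k
  exact Matrix.mul_diagonal _ _ _ _

lemma natDegree_det_submatrix_coeffWindow_mul_X_pow_le (hP : ∀ w, (P.coeff w).natDegree ≤ w)
    (f : Fin K → Fin t) :
    (((coeffWindow p n t K P).submatrix f id).det * X ^ ∑ k : Fin K, p * (k : ℕ)).natDegree ≤
      ∑ a, (n + 1 + (f a : ℕ)) := by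
  rw [det_submatrix_coeffWindow_mul_X_pow]
  exact natDegree_det_le_sum fun a k => natDegree_coeff_mul_X_pow_mul_X_pow_le hP _ _

lemma coeff_det_submatrix_coeffWindow_mul_X_pow (hP : ∀ w, (P.coeff w).natDegree ≤ w)
    (hL : ∀ w, (P.coeff w).coeff w = L.coeff w) (f : Fin K → Fin t) :
    (((coeffWindow p n t K P).submatrix f id).det * X ^ ∑ k : Fin K, p * (k : ℕ)).coeff
      (∑ a, (n + 1 + (f a : ℕ))) = ((coeffWindow p n t K L).submatrix f id).det := by
  rw [det_submatrix_coeffWindow_mul_X_pow]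
  refine (coeff_det_sum (d := fun a => n + 1 + (f a : ℕ))
    fun a k => natDegree_coeff_mul_X_pow_mul_X_pow_le hP _ _).trans ?_
  congr 1
  ext a k
  exact coeff_coeff_mul_X_pow_mul_X_pow hL _ _

/-- Take a maximal minor whose top-degree part is nonzero: its degree is bounded by weighted
homogeneity, while each `c` is a root of multiplicity at least the corank at `c`. -/
lemma sum_corank_coeffWindow_add_le {F : Type*} [Field F] [Fintype F] {P : F[X][X]} {L : F[X]}
    (hP : ∀ w, (P.coeff w).natDegree ≤ w) (hL : ∀ w, (P.coeff w).coeff w = L.coeff w)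
    (hinj : Function.Injective (coeffWindow p n t K L).mulVecLin) :
    ∑ c : F, (K - (coeffWindow p n t K (P.map (evalRingHom c))).rank) +
      ∑ k : Fin K, p * (k : ℕ) ≤ K * (n + t) := by
  obtain ⟨f, hf⟩ := exists_det_submatrix_ne_zero _ hinj
  set B := (coeffWindow p n t K P).submatrix f id with hB
  have hdet : B.det ≠ 0 := by
    intro hzero
    rw [← coeff_det_submatrix_coeffWindow_mul_X_pow hP hL, ← hB, hzero, zero_mul] at hf
    exact hf (coeff_zero _)
  have hdvd : ∏ c : F, (X - C c) ^ (K - (coeffWindow p n t K (P.map (evalRingHom c))).rank) ∣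
      B.det := by
    refine Finset.prod_dvd_of_coprime (fun a _ b _ hab =>
      (pairwise_coprime_X_sub_C Function.injective_id hab).pow) fun c _ => ?_
    refine (pow_dvd_pow _ ?_).trans (X_sub_C_pow_dvd_det_s15 B c)
    rw [Fintype.card_fin, hB, ← submatrix_map, coeffWindow_map]
    exact Nat.sub_le_sub_left (rank_submatrix_le _ _ _) K
  have hlower := natDegree_le_of_dvd hdvd hdet
  rw [natDegree_prod _ _ fun c _ => pow_ne_zero _ (X_sub_C_ne_zero c)] at hlower
  simp only [natDegree_pow, natDegree_X_sub_C, mul_one] at hlower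
  have hupper := natDegree_det_submatrix_coeffWindow_mul_X_pow_le (p := p) (n := n) hP f
  rw [← hB, natDegree_mul_X_pow _ hdet] at hupper
  have hrows : ∑ a, (n + 1 + (f a : ℕ)) ≤ K * (n + t) := by
    simpa using Finset.sum_le_card_nsmul Finset.univ (fun a => n + 1 + (f a : ℕ)) (n + t)
      fun a _ => by omega
  omega

lemma two_mul_sum_fin_mul (p m : ℕ) :
    2 * ∑ k : Fin (m + 1), p * (k : ℕ) = p * m * (m + 1) := by
  rw [← Finset.mul_sum, ← Finset.sum_range (fun k => k), mul_left_comm, mul_comm 2,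
    Finset.sum_range_id_mul_two, Nat.add_sub_cancel]
  ring

variable {F : Type*} [Field F] [Fintype F] [DecidableEq F] [Fact p.Prime] [CharP F p]

lemma succ_le_corank_coeffWindow_add {N S : Multiset F} {κ : ZMod p} {s ν τ : ℕ}
    (hS : ∀ y, (N.count y : ZMod p) + κ = S.count y) (hcard : Multiset.card S = p * s)
    (hQ : p * (ν + τ) + 1 < Fintype.card F) :
    ν + 1 ≤ (ν + τ + 1 -
      (coeffWindow p (p * ν) (p * τ) (ν + τ + 1) (reciprocalPoly N)).rank) + s := by
  have hp : 0 < p := (Fact.out : p.Prime).pos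
  have hrank := rank_coeffWindow_add_le hS (n := p * ν) (t := p * τ) (K := ν + τ + 1)
    (d := ν + 1 - s) (by rw [← mul_add]; omega)
    (by rw [← mul_add]; exact Nat.mul_lt_mul_of_pos_left (Nat.lt_succ_self _) hp) (by omega)
    fun i hi => by
      rw [hcard, ← mul_add]
      exact Nat.mul_le_mul_left p (by omega)
  omega

/-- The polynomials `reciprocalPoly` of the specialisations of `M` at `c` come from a single
bivariate polynomial, whose top-degree part is the `reciprocalPoly` of the slopes. -/
lemma two_mul_card_mul_succ_le {M : Multiset (F × F)} {S : F → Finset F} {κ : F → ZMod p}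
    {A : Finset F} {κ' : ZMod p} {s : F → ℕ} {ν τ : ℕ}
    (hS : ∀ c y, ((M.map fun z => z.1 * c + z.2).count y : ZMod p) + κ c = (S c).val.count y)
    (hA : ∀ m, ((M.map Prod.fst + A.val).count m : ZMod p) = κ') (h0 : (0 : F) ∉ A)
    (hScard : ∀ c, (S c).card = p * s c) (hAcard : A.card = p * τ)
    (hQ : p * (ν + τ) + 1 < Fintype.card F) (hτ : ν + τ < p * τ) :
    2 * (Fintype.card F * (ν + 1)) ≤ 2 * ∑ c, s c + p * (ν + τ) * (ν + τ + 1) := by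
  set N : Multiset F[X] := M.map fun z => C z.1 * X + C z.2 with hN
  have hNdeg : ∀ g ∈ N, g.natDegree ≤ 1 := by
    simp only [hN, Multiset.mem_map]
    rintro _ ⟨z, -, rfl⟩
    exact natDegree_linear_le
  have hNlead : N.map (coeff · 1) = M.map Prod.fst := by simp [hN, Multiset.map_map]
  have hNeval : ∀ c, N.map (evalRingHom c) = M.map fun z => z.1 * c + z.2 := by
    simp [hN, Multiset.map_map]
  have hinj := injective_coeffWindow_mulVecLin (n := p * ν) (K := ν + τ + 1) hA h0
    (by rw [hAcard, ← mul_add]; omega) (by rw [hAcard]; ring)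
    (by rw [hAcard, ← mul_add]; exact Nat.mul_lt_mul_of_pos_left hτ (Fact.out : p.Prime).pos)
  rw [hAcard, ← hNlead] at hinj
  have hcorank := sum_corank_coeffWindow_add_le (natDegree_coeff_reciprocalPoly_le hNdeg)
    (coeff_coeff_reciprocalPoly hNdeg) hinj
  simp_rw [← reciprocalPoly_map, hNeval] at hcorank
  have hsum := Finset.sum_le_sum fun c (_ : c ∈ Finset.univ) =>
    succ_le_corank_coeffWindow_add (hS c) (hScard c) hQ
  rw [Finset.sum_const, Finset.card_univ, smul_eq_mul, Finset.sum_add_distrib] at hsum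
  have hgauss := two_mul_sum_fin_mul p (ν + τ)
  have hmul : (ν + τ + 1) * (p * ν + p * τ) = p * (ν + τ) * (ν + τ + 1) := by ring
  omega

end CorankSum

/-! ### Projective point sets and the code of hyperplanes -/

section LinearAlgebra

variable {K E : Type*} [Field K] [AddCommGroup E] [Module K E]

lemma exists_ker_eq_of_finrank_add_one [FiniteDimensional K E] {H : Submodule K E}
    (hH : finrank K H + 1 = finrank K E) :
    ∃ h : Dual K E, LinearMap.ker h = H := by
  have hlt : H < ⊤ := by
    refine lt_top_iff_ne_top.2 ?_
    rintro rfl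
    rw [finrank_top] at hH
    omega
  obtain ⟨h, h0, hle⟩ := Submodule.exists_le_ker_of_lt_top H hlt
  refine ⟨h, (Submodule.eq_of_le_of_finrank_eq hle ?_).symm⟩
  have := Module.Dual.finrank_ker_add_one_of_ne_zero h0
  omega

lemma finrank_span_pair {u v : E} (huv : LinearIndependent K ![u, v]) :
    finrank K (Submodule.span K {u, v}) = 2 := by
  rw [← Matrix.range_cons_cons_empty u v ![], finrank_span_eq_card huv, Fintype.card_fin]

lemma injective_span_add_smul {u v : E}
    (huv : LinearIndependent K ![u, v]) :
    Function.Injective fun y : K => Submodule.span K {u + y • v} := by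
  intro y y' h
  have hmem : u + y • v ∈ Submodule.span K {u + y' • v} := by
    rw [← show Submodule.span K {u + y • v} = Submodule.span K {u + y' • v} from h]
    exact Submodule.mem_span_singleton_self _
  obtain ⟨a, ha⟩ := Submodule.mem_span_singleton.1 hmem
  have hzero := LinearIndependent.pair_iff.1 huv (a - 1) (a * y' - y)
    (by rw [← sub_eq_zero.2 ha]; module)
  obtain ⟨h1, h2⟩ := hzero
  obtain rfl : a = 1 := sub_eq_zero.1 h1
  linear_combination -h2

lemma countP_apply_add_smul_eq_zero [DecidableEq K] (D : Multiset (Dual K E)) (u v : E) (y : K) :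
    D.countP (fun h => h (u + y • v) = 0)
      = ((D.filter fun h => h v ≠ 0).map fun h => -h u / h v).count y
        + D.countP fun h => h v = 0 ∧ h u = 0 := by
  induction D using Multiset.induction_on with
  | empty => simp
  | cons h D ih =>
    rw [Multiset.countP_cons, Multiset.countP_cons, ih]
    by_cases hv : h v = 0
    · rw [Multiset.filter_cons_of_neg (p := fun h : Dual K E => h v ≠ 0) _ (not_not.2 hv)]
      simp [hv, add_assoc]
    · have hroot : h (u + y • v) = 0 ↔ y = -h u / h v := by
        rw [eq_div_iff hv, map_add, map_smul, smul_eq_mul, eq_neg_iff_add_eq_zero, add_comm]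
      rw [Multiset.filter_cons_of_pos (p := fun h : Dual K E => h v ≠ 0) _ hv, Multiset.map_cons,
        Multiset.count_cons]
      simp only [hroot, hv, false_and, if_false]
      omega

end LinearAlgebra

section Cone

variable {F : Type} [Field F] {n : ℕ}

/-- The affine cone over `V` without its apex: the vectors spanning a point of `V`. It allows points
to be handled through representing vectors. -/
def cone (V : Set (ProjPoint F n)) : Set (Fin n → F) :=
  {v | ∃ P ∈ V, P.1 = Submodule.span F {v}}

lemma eq_span_singleton_iff {P : ProjPoint F n} {v : Fin n → F} :
    P.1 = Submodule.span F {v} ↔ v ∈ P.1 ∧ v ≠ 0 := by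
  constructor
  · intro hP
    refine ⟨hP ▸ Submodule.mem_span_singleton_self v, ?_⟩
    rintro rfl
    have hfin := P.2
    rw [hP, Submodule.span_zero_singleton, finrank_bot] at hfin
    exact zero_ne_one hfin
  · rintro ⟨hv, hv0⟩
    have hle : Submodule.span F {v} ≤ P.1 := (Submodule.span_singleton_le_iff_mem v _).2 hv
    exact (Submodule.eq_of_le_of_finrank_eq hle (by rw [finrank_span_singleton hv0, P.2])).symm

lemma exists_eq_span_singleton (P : ProjPoint F n) : ∃ v, P.1 = Submodule.span F {v} := by
  have hbot : P.1 ≠ ⊥ := Submodule.one_le_finrank_iff.1 P.2.ge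
  obtain ⟨v, hv⟩ := Submodule.exists_mem_ne_zero_of_ne_bot hbot
  exact ⟨v, eq_span_singleton_iff.2 hv⟩

lemma exists_projPoint_eq_span_singleton {v : Fin n → F} (hv : v ≠ 0) :
    ∃ P : ProjPoint F n, P.1 = Submodule.span F {v} :=
  ⟨⟨_, finrank_span_singleton hv⟩, rfl⟩

lemma ne_zero_of_mem_cone {V : Set (ProjPoint F n)} {v : Fin n → F} (hv : v ∈ cone V) :
    v ≠ 0 := by
  obtain ⟨P, -, hP⟩ := hv
  exact (eq_span_singleton_iff.1 hP).2

lemma mem_cone_iff {V : Set (ProjPoint F n)} {P : ProjPoint F n} {v : Fin n → F}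
    (hP : P.1 = Submodule.span F {v}) : v ∈ cone V ↔ P ∈ V := by
  refine ⟨?_, fun h => ⟨P, h, hP⟩⟩
  rintro ⟨P', hP', hv⟩
  rwa [Subtype.ext (hP.trans hv.symm)]

lemma mem_pointsIn_iff {W : Submodule F (Fin n → F)} {P : ProjPoint F n} {v : Fin n → F}
    (hP : P.1 = Submodule.span F {v}) : P ∈ pointsIn F n W ↔ v ∈ W := by
  rw [pointsIn, Set.mem_ofPred_eq, hP, Submodule.span_singleton_le_iff_mem]

lemma cone_pointsIn (W : Submodule F (Fin n → F)) :
    cone (pointsIn F n W) = (W : Set (Fin n → F)) \ {0} := by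
  ext v
  constructor
  · rintro ⟨P, hPW, hP⟩
    exact ⟨hPW (eq_span_singleton_iff.1 hP).1, (eq_span_singleton_iff.1 hP).2⟩
  · rintro ⟨hvW, hv0⟩
    obtain ⟨P, hP⟩ := exists_projPoint_eq_span_singleton hv0
    exact ⟨P, (mem_pointsIn_iff hP).2 hvW, hP⟩

instance inst_s15 [Finite F] : Finite (ProjPoint F n) :=
  inferInstanceAs (Finite {W : Submodule F (Fin n → F) // finrank F W = 1})

variable [Fintype F]

lemma ncard_submodule_sdiff_zero (W : Submodule F (Fin n → F)) :
    ((W : Set (Fin n → F)) \ {0}).ncard = Fintype.card F ^ finrank F W - 1 := by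
  rw [Set.ncard_sdiff_singleton_of_mem W.zero_mem, ← Nat.card_coe_set_eq,
    ← Nat.card_eq_fintype_card, ← Module.natCard_eq_pow_finrank]
  rfl

lemma ncard_cone (V : Set (ProjPoint F n)) :
    (cone V).ncard = V.ncard * (Fintype.card F - 1) := by
  classical
  have := Fintype.ofFinite (ProjPoint F n)
  rw [Set.ncard_eq_toFinset_card', Set.ncard_eq_toFinset_card']
  have hcount := Finset.card_mul_eq_card_mul (s := V.toFinset) (t := (cone V).toFinset)
    (fun P v => P.1 = Submodule.span F {v}) (m := Fintype.card F - 1) (n := 1) ?_ ?_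
  · rw [hcount, mul_one]
  · intro P hP
    have hset : (((cone V).toFinset.bipartiteAbove (fun (P : ProjPoint F n) v =>
        P.1 = Submodule.span F {v}) P : Finset (Fin n → F)) : Set (Fin n → F))
        = (P.1 : Set (Fin n → F)) \ {0} := by
      ext v
      simp only [Finset.coe_bipartiteAbove, Set.mem_toFinset, Set.mem_ofPred_eq]
      rw [eq_span_singleton_iff]
      refine ⟨And.right, fun h => ⟨?_, h⟩⟩
      exact (mem_cone_iff (eq_span_singleton_iff.2 h)).2 (Set.mem_toFinset.1 hP)
    rw [← Set.ncard_coe_finset, hset, ncard_submodule_sdiff_zero, P.2, pow_one]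
  · intro v hv
    obtain ⟨P, hPV, hP⟩ := Set.mem_toFinset.1 hv
    rw [Finset.card_eq_one]
    refine ⟨P, ?_⟩
    ext P'
    simp only [Finset.mem_bipartiteBelow, Set.mem_toFinset, Finset.mem_singleton]
    refine ⟨fun h => Subtype.ext (h.2.trans hP.symm), ?_⟩
    rintro rfl
    exact ⟨hPV, hP⟩

end Cone

section HypCode

variable {F : Type} [Field F] {p n : ℕ}

open Classical in
lemma exists_multiset_dual_of_mem_hypCode [NeZero n] [NeZero p] {f : ProjPoint F n → ZMod p}
    (hf : f ∈ hypCode F p n) : ∃ D : Multiset (Dual F (Fin n → F)),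
      ∀ P : ProjPoint F n, f P = (D.countP fun h => P.1 ≤ LinearMap.ker h : ℕ) := by
  induction hf using Submodule.span_induction with
  | mem f hf =>
    obtain ⟨H, hH, rfl⟩ := hf
    obtain ⟨h, rfl⟩ := exists_ker_eq_of_finrank_add_one (H := H) (by
      rw [hH, finrank_fin_fun, Nat.sub_add_cancel (NeZero.one_le)])
    refine ⟨{h}, fun P => ?_⟩
    by_cases hP : P.1 ≤ LinearMap.ker h <;> simp [charVec, pointsIn, hP, ← Multiset.cons_zero]
  | zero => exact ⟨0, fun P => by simp⟩
  | add f g _ _ hf hg =>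
    obtain ⟨D₁, hD₁⟩ := hf
    obtain ⟨D₂, hD₂⟩ := hg
    exact ⟨D₁ + D₂, fun P => by simp [hD₁, hD₂]⟩
  | smul a f _ hf =>
    obtain ⟨D, hD⟩ := hf
    exact ⟨a.val • D, fun P => by simp [hD, Multiset.countP_nsmul]⟩

lemma exists_multiset_dual_of_charVec_mem_hypCode [DecidableEq F] [NeZero n] [NeZero p]
    {V : Set (ProjPoint F n)} (hV : charVec F p n V ∈ hypCode F p n) :
    ∃ D : Multiset (Dual F (Fin n → F)),
      ∀ v ≠ 0, ((D.countP fun h => h v = 0 : ℕ) : ZMod p) = (cone V).indicator 1 v := by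
  classical
  obtain ⟨D, hD⟩ := exists_multiset_dual_of_mem_hypCode hV
  refine ⟨D, fun v hv => ?_⟩
  obtain ⟨P, hP⟩ := exists_projPoint_eq_span_singleton hv
  calc ((D.countP fun h => h v = 0 : ℕ) : ZMod p)
      = (D.countP fun h => P.1 ≤ LinearMap.ker h : ℕ) := by
        simp only [hP, Submodule.span_singleton_le_iff_mem, LinearMap.mem_ker]
    _ = charVec F p n V P := (hD P).symm
    _ = (cone V).indicator 1 v := by
        simp only [charVec, Set.indicator_apply, mem_cone_iff hP, Pi.one_apply]

variable [Finite F]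

lemma finsum_mem_pointsIn_charVec (V : Set (ProjPoint F n)) (W : Submodule F (Fin n → F)) :
    ∑ᶠ P ∈ pointsIn F n W, charVec F p n V P = (secant F n V W : ZMod p) := by
  rw [finsum_mem_def, charVec, Set.indicator_indicator, Set.inter_comm, ← finsum_mem_def,
    finsum_mem_eq_finite_toFinset_sum _ (Set.toFinite _), secant,
    Set.ncard_eq_toFinset_card _ (Set.toFinite _)]
  simp

lemma natCast_ncard_pointsIn [CharP F p] {W : Submodule F (Fin n → F)}
    (hW : 0 < finrank F W) : ((pointsIn F n W).ncard : ZMod p) = 1 := by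
  have := Fintype.ofFinite F
  have hcard : ((Fintype.card F : ℕ) : ZMod p) = 0 := by
    rw [CharP.cast_eq_zero_iff _ p, ← CharP.cast_eq_zero_iff F p]
    exact FiniteField.cast_card_eq_zero F
  have hcone := ncard_cone (pointsIn F n W)
  rw [cone_pointsIn, ncard_submodule_sdiff_zero] at hcone
  have h := congrArg (Nat.cast : ℕ → ZMod p) hcone
  rw [Nat.cast_mul, Nat.cast_pred (pow_pos Fintype.card_pos _), Nat.cast_pred Fintype.card_pos,
    Nat.cast_pow, hcard, zero_pow hW.ne'] at h
  linear_combination h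

lemma finsum_mem_pointsIn_eq_of_mem_hypCode [CharP F p] {f : ProjPoint F n → ZMod p}
    (hf : f ∈ hypCode F p n) {W : Submodule F (Fin n → F)} (hW : 2 ≤ finrank F W) :
    ∑ᶠ P ∈ pointsIn F n W, f P = ∑ᶠ P ∈ pointsIn F n ⊤, f P := by
  induction hf using Submodule.span_induction with
  | mem f hf =>
    obtain ⟨H, hH, rfl⟩ := hf
    have hsum : ∀ U : Submodule F (Fin n → F), 2 ≤ finrank F U →
        ∑ᶠ P ∈ pointsIn F n U, charVec F p n (pointsIn F n H) P = 1 := by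
      intro U hU
      have hinter : pointsIn F n H ∩ pointsIn F n U = pointsIn F n (H ⊓ U) := by
        ext P
        simp [pointsIn]
      have hdim := Submodule.finrank_sup_add_finrank_inf_eq H U
      have hle := Submodule.finrank_le (H ⊔ U)
      rw [finrank_fin_fun] at hle
      rw [finsum_mem_pointsIn_charVec, secant, hinter, natCast_ncard_pointsIn (by omega)]
    rw [hsum W hW, hsum ⊤ (hW.trans (Submodule.finrank_mono le_top))]
  | zero => simp
  | add f g _ _ hf hg =>
    simp only [Pi.add_apply]
    rw [finsum_mem_add_distrib (Set.toFinite _), finsum_mem_add_distrib (Set.toFinite _), hf, hg]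
  | smul a f _ hf =>
    simp only [Pi.smul_apply]
    rw [← smul_finsum_mem (Set.toFinite _), ← smul_finsum_mem (Set.toFinite _), hf]

lemma natCast_secant [CharP F p] {V : Set (ProjPoint F n)}
    (hV : charVec F p n V ∈ hypCode F p n) {W : Submodule F (Fin n → F)}
    (hW : 2 ≤ finrank F W) : (secant F n V W : ZMod p) = V.ncard := by
  have htop : secant F n V ⊤ = V.ncard := by
    simp [secant, pointsIn]
  rw [← htop, ← finsum_mem_pointsIn_charVec, ← finsum_mem_pointsIn_charVec,
    finsum_mem_pointsIn_eq_of_mem_hypCode hV hW]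

lemma exists_pair_of_one_lt_secant {V : Set (ProjPoint F n)} {ℓ : Submodule F (Fin n → F)}
    (hℓ : finrank F ℓ = 2) (hsec : 1 < secant F n V ℓ) :
    ∃ u ∈ cone V, ∃ v ∈ cone V, LinearIndependent F ![u, v] ∧ Submodule.span F {u, v} = ℓ := by
  obtain ⟨P, ⟨hPV, hPℓ⟩, P', ⟨hPV', hPℓ'⟩, hne⟩ := (Set.one_lt_ncard (Set.toFinite _)).1 hsec
  obtain ⟨u, hu⟩ := exists_eq_span_singleton P
  obtain ⟨v, hv⟩ := exists_eq_span_singleton P'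
  have huv : LinearIndependent F ![u, v] := by
    refine (LinearIndependent.pair_iff' (eq_span_singleton_iff.1 hu).2).2 fun a ha => hne ?_
    have hvP : v ∈ P.1 := ha ▸ P.1.smul_mem a (eq_span_singleton_iff.1 hu).1
    have hPv := eq_span_singleton_iff.2 ⟨hvP, (eq_span_singleton_iff.1 hv).2⟩
    exact Subtype.ext (hPv.trans hv.symm)
  refine ⟨u, ⟨P, hPV, hu⟩, v, ⟨P', hPV', hv⟩, huv, ?_⟩
  refine Submodule.eq_of_le_of_finrank_eq ?_ ?_
  · rw [Submodule.span_le, Set.pair_subset_iff]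
    exact ⟨(mem_pointsIn_iff hu).1 hPℓ, (mem_pointsIn_iff hv).1 hPℓ'⟩
  · rw [hℓ, finrank_span_pair huv]

end HypCode

/-! ### Traces on the lines of a plane -/

section LineTrace

variable {F : Type} [Field F] [Fintype F] {n : ℕ}

open Classical in
/-- The parameters `y` for which the point of the line through `u` and `v` spanned by `u + y • v`
belongs to `V`; the point spanned by `v` is not parametrised. -/
noncomputable def lineTrace (V : Set (ProjPoint F n)) (u v : Fin n → F) : Finset F :=
  {y | u + y • v ∈ cone V}

lemma mem_lineTrace {V : Set (ProjPoint F n)} {u v : Fin n → F} {y : F} :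
    y ∈ lineTrace V u v ↔ u + y • v ∈ cone V := by
  simp [lineTrace]

lemma image_val_inter_pointsIn_span_pair {V : Set (ProjPoint F n)} {u v : Fin n → F}
    (hv : v ∈ cone V) :
    (fun P : ProjPoint F n => P.1) '' (V ∩ pointsIn F n (Submodule.span F {u, v}))
      = insert (Submodule.span F {v})
        ((fun y => Submodule.span F {u + y • v}) '' (lineTrace V u v : Set F)) := by
  ext U
  constructor
  · rintro ⟨P, ⟨hPV, hPle⟩, rfl⟩
    obtain ⟨w, hw⟩ := exists_eq_span_singleton P
    obtain ⟨hwP, hw0⟩ := eq_span_singleton_iff.1 hw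
    obtain ⟨a, b, rfl⟩ := Submodule.mem_span_pair.1 (hPle hwP)
    rcases eq_or_ne a 0 with rfl | ha
    · left
      have hb : b ≠ 0 := by rintro rfl; simp at hw0
      simp only [hw, zero_smul, zero_add, Submodule.span_singleton_smul_eq hb.isUnit]
    · right
      have hscale : a • u + b • v = a • (u + (b / a) • v) := by
        rw [smul_add, smul_smul, mul_div_cancel₀ b ha]
      rw [hscale, Submodule.span_singleton_smul_eq ha.isUnit] at hw
      exact ⟨b / a, mem_lineTrace.2 ⟨P, hPV, hw⟩, hw.symm⟩
  · have himage : ∀ w ∈ cone V, w ∈ Submodule.span F {u, v} → Submodule.span F {w} ∈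
        (fun P : ProjPoint F n => P.1) '' (V ∩ pointsIn F n (Submodule.span F {u, v})) := by
      rintro w ⟨P, hPV, hP⟩ hw
      exact ⟨P, ⟨hPV, (mem_pointsIn_iff hP).2 hw⟩, hP⟩
    rintro (rfl | ⟨y, hy, rfl⟩)
    · exact himage v hv (Submodule.mem_span_pair.2 ⟨0, 1, by simp⟩)
    · exact himage _ (mem_lineTrace.1 hy) (Submodule.mem_span_pair.2 ⟨1, y, by simp⟩)

lemma secant_span_pair {V : Set (ProjPoint F n)} {u v : Fin n → F}
    (huv : LinearIndependent F ![u, v]) (hv : v ∈ cone V) :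
    secant F n V (Submodule.span F {u, v}) = (lineTrace V u v).card + 1 := by
  have hnot : Submodule.span F {v} ∉
      (fun y => Submodule.span F {u + y • v}) '' (lineTrace V u v : Set F) := by
    rintro ⟨y, -, hy⟩
    have hmem : u + y • v ∈ Submodule.span F {v} := hy ▸ Submodule.mem_span_singleton_self _
    obtain ⟨a, ha⟩ := Submodule.mem_span_singleton.1 hmem
    have := (LinearIndependent.pair_iff.1 huv 1 (y - a) (by rw [sub_smul, ha]; module)).1
    exact one_ne_zero this
  have hval : Function.Injective fun P : ProjPoint F n => P.1 := fun _ _ => Subtype.ext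
  rw [secant, ← Set.ncard_image_of_injective _ hval,
    image_val_inter_pointsIn_span_pair hv, Set.ncard_insert_of_notMem hnot,
    Set.ncard_image_of_injective _ (injective_span_add_smul huv), Set.ncard_coe_finset]

end LineTrace

section Plane

variable {F : Type} [Field F] [Fintype F] {p n : ℕ}

lemma dvd_card_lineTrace [CharP F p] {V : Set (ProjPoint F n)}
    (hcode : charVec F p n V ∈ hypCode F p n) (hV : (V.ncard : ZMod p) = 1) {u v : Fin n → F}
    (huv : LinearIndependent F ![u, v]) (hv : v ∈ cone V) : p ∣ (lineTrace V u v).card := by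
  have h := natCast_secant hcode (finrank_span_pair huv).ge
  rw [secant_span_pair huv hv, hV, Nat.cast_succ, add_eq_right] at h
  exact (ZMod.natCast_eq_zero_iff _ _).1 h

lemma exists_secant_span_pair_add_mul_eq [CharP F p] {V : Set (ProjPoint F n)}
    (hcode : charVec F p n V ∈ hypCode F p n) (hV : (V.ncard : ZMod p) = 1) {u v : Fin n → F}
    (huv : LinearIndependent F ![u, v]) (hv : v ∈ cone V) :
    ∃ τ, secant F n V (Submodule.span F {u, v}) + p * τ = Fintype.card F + 1 := by
  obtain ⟨τ, hτ⟩ := Nat.dvd_sub ((CharP.cast_eq_zero_iff F p _).1 (FiniteField.cast_card_eq_zero F))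
    (dvd_card_lineTrace hcode hV huv hv)
  have hle := Finset.card_le_univ (lineTrace V u v)
  rw [secant_span_pair huv hv]
  exact ⟨τ, by omega⟩

lemma exists_multiset_dual_count_eq_count_lineTrace [DecidableEq F] [NeZero n] [NeZero p]
    {V : Set (ProjPoint F n)} (hcode : charVec F p n V ∈ hypCode F p n) :
    ∃ D : Multiset (Dual F (Fin n → F)), ∀ u w y, u + y • w ≠ 0 →
      (((D.filter fun h => h w ≠ 0).map fun h => -h u / h w).count y : ZMod p)
        + (D.countP fun h => h w = 0 ∧ h u = 0 : ℕ) = (lineTrace V u w).val.count y := by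
  classical
  obtain ⟨D, hD⟩ := exists_multiset_dual_of_charVec_mem_hypCode hcode
  refine ⟨D, fun u w y hne => ?_⟩
  have h := hD _ hne
  rw [countP_apply_add_smul_eq_zero, Nat.cast_add] at h
  rw [h, Multiset.count_eq_of_nodup (Finset.nodup _)]
  simp [Set.indicator_apply, mem_lineTrace]

lemma exists_multiset_count_eq_count_lineTrace [DecidableEq F] [NeZero n] [NeZero p]
    {V : Set (ProjPoint F n)} (hcode : charVec F p n V ∈ hypCode F p n) {u v w : Fin n → F}
    (hvw : LinearIndependent F ![v, w]) (hu : u ∉ Submodule.span F {v, w}) :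
    ∃ (M : Multiset (F × F)) (κ : F → ZMod p) (κ' : ZMod p),
      (∀ c y, ((M.map fun z => z.1 * c + z.2).count y : ZMod p) + κ c
        = (lineTrace V (u + c • v) w).val.count y) ∧
      ∀ m, ((M.map Prod.fst + (lineTrace V v w)ᶜ.val).count m : ZMod p) = κ' := by
  obtain ⟨D, hD⟩ := exists_multiset_dual_count_eq_count_lineTrace hcode
  have hne : ∀ c y, u + c • v + y • w ≠ 0 := fun c y h =>
    hu (Submodule.mem_span_pair.2 ⟨-c, -y, by rw [← sub_eq_zero, ← neg_eq_zero, ← h]; module⟩)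
  have hne' : ∀ y, v + y • w ≠ 0 := fun y h =>
    one_ne_zero (LinearIndependent.pair_iff.1 hvw 1 y (by rwa [one_smul])).1
  refine ⟨(D.filter fun h => h w ≠ 0).map fun h => (-h v / h w, -h u / h w),
    fun c => (D.countP fun h => h w = 0 ∧ h (u + c • v) = 0 : ℕ),
    1 - (D.countP fun h => h w = 0 ∧ h v = 0 : ℕ), fun c y => ?_, fun m => ?_⟩
  · have hslope : ∀ h : Dual F (Fin n → F),
        -h v / h w * c + -h u / h w = -h (u + c • v) / h w := by
      intro h
      rw [map_add, map_smul, smul_eq_mul]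
      ring
    simp only [← hD _ _ _ (hne c y), Multiset.map_map, Function.comp_apply, hslope]
  · have hcompl : ((lineTrace V v w).val.count m : ZMod p) + ((lineTrace V v w)ᶜ.val.count m : ℕ)
        = 1 := by
      simp only [Multiset.count_eq_of_nodup (Finset.nodup _), Finset.mem_val, Finset.mem_compl]
      split_ifs <;> simp
    simp only [Multiset.map_map, Function.comp_def, Multiset.count_add, Nat.cast_add]
    linear_combination hD _ _ _ (hne' m) + hcompl

lemma two_mul_card_mul_succ_le_of_secant [Fact p.Prime] [CharP F p] [NeZero n]
    {V : Set (ProjPoint F n)} (hcode : charVec F p n V ∈ hypCode F p n)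
    (hV : (V.ncard : ZMod p) = 1) {u v w : Fin n → F} (hv : v ∈ cone V) (hw : w ∈ cone V)
    (hvw : LinearIndependent F ![v, w]) (hu : u ∉ Submodule.span F {v, w}) {ν τ : ℕ}
    (hsec : secant F n V (Submodule.span F {v, w}) + p * τ = Fintype.card F + 1)
    (hQ : p * (ν + τ) + 1 < Fintype.card F) (hτ : ν + τ < p * τ) :
    2 * (p * (Fintype.card F * (ν + 1)))
      ≤ 2 * ∑ c : F, (lineTrace V (u + c • v) w).card + p * (p * (ν + τ) * (ν + τ + 1)) := by
  classical
  obtain ⟨M, κ, κ', hS, hA⟩ := exists_multiset_count_eq_count_lineTrace hcode hvw hu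
  have hind : ∀ c : F, LinearIndependent F ![u + c • v, w] := by
    intro c
    rw [LinearIndependent.pair_symm_iff, LinearIndependent.pair_iff' (ne_zero_of_mem_cone hw)]
    exact fun a ha => hu (Submodule.mem_span_pair.2 ⟨-c, a, by rw [ha]; module⟩)
  choose s hs using fun c => dvd_card_lineTrace hcode hV (hind c) hw
  have h0 : (0 : F) ∉ (lineTrace V v w)ᶜ := by simpa [mem_lineTrace] using hv
  have hAcard : (lineTrace V v w)ᶜ.card = p * τ := by
    rw [secant_span_pair hvw hw] at hsec
    rw [Finset.card_compl]
    omega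
  have h := two_mul_card_mul_succ_le hS hA h0 hs hAcard hQ hτ
  simp only [hs, ← Finset.mul_sum]
  calc 2 * (p * (Fintype.card F * (ν + 1))) = p * (2 * (Fintype.card F * (ν + 1))) := by ring
    _ ≤ p * (2 * ∑ c, s c + p * (ν + τ) * (ν + τ + 1)) := Nat.mul_le_mul_left p h
    _ = 2 * (p * ∑ c, s c) + p * (p * (ν + τ) * (ν + τ + 1)) := by ring

end Plane

section Averaging

lemma exists_card_mul_card_filter_le {G ι : Type*} [AddCommGroup G] [DecidableEq G] [Fintype ι]
    (g : ι → G) {T : Finset G} (hT : T.Nonempty) (X : Finset G) :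
    ∃ v ∈ T, T.card * ({i | v + g i ∈ X} : Finset ι).card
      ≤ Fintype.card ι * X.card := by
  have hsum : ∑ v ∈ T, ({i | v + g i ∈ X} : Finset ι).card
      ≤ Fintype.card ι * X.card := by
    simp only [Finset.card_filter]
    rw [Finset.sum_comm, ← smul_eq_mul, ← Finset.card_univ, ← Finset.sum_const]
    refine Finset.sum_le_sum fun i _ => ?_
    rw [← Finset.card_filter]
    refine Finset.card_le_card_of_injOn (· + g i) ?_ (add_left_injective _).injOn
    intro v hv
    exact (Finset.mem_filter.1 hv).2
  obtain ⟨v, hv, hle⟩ := Finset.exists_min_image T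
    (fun v => ({i | v + g i ∈ X} : Finset ι).card) hT
  refine ⟨v, hv, le_trans ?_ hsum⟩
  rw [← smul_eq_mul]
  exact Finset.card_nsmul_le_sum _ _ _ hle

variable {F : Type} [Field F] [Fintype F] {n : ℕ}

lemma exists_card_mul_sum_card_lineTrace_le (V : Set (ProjPoint F n)) (v w : Fin n → F)
    {W : Submodule F (Fin n → F)} (hW : W ≠ ⊤) :
    ∃ u ∉ W, (Fintype.card F ^ n - Fintype.card F ^ finrank F W)
        * ∑ c : F, (lineTrace V (u + c • v) w).card
      ≤ Fintype.card F ^ 2 * (V.ncard * (Fintype.card F - 1)) := by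
  classical
  set T : Finset (Fin n → F) := {u | u ∉ W} with hTdef
  have hT : T.Nonempty := by
    obtain ⟨u, hu⟩ := SetLike.exists_not_mem_of_ne_top W hW
    exact ⟨u, by simpa [hTdef] using hu⟩
  have hTcard : T.card = Fintype.card F ^ n - Fintype.card F ^ finrank F W := by
    have hcompl : (T : Set (Fin n → F)) = (W : Set (Fin n → F))ᶜ := by ext; simp [hTdef]
    rw [← Set.ncard_coe_finset, hcompl, Set.ncard_compl, Nat.card_eq_fintype_card,
      Fintype.card_pi_const, ← Nat.card_coe_set_eq, ← Nat.card_eq_fintype_card (α := F),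
      ← Module.natCard_eq_pow_finrank]
    rfl
  obtain ⟨u, hu, hle⟩ := exists_card_mul_card_filter_le
    (fun z : F × F => z.1 • v + z.2 • w) hT (cone V).toFinset
  refine ⟨u, by simpa [hTdef] using hu, ?_⟩
  have hfiber : ({z : F × F | u + (z.1 • v + z.2 • w) ∈ (cone V).toFinset} : Finset _).card
      = ∑ c : F, (lineTrace V (u + c • v) w).card := by
    simp only [Finset.card_filter, lineTrace, Fintype.sum_prod_type, Set.mem_toFinset, add_assoc]
  rwa [hfiber, hTcard, Fintype.card_prod, ← sq, ← Set.ncard_eq_toFinset_card', ncard_cone] at hle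

end Averaging

/-! ### Quasi-Hermitian varieties -/

section QuasiHermitian

lemma natCast_eq_one_of_quasiHermitian_card {p q r N : ℕ} (hpq : p ∣ q) (hr : r ≠ 0)
    (hN : (N : ℤ) * ((q : ℤ) ^ 2 - 1)
      = ((q : ℤ) ^ (r + 1) + (-1) ^ r) * ((q : ℤ) ^ r - (-1) ^ r)) :
    (N : ZMod p) = 1 := by
  have h := congrArg (Int.cast : ℤ → ZMod p) hN
  push_cast at h
  rw [(CharP.cast_eq_zero_iff (ZMod p) p q).2 hpq, zero_pow two_ne_zero, zero_pow hr,
    zero_pow r.succ_ne_zero] at h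
  have hsq : (-1 : ZMod p) ^ r * (-1) ^ r = 1 := by rw [← mul_pow, neg_one_mul, neg_neg, one_pow]
  linear_combination -h + hsq

lemma quasiHermitian_card_mul_le {q r N : ℕ} (hq : 0 < q) (hr : 2 ≤ r)
    (hN : (N : ℤ) * ((q : ℤ) ^ 2 - 1)
      = ((q : ℤ) ^ (r + 1) + (-1) ^ r) * ((q : ℤ) ^ r - (-1) ^ r)) :
    N * (q ^ 2 - 1) ≤ (q ^ 3 + 1) * ((q ^ 2) ^ (r - 1) - 1) := by
  obtain ⟨k, rfl⟩ := Nat.exists_eq_add_of_le' hr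
  zify [Nat.one_le_pow 2 q hq, Nat.one_le_pow (k + 2 - 1) _ (Nat.pow_pos hq)]
  rw [hN, ← sub_nonneg]
  have hpow : (1 : ℤ) ≤ (q : ℤ) ^ k := one_le_pow₀ (mod_cast hq)
  rcases k.even_or_odd with hk | hk
  · rw [(hk.add even_two).neg_one_pow]
    calc (0 : ℤ) ≤ (q : ℤ) ^ 2 * (((q : ℤ) ^ k - 1) * ((q : ℤ) ^ k + q)) :=
          mul_nonneg (sq_nonneg _) (mul_nonneg (by omega) (by omega))
      _ = _ := by rw [show k + 2 - 1 = k + 1 from rfl, ← pow_mul]; ring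
  · rw [(hk.add_even even_two).neg_one_pow]
    have hqk : (q : ℤ) ≤ (q : ℤ) ^ k := le_self_pow₀ (mod_cast hq) hk.pos.ne'
    calc (0 : ℤ) ≤ (q : ℤ) ^ 2 * (((q : ℤ) ^ k - q) * ((q : ℤ) ^ k + 1)) :=
          mul_nonneg (sq_nonneg _) (mul_nonneg (by omega) (by omega))
      _ = _ := by rw [show k + 2 - 1 = k + 1 from rfl, ← pow_mul]; ring

lemma exists_sum_card_lineTrace_le {F : Type} [Field F] [Fintype F] {q r : ℕ}
    (hr : 2 ≤ r) (hF : Fintype.card F = q ^ 2) {V : Set (ProjPoint F (r + 1))}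
    (hcard : (V.ncard : ℤ) * ((q : ℤ) ^ 2 - 1)
      = ((q : ℤ) ^ (r + 1) + (-1) ^ r) * ((q : ℤ) ^ r - (-1) ^ r))
    {ℓ : Submodule F (Fin (r + 1) → F)} (hℓ : finrank F ℓ = 2) (v w : Fin (r + 1) → F) :
    ∃ u ∉ ℓ, ∑ c : F, (lineTrace V (u + c • v) w).card ≤ q ^ 3 + 1 := by
  have hq : 1 < q ^ 2 := hF ▸ Fintype.one_lt_card
  have hne : ℓ ≠ ⊤ := by
    rintro rfl
    rw [finrank_top, finrank_fin_fun] at hℓ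
    omega
  obtain ⟨u, hu, hle⟩ := exists_card_mul_sum_card_lineTrace_le V v w hne
  refine ⟨u, hu, ?_⟩
  have hV := quasiHermitian_card_mul_le (Nat.pos_of_ne_zero (by rintro rfl; simp at hq)) hr hcard
  have hfactor : (q ^ 2) ^ (r + 1) - (q ^ 2) ^ 2 = (q ^ 2) ^ 2 * ((q ^ 2) ^ (r - 1) - 1) := by
    rw [Nat.mul_sub, mul_one, ← pow_add, show 2 + (r - 1) = r + 1 by omega]
  have hpos : 0 < (q ^ 2) ^ 2 * ((q ^ 2) ^ (r - 1) - 1) :=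
    Nat.mul_pos (pow_pos (by omega) 2) (Nat.sub_pos_of_lt (Nat.one_lt_pow (by omega) hq))
  rw [hF, hℓ, hfactor] at hle
  refine Nat.le_of_mul_le_mul_left ?_ hpos
  calc _ ≤ (q ^ 2) ^ 2 * (V.ncard * (q ^ 2 - 1)) := hle
    _ ≤ (q ^ 2) ^ 2 * ((q ^ 3 + 1) * ((q ^ 2) ^ (r - 1) - 1)) := Nat.mul_le_mul_left _ hV
    _ = _ := by ring

lemma two_mul_pow_six_add_lt {p τ : ℕ} (hp : 2 < p) (hτ : τ ≤ p) :
    2 * ((p ^ 2) ^ 3 + 1) + p * (p * (p + τ) * (p + τ + 1)) < 2 * (p * (p ^ 4 * (p + 1))) := by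
  have hmono : p * (p * (p + τ) * (p + τ + 1)) ≤ p * (p * (p + p) * (p + p + 1)) := by gcongr
  have hp5 : 3 * p ^ 4 ≤ p ^ 5 := by rw [pow_succ' p 4]; gcongr; omega
  have hp4 : 3 * p ^ 3 ≤ p ^ 4 := by rw [pow_succ' p 3]; gcongr; omega
  have hp3 : 1 < p ^ 3 := Nat.one_lt_pow three_ne_zero (by omega)
  ring_nf at hmono ⊢
  omega

end QuasiHermitian

theorem stmt15_general (p r : ℕ) (hp : p.Prime) (hp2 : 2 < p) (hr : 2 ≤ r)
    (F : Type) [Field F] [Fintype F] (hF : Fintype.card F = p ^ 4)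
    (V : Set (ProjPoint F (r + 1)))
    (hcard : (V.ncard : ℤ) * (((p ^ 2 : ℕ) : ℤ) ^ 2 - 1)
      = (((p ^ 2 : ℕ) : ℤ) ^ (r + 1) + (-1) ^ r) * (((p ^ 2 : ℕ) : ℤ) ^ r - (-1) ^ r))
    (hcode : charVec F p (r + 1) V ∈ hypCode F p (r + 1))
    (ℓ : Submodule F (Fin (r + 1) → F)) (hℓ : finrank F ℓ = 2)
    (hsec : p ^ 4 - p ^ 2 + 1 ≤ secant F (r + 1) V ℓ) :
    p ^ 4 - p + 1 ≤ secant F (r + 1) V ℓ := by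
  have : Fact p.Prime := ⟨hp⟩
  have : CharP F p := charP_of_card_eq_prime_pow hF
  have hV := natCast_eq_one_of_quasiHermitian_card (dvd_pow_self p two_ne_zero) (by omega) hcard
  have hsq : 9 ≤ p ^ 2 := Nat.pow_le_pow_left hp2 2
  have hpow : 9 * p ^ 2 ≤ p ^ 4 := by rw [show p ^ 4 = p ^ 2 * p ^ 2 by ring]; gcongr
  obtain ⟨v, hv, w, hw, hvw, rfl⟩ := exists_pair_of_one_lt_secant (V := V) hℓ (by omega)
  obtain ⟨u, hu, hsum⟩ := exists_sum_card_lineTrace_le hr (by rw [hF, ← pow_mul]) hcard hℓ v w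
  obtain ⟨τ, hτ⟩ := exists_secant_span_pair_add_mul_eq hcode hV hvw hw
  by_contra! hlt
  have hτ_le : τ ≤ p := Nat.le_of_mul_le_mul_left (by rw [← sq]; omega) hp.pos
  have hτ_ge : 1 < τ := Nat.lt_of_mul_lt_mul_left (a := p) (by omega)
  have hplane := two_mul_card_mul_succ_le_of_secant hcode hV hv hw hvw hu (ν := p) hτ
    (by rw [hF]; nlinarith [Nat.mul_le_mul_left p hτ_le]) (by nlinarith)
  rw [hF] at hplane
  have hbound := two_mul_pow_six_add_lt hp2 hτ_le
  omega

/-- in PG(r, p⁴) (so `q = p²`), a line with at least `p⁴ - p² + 1`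
points of `V` has at least `p⁴ - p + 1` points of `V`. -/
theorem stmt15 (p r : ℕ) (hp : p.Prime) (hp3 : 3 < p) (hr : 4 ≤ r)
    (F : Type) [Field F] [Fintype F] (hF : Fintype.card F = p ^ 4)
    (V : Set (ProjPoint F (r + 1))) (hV : IsQuasiHermitian F (p ^ 2) r V)
    (hcode : charVec F p (r + 1) V ∈ hypCode F p (r + 1))
    (ℓ : Submodule F (Fin (r + 1) → F)) (hℓ : finrank F ℓ = 2)
    (hsec : p ^ 4 - p ^ 2 + 1 ≤ secant F (r + 1) V ℓ) :
    p ^ 4 - p + 1 ≤ secant F (r + 1) V ℓ :=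
  stmt15_general p r hp (by omega) (by omega) F hF V hV.1 hcode ℓ hℓ hsec
end
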